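/- arXiv:1104.1231 — 5 statements merged into one kernel-verified Lean document; each statement's English description precedes it below -/
import Mathlib

section
/- Every finitely generated infinite group admits a transitive translation-like action by some free group, namely either by ℤ or by a finitely generated non-abelian free group. -/
open scoped Pointwise

/-- A right action of a group `H` on a type `X`. -/
structure RightAction (H X : Type*) [Group H] where
  act : X → H → X
  act_one : ∀ x, act x 1 = x
  act_mul : ∀ x h k, act (act x h) k = act x (h * k)

/-- A right action is translation-like w.r.t. a distance function `d` if it is free and
every element moves points a uniformly bounded distance. -/
def RightAction.IsTranslationLike {H X : Type*} [Group H]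
    (a : RightAction H X) (d : X → X → ℝ) : Prop :=
  (∀ (x : X) (h : H), a.act x h = x → h = 1) ∧
  (∀ h : H, ∃ C : ℝ, ∀ x : X, d x (a.act x h) ≤ C)

/-- A right action is transitive if any point can be moved to any other point. -/
def RightAction.IsTransitive {H X : Type*} [Group H] (a : RightAction H X) : Prop :=
  ∀ x y : X, ∃ h : H, a.act x h = y

/-- `S` is a finite generating set of the group `G`. -/
def IsFinGenSet {G : Type*} [Group G] (S : Set G) : Prop :=
  S.Finite ∧ Subgroup.closure S = ⊤

/-- The left-invariant word-length distance associated to a generating set `S`: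
`wordDist S g h` is the least `n` with `g⁻¹ * h ∈ (S ∪ S⁻¹) ^ n`. -/
noncomputable def wordDist {G : Type*} [Group G] (S : Set G) (g h : G) : ℕ :=
  sInf {n : ℕ | g⁻¹ * h ∈ (S ∪ S⁻¹) ^ n}

/-- The word metric as a real-valued distance function. -/
noncomputable def wordMetric {G : Type*} [Group G] (S : Set G) : G → G → ℝ :=
  fun g h => (wordDist S g h : ℝ)

namespace TL

/-- Transport of the regular right action along a bijection. -/
theorem action_of_equiv {G H : Type*} [Group G] [Group H] (X : Set H)
    (hX : Subgroup.closure X = ⊤) (e : H ≃ G)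
    (hd : ∀ x ∈ X, ∃ T : Set G, T.Finite ∧ ∀ w, (e w)⁻¹ * e (w * x) ∈ T) :
    ∃ a : RightAction H G, a.IsTransitive ∧
       ∀ S : Set G, IsFinGenSet S → a.IsTranslationLike (wordMetric S) := by
  have key : ∀ h : H, ∃ T : Set G, T.Finite ∧ ∀ w, (e w)⁻¹ * e (w * h) ∈ T := by
    intro h
    have hh : h ∈ Subgroup.closure X := by rw [hX]; trivial
    induction hh using Subgroup.closure_induction with
    | mem x hx => exact hd x hx
    | one => exact ⟨{1}, Set.finite_singleton _, by simp⟩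
    | mul x y _ _ hx hy =>
      obtain ⟨T, hT, h1⟩ := hx
      obtain ⟨U, hU, h2⟩ := hy
      refine ⟨T * U, hT.mul hU, fun w => ?_⟩
      refine Set.mem_mul.2 ⟨_, h1 w, _, h2 (w * x), ?_⟩
      simp [mul_assoc]
    | inv x _ hx =>
      obtain ⟨T, hT, h1⟩ := hx
      refine ⟨T⁻¹, hT.inv, fun w => ?_⟩
      have := h1 (w * x⁻¹)
      simpa using this
  refine ⟨⟨fun x h => e (e.symm x * h), by simp, by simp [mul_assoc]⟩, ?_, ?_⟩
  · intro x y
    exact ⟨(e.symm x)⁻¹ * e.symm y, by simp⟩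
  · intro S _
    refine ⟨?_, ?_⟩
    · intro x h hx
      have : e (e.symm x * h) = e (e.symm x) := by simpa using hx
      simpa using e.injective this
    · intro h
      obtain ⟨T, hT, h1⟩ := key h
      have hfin := (hT.image (fun g : G => ((sInf {n : ℕ | g ∈ (S ∪ S⁻¹) ^ n} : ℕ) : ℝ)))
      obtain ⟨C, hC⟩ := hfin.bddAbove
      refine ⟨C, fun x => hC ⟨x⁻¹ * e (e.symm x * h), ?_, rfl⟩⟩
      simpa using h1 (e.symm x)

/-- A finite symmetric generating set containing the identity. -/
structure Good {G : Type*} [Group G] (S : Set G) : Prop where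
  fin : S.Finite
  one : (1 : G) ∈ S
  inv : ∀ x ∈ S, x⁻¹ ∈ S
  gen : ∀ x : G, ∃ n : ℕ, x ∈ S ^ n

theorem exists_good (G : Type*) [Group G] [Group.FG G] : ∃ S : Set G, Good S := by
  obtain ⟨S, hS, hf⟩ := Group.fg_iff.1 (inferInstance : Group.FG G)
  refine ⟨S ∪ S⁻¹ ∪ {1}, (hf.union hf.inv).union (Set.finite_singleton _), by simp, ?_, ?_⟩
  · intro x hx
    simp only [Set.mem_union, Set.mem_inv, Set.mem_singleton_iff, inv_inv, inv_eq_one] at hx ⊢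
    tauto
  · intro x
    have hx : x ∈ Subgroup.closure S := by rw [hS]; trivial
    induction hx using Subgroup.closure_induction'' with
    | mem x hx => exact ⟨1, by simp [hx]⟩
    | inv_mem x hx => exact ⟨1, by simp [hx]⟩
    | one => exact ⟨0, by simp⟩
    | mul x y _ _ hx hy =>
      obtain ⟨n, hn⟩ := hx
      obtain ⟨m, hm⟩ := hy
      exact ⟨n + m, by rw [pow_add]; exact Set.mul_mem_mul hn hm⟩

section conn
variable {G : Type*} [Group G] {S : Set G}

theorem Good.symm (hS : Good S) {x y : G} (h : x⁻¹ * y ∈ S) : y⁻¹ * x ∈ S := by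
  simpa using hS.inv _ h

theorem Good.pow_mono (hS : Good S) {m n : ℕ} (h : m ≤ n) : S ^ m ⊆ S ^ n :=
  Set.pow_subset_pow_right hS.one h

theorem Good.pow_fin (hS : Good S) (n : ℕ) : (S ^ n).Finite := by
  induction n with
  | zero => simp
  | succ n ih => rw [pow_succ]; exact ih.mul hS.fin

theorem Good.pow_inv (hS : Good S) (n : ℕ) {x : G} (h : x ∈ S ^ n) : x⁻¹ ∈ S ^ n := by
  have hi : S⁻¹ = S := by
    ext x; exact ⟨fun h => by simpa using hS.inv _ h, fun h => hS.inv _ h⟩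
  have : (S ^ n)⁻¹ = S ^ n := by rw [← inv_pow, hi]
  rw [← this]; simpa using h

theorem Good.step3 (_hS : Good S) {x y z w : G} (h1 : x⁻¹ * y ∈ S) (h2 : y⁻¹ * z ∈ S)
    (h3 : z⁻¹ * w ∈ S) : x⁻¹ * w ∈ S ^ 3 := by
  have := Set.mul_mem_mul (Set.mul_mem_mul h1 h2) h3
  rw [show S ^ 3 = S * S * S by rw [pow_succ, pow_two]]
  simpa [mul_assoc] using this

/-- `Y` is closed under adjacency inside `A`. -/
def Clo (S Y A : Set G) : Prop := ∀ y ∈ Y, ∀ z ∈ A, y⁻¹ * z ∈ S → z ∈ Y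

/-- Connectedness of a set of vertices of the Cayley graph. -/
def Conn (S A : Set G) : Prop := ∀ Y ⊆ A, Y.Nonempty → Clo S Y A → Y = A

/-- Inner vertex boundary. -/
def bd (S A : Set G) : Set G := {y | y ∈ A ∧ ∃ z, z ∉ A ∧ y⁻¹ * z ∈ S}

theorem conn_univ (hS : Good S) : Conn S (Set.univ : Set G) := by
  intro Y _ ⟨y, hy⟩ hc
  have : ∀ n : ℕ, ∀ g ∈ S ^ n, y * g ∈ Y := by
    intro n
    induction n with
    | zero => simpa using hy
    | succ n ih =>
      intro g hg
      rw [pow_succ] at hg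
      obtain ⟨u, hu, s, hs, rfl⟩ := Set.mem_mul.1 hg
      exact hc _ (ih u hu) _ trivial (by simpa [mul_assoc] using hs)
  ext z
  obtain ⟨n, hn⟩ := hS.gen (y⁻¹ * z)
  simpa using this n _ hn

theorem clo_compl (hS : Good S) {Y A : Set G} (h : Clo S Y A) : Clo S (A \ Y) A := by
  intro y hy z hz hyz
  exact ⟨hz, fun hzY => hy.2 (h z hzY y hy.1 (hS.symm hyz))⟩

theorem comp_exists (hS : Good S) {A : Set G} {x : G} (hx : x ∈ A) :
    ∃ B ⊆ A, x ∈ B ∧ Conn S B ∧ Clo S B A := by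
  let B : Set G := {y | ∀ Y ⊆ A, x ∈ Y → Clo S Y A → y ∈ Y}
  have hBA : B ⊆ A := fun y hy => hy A subset_rfl hx (fun _ _ z hz _ => hz)
  have hxB : x ∈ B := fun Y _ h _ => h
  have hBc : Clo S B A := by
    intro y hy z hz hyz Y hY hxY hc
    exact hc y (hy Y hY hxY hc) z hz hyz
  refine ⟨B, hBA, hxB, ?_, hBc⟩
  intro Y hYB hne hc
  by_cases hxY : x ∈ Y
  · refine hYB.antisymm fun z hz => hz Y (hYB.trans hBA) hxY ?_
    intro y hy z hz hyz
    exact hc y hy z (hBc y (hYB hy) z hz hyz) hyz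
  · exfalso
    obtain ⟨y, hy⟩ := hne
    have := (hYB hy) (B \ Y) (Set.sdiff_subset.trans hBA) ⟨hxB, hxY⟩ (by
      intro u hu z hz huz
      exact clo_compl hS hc u hu z (hBc u hu.1 z hz huz) huz)
    exact this.2 hy

theorem nbr_fin (hS : Good S) {F : Set G} (hF : F.Finite) : {y : G | ∃ z ∈ F, y⁻¹ * z ∈ S}.Finite := by
  refine (hF.mul hS.fin).subset ?_
  rintro y ⟨z, hz, h⟩
  exact Set.mem_mul.2 ⟨z, hz, _, hS.symm h, by simp⟩

/-- Finite connected subsets join points of connected sets. -/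
theorem finite_conn (hS : Good S) {A : Set G} (hA : Conn S A) {a x : G} (ha : a ∈ A) (hx : x ∈ A) :
    ∃ W ⊆ A, W.Finite ∧ Conn S W ∧ a ∈ W ∧ x ∈ W := by
  let Y : Set G := {x | ∃ W ⊆ A, W.Finite ∧ Conn S W ∧ a ∈ W ∧ x ∈ W}
  have hY : Y = A := by
    apply hA
    · rintro x ⟨W, hW, -, -, -, h⟩; exact hW h
    · refine ⟨a, {a}, by simpa using ha, Set.finite_singleton _, ?_, rfl, rfl⟩
      intro Z hZ hne _
      exact (Set.Nonempty.subset_singleton_iff hne).1 hZ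
    · rintro y ⟨W, hW, hf, hc, haW, hyW⟩ z hz hyz
      refine ⟨insert z W, Set.insert_subset hz hW, hf.insert _, ?_, Or.inr haW, Or.inl rfl⟩
      have claim : ∀ Z ⊆ insert z W, Clo S Z (insert z W) → (Z ∩ W).Nonempty → Z = insert z W := by
        intro Z hZ hcl hne
        have h1 : Z ∩ W = W := hc _ Set.inter_subset_right hne
          (fun u hu v hv huv => ⟨hcl u hu.1 v (Or.inr hv) huv, hv⟩)
        have h2 : W ⊆ Z := fun u hu => (h1.symm ▸ hu : u ∈ Z ∩ W).1
        exact hZ.antisymm (Set.insert_subset (hcl y (h2 hyW) z (Or.inl rfl) hyz) h2)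
      intro Z hZ hne hcl
      apply claim Z hZ hcl
      obtain ⟨u, hu⟩ := hne
      rcases hZ hu with rfl | h
      · exact ⟨y, hcl u hu y (Or.inr hyW) (hS.symm hyz), hyW⟩
      · exact ⟨u, hu, h⟩
  exact (hY.symm ▸ hx : x ∈ Y)

theorem bd_sub_fin (hS : Good S) {C B F : Set G} (hF : F.Finite) (hC : (bd S C).Finite)
    (hBC : B ⊆ C \ F) (hB : Clo S B (C \ F)) : (bd S B).Finite := by
  refine (hC.union (nbr_fin hS hF)).subset ?_
  rintro y ⟨hy, z, hz, hyz⟩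
  by_cases hzC : z ∈ C
  · right
    refine ⟨z, ?_, hyz⟩
    by_contra hzF
    exact hz (hB y hy z ⟨hzC, hzF⟩ hyz)
  · exact Or.inl ⟨(hBC hy).1, z, hzC, hyz⟩

theorem bd_diff_fin (hS : Good S) {C B : Set G} (hC : (bd S C).Finite) (hB : (bd S B).Finite) :
    (bd S (C \ B)).Finite := by
  refine (hC.union (nbr_fin hS hB)).subset ?_
  rintro y ⟨hy, z, hz, hyz⟩
  by_cases hzC : z ∈ C
  · right
    have hzB : z ∈ B := by by_contra h; exact hz ⟨hzC, h⟩
    exact ⟨z, ⟨hzB, y, hy.2, hS.symm hyz⟩, hyz⟩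
  · exact Or.inl ⟨hy.1, z, hzC, hyz⟩

/-- Indecomposable sets are connected at infinity. -/
theorem cofin_comp [Infinite G] (hS : Good S) {C : Set G} (hCi : C.Infinite) (hCb : (bd S C).Finite)
    (hind : ∀ B ⊆ C, (bd S B).Finite → (bd S (C \ B)).Finite → B.Finite ∨ (C \ B).Finite)
    {F : Set G} (hF : F.Finite) :
    ∃ D ⊆ C \ F, Conn S D ∧ Clo S D (C \ F) ∧ (C \ D).Finite := by
  have h1 : ∃ D ⊆ C \ F, Conn S D ∧ Clo S D (C \ F) ∧ D.Infinite := by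
    by_contra hno
    push Not at hno
    choose! comp hc1 hc2 hc3 hc4 using fun x (hx : x ∈ C \ F) => comp_exists hS hx
    have hfin : ∀ x ∈ C \ F, (comp x).Finite := fun x hx => by
      simpa using hno _ (hc1 x hx) (hc3 x hx) (hc4 x hx)
    have hE := hCb.union (nbr_fin hS hF)
    refine (hCi.sdiff hF) (((hE.inter_of_left (C \ F)).biUnion (t := comp) (fun x hx => hfin x hx.2)).subset ?_)
    intro x hx
    have hbn : (bd S (comp x)).Nonempty := by
      by_contra hb
      have : comp x = Set.univ := conn_univ hS _ (Set.subset_univ _) ⟨x, hc2 x hx⟩ (by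
        intro y hy z _ hyz
        by_contra hz
        exact hb ⟨y, hy, z, hz, hyz⟩)
      exact Set.infinite_univ (this ▸ hfin x hx)
    obtain ⟨y, hy, z, hz, hyz⟩ := hbn
    have hyC := hc1 x hx hy
    have hyE : y ∈ bd S C ∪ {y : G | ∃ z ∈ F, y⁻¹ * z ∈ S} := by
      by_cases hzC : z ∈ C
      · right
        refine ⟨z, ?_, hyz⟩
        by_contra hzF
        exact hz (hc4 x hx y hy z ⟨hzC, hzF⟩ hyz)
      · exact Or.inl ⟨hyC.1, z, hzC, hyz⟩
    refine Set.mem_biUnion (x := y) ⟨hyE, hyC⟩ ?_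
    -- x and y have the same component
    have h3 : comp x ∩ comp y = comp x := hc3 x hx _ Set.inter_subset_left ⟨y, hy, hc2 y hyC⟩ (by
      intro u hu v hv huv
      exact ⟨hv, hc4 y hyC u hu.2 v (hc1 x hx hv) huv⟩)
    exact (h3.symm ▸ hc2 x hx : x ∈ comp x ∩ comp y).2
  obtain ⟨D, hD, hcon, hclo, hinf⟩ := h1
  have hb := bd_sub_fin hS hF hCb hD hclo
  refine ⟨D, hD, hcon, hclo, ?_⟩
  rcases hind D (fun x hx => (hD hx).1) hb (bd_diff_fin hS hCb hb) with h | h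
  · exact absurd h hinf
  · exact h

end conn
section ham
variable {G : Type*} [Group G] {S : Set G}

theorem split_conn (hS : Good S) {N : Set G} (hN : Conn S N) {a t : G} (ha : a ∈ N) (ht : t ∈ N)
    (hta : t ≠ a) : ∃ B ⊆ N, t ∈ B ∧ a ∉ B ∧ Conn S B ∧ Conn S (N \ B) ∧ ∃ m ∈ B, a⁻¹ * m ∈ S := by
  obtain ⟨B, hB, htB, hBc, hBcl⟩ := comp_exists hS (A := N \ {a}) (x := t) ⟨ht, hta⟩
  have haB : a ∉ B := fun h => (hB h).2 rfl
  have hBN : B ⊆ N := fun x hx => (hB hx).1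
  refine ⟨B, hBN, htB, haB, hBc, ?_, ?_⟩
  · have claim : ∀ Y ⊆ N \ B, Clo S Y (N \ B) → a ∉ Y → Y = ∅ := by
      intro Y hY hc haY
      by_contra hne
      have hcl : Clo S Y N := by
        intro y hy z hz hyz
        by_cases hzB : z ∈ B
        · exact absurd (hBcl z hzB y ⟨(hY hy).1, fun h => haY (h ▸ hy)⟩ (hS.symm hyz)) (hY hy).2
        · exact hc y hy z ⟨hz, hzB⟩ hyz
      have := hN Y (fun y hy => (hY hy).1) (Set.nonempty_iff_ne_empty.2 hne) hcl
      exact haY (this ▸ ha)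
    intro Y hY hne hc
    by_cases haY : a ∈ Y
    · have := claim ((N \ B) \ Y) Set.sdiff_subset (clo_compl hS hc) (fun h => h.2 haY)
      exact hY.antisymm (Set.sdiff_eq_empty.1 this)
    · exact absurd (claim Y hY hc haY) hne.ne_empty
  · by_contra hno
    push Not at hno
    have : B = N := hN B hBN ⟨t, htB⟩ (by
      intro y hy z hz hyz
      by_cases hza : z = a
      · subst hza
        exact absurd (hS.symm hyz) (hno y hy)
      · exact hBcl y hy z ⟨hz, hza⟩ hyz)
    exact haB (this ▸ ha)

theorem ham (hS : Good S) : ∀ (n : ℕ) (N : Set G), N.Finite → N.ncard ≤ n → Conn S N →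
    ∀ a ∈ N, ∀ b ∈ N, ∃ L : List G, L.Nodup ∧ (∀ x, x ∈ L ↔ x ∈ N) ∧
      L.IsChain (fun x y => x⁻¹ * y ∈ S ^ 3) ∧ L.head? = some a ∧
      ∃ c, L.getLast? = some c ∧ c⁻¹ * b ∈ S := by
  intro n
  induction n with
  | zero =>
    intro N hf hn _ a ha
    have : N = ∅ := (Set.ncard_eq_zero hf).1 (by omega)
    simp [this] at ha
  | succ n ih =>
    intro N hf hn hN a ha b hb
    by_cases htr : ∃ t ∈ N, t ≠ a
    · have : ∃ t ∈ N, t ≠ a ∧ (b ≠ a → t = b) := by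
        by_cases hba : b = a
        · obtain ⟨t, h1, h2⟩ := htr
          exact ⟨t, h1, h2, fun h => absurd hba h⟩
        · exact ⟨b, hb, hba, fun _ => rfl⟩
      obtain ⟨t, htN, hta, htb⟩ := this
      obtain ⟨B, hB, htB, haB, hBc, hAc, m, hmB, ham⟩ := split_conn hS hN ha htN hta
      have hfB := hf.subset hB
      have hfA := hf.subset (Set.sdiff_subset (s := N) (t := B))
      have hBn : B.ncard ≤ n := by
        have := Set.ncard_lt_ncard (Set.ssubset_iff_subset_ne.2 ⟨hB, fun h => haB (h ▸ ha)⟩) hf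
        omega
      have hAn : (N \ B).ncard ≤ n := by
        have := Set.ncard_lt_ncard (Set.ssubset_iff_subset_ne.2
          ⟨Set.sdiff_subset (s := N) (t := B), fun h => ((h.symm ▸ htN : t ∈ N \ B)).2 htB⟩) hf
        omega
      obtain ⟨LA, a1, a2, a3, a4, c, a5, a6⟩ := ih (N \ B) hfA hAn hAc a ⟨ha, haB⟩ a ⟨ha, haB⟩
      have hmem : ∀ x, (x ∈ N \ B ∨ x ∈ B) ↔ x ∈ N := by
        intro x
        constructor
        · rintro (h | h)
          · exact h.1
          · exact hB h
        · intro h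
          by_cases hx : x ∈ B
          · exact Or.inr hx
          · exact Or.inl ⟨h, hx⟩
      by_cases hba : b = a
      · subst hba
        obtain ⟨LB, b1, b2, b3, b4, c', b5, b6⟩ := ih B hfB hBn hBc m hmB m hmB
        refine ⟨LA ++ LB.reverse, ?_, ?_, ?_, ?_, m, ?_, hS.symm ham⟩
        · refine List.nodup_append.2 ⟨a1, by simpa using b1, ?_⟩
          intro x hx y hy hxy
          subst hxy
          exact ((a2 x).1 hx).2 ((b2 x).1 (by simpa using hy))
        · intro x
          rw [← hmem x, List.mem_append, List.mem_reverse, a2, b2]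
        · refine List.isChain_append.2 ⟨a3, List.isChain_reverse.2 ?_, ?_⟩
          · refine b3.imp fun x y h => ?_
            simpa using hS.pow_inv 3 h
          · intro x hx y hy
            rw [a5] at hx
            rw [List.head?_reverse, b5] at hy
            simp only [Option.mem_def, Option.some.injEq] at hx hy
            subst hx hy
            exact hS.step3 a6 ham (hS.symm b6)
        · simp [a4]
        · simp [b4]
      · obtain ⟨LB, b1, b2, b3, b4, c', b5, b6⟩ := ih B hfB hBn hBc m hmB b (htb hba ▸ htB)
        refine ⟨LA ++ LB, ?_, ?_, ?_, ?_, c', ?_, b6⟩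
        · refine List.nodup_append.2 ⟨a1, b1, ?_⟩
          intro x hx y hy hxy
          subst hxy
          exact ((a2 x).1 hx).2 ((b2 x).1 hy)
        · intro x
          rw [← hmem x, List.mem_append, a2, b2]
        · refine List.isChain_append.2 ⟨a3, b3, ?_⟩
          intro x hx y hy
          rw [a5] at hx
          rw [b4] at hy
          simp only [Option.mem_def, Option.some.injEq] at hx hy
          subst hx hy
          exact hS.step3 a6 ham (by simpa using hS.one)
        · simp [a4]
        · simp [b5]
    · push Not at htr
      refine ⟨[a], by simp, ?_, by simp, by simp, a, by simp, ?_⟩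
      · intro x
        simp only [List.mem_singleton]
        exact ⟨fun h => h ▸ ha, htr x⟩
      · rw [htr b hb]; simpa using hS.one

end ham

theorem seq_of_lists {α : Type*} {C : Set α} (hcount : C.Countable) (hne : C.Nonempty)
    (R : α → α → Prop) (Inv : List α → Prop) (h0 : Inv [])
    (hext : ∀ P, Inv P → ∀ x ∈ C, ∃ L, L ≠ [] ∧ Inv (P ++ L) ∧ x ∈ P ++ L)
    (hnodup : ∀ P, Inv P → P.Nodup) (hsub : ∀ P, Inv P → ∀ x ∈ P, x ∈ C)
    (hchain : ∀ P, Inv P → P.IsChain R) :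
    ∃ f : ℕ → α, Function.Injective f ∧ Set.range f = C ∧ ∀ n, R (f n) (f (n + 1)) := by
  obtain ⟨u, hu⟩ := hcount.exists_eq_range hne
  have huC : ∀ n, u n ∈ C := fun n => hu ▸ Set.mem_range_self n
  choose! ext e1 e2 e3 using hext
  let P : ℕ → List α := fun n => Nat.rec [] (fun n P => P ++ ext P (u n)) n
  have hPs : ∀ n, P (n + 1) = P n ++ ext (P n) (u n) := fun n => rfl
  have hInv : ∀ n, Inv (P n) := by
    intro n
    induction n with
    | zero => exact h0
    | succ n ih => rw [hPs]; exact e2 _ ih _ (huC n)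
  have hlen : ∀ n, n ≤ (P n).length := by
    intro n
    induction n with
    | zero => simp
    | succ n ih =>
      rw [hPs, List.length_append]
      have := List.length_pos_iff.2 (e1 _ (hInv n) _ (huC n))
      omega
  have hpre : ∀ n k, P n <+: P (n + k) := by
    intro n k
    induction k with
    | zero => simp
    | succ k ih =>
      exact ih.trans (by rw [← add_assoc, hPs]; exact ⟨_, rfl⟩)
  let f : ℕ → α := fun n => ((P (n + 1))[n]?).getD (u 0)
  have hf : ∀ n N, n < N → (P N)[n]? = some (f n) := by
    intro n N hn
    obtain ⟨k, rfl⟩ : ∃ k, N = n + 1 + k := ⟨N - (n + 1), by omega⟩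
    obtain ⟨L, hL⟩ := hpre (n + 1) k
    have hl := hlen (n + 1)
    rw [← hL, List.getElem?_append_left (by omega)]
    simp only [f]
    rw [List.getElem?_eq_getElem (by omega)]
    rfl
  refine ⟨f, ?_, ?_, ?_⟩
  · intro n m hnm
    have h1 := hf n (n + m + 1) (by omega)
    have h2 := hf m (n + m + 1) (by omega)
    rw [hnm, ← h2] at h1
    have hl := hlen (n + m + 1)
    exact (List.getElem?_inj (l := P (n + m + 1)) (i := n) (by omega) (hnodup _ (hInv (n + m + 1)))).1 h1
  · apply Set.Subset.antisymm
    · rintro _ ⟨n, rfl⟩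
      exact hsub _ (hInv (n + 1)) _ (List.mem_of_getElem? (hf n (n + 1) (by omega)))
    · intro x hx
      rw [hu] at hx
      obtain ⟨n, rfl⟩ := hx
      have hm : u n ∈ P (n + 1) := by rw [hPs]; exact e3 _ (hInv n) _ (huC n)
      obtain ⟨i, hi⟩ := List.mem_iff_getElem?.1 hm
      refine ⟨i, ?_⟩
      have h1 := hf i (i + n + 1) (by omega)
      obtain ⟨L, hL⟩ := hpre (n + 1) i
      have hi' : i < (P (n + 1)).length := by
        by_contra h
        rw [List.getElem?_eq_none (by omega)] at hi
        cases hi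
      rw [show i + n + 1 = n + 1 + i by omega, ← hL, List.getElem?_append_left hi', hi] at h1
      simpa using h1.symm
  · intro n
    have hc := hchain _ (hInv (n + 2))
    have hl := hlen (n + 2)
    have h1 := hf n (n + 2) (by omega)
    have h2 := hf (n + 1) (n + 2) (by omega)
    rw [List.getElem?_eq_getElem (by omega)] at h1 h2
    have := List.isChain_iff_getElem.1 hc n (by omega)
    simp only [Option.some.injEq] at h1 h2
    rwa [h1, h2] at this

section nice
variable {G : Type*} [Group G] {S : Set G}

/-- A set that can be enumerated injectively by a sequence with bounded jumps. -/
def Nice (C : Set G) : Prop :=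
  ∃ f : ℕ → G, Function.Injective f ∧ Set.range f = C ∧
    ∃ T : Set G, T.Finite ∧ ∀ n, (f n)⁻¹ * f (n + 1) ∈ T

theorem Nice.insert {C : Set G} (h : Nice C) {x : G} (hx : x ∉ C) : Nice (insert x C) := by
  obtain ⟨f, hf, hr, T, hT, hfT⟩ := h
  refine ⟨fun n => Nat.casesOn n x f, ?_, ?_, Insert.insert (x⁻¹ * f 0) T, hT.insert _, ?_⟩
  · rintro (_ | n) (_ | m) h
    · rfl
    · exact absurd (hr ▸ ⟨m, h.symm⟩) hx
    · exact absurd (hr ▸ ⟨n, h⟩) hx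
    · simpa using hf h
  · ext y
    rw [← hr]
    constructor
    · rintro ⟨_ | n, rfl⟩
      · exact Or.inl rfl
      · exact Or.inr ⟨n, rfl⟩
    · rintro (rfl | ⟨n, rfl⟩)
      · exact ⟨0, rfl⟩
      · exact ⟨n + 1, rfl⟩
  · rintro (_ | n)
    · exact Or.inl rfl
    · exact Or.inr (hfT n)

theorem Nice.union {C : Set G} (h : Nice C) {F : Set G} (hF : F.Finite) : Nice (C ∪ F) := by
  induction F, hF using Set.Finite.induction_on with
  | empty => simpa using h
  | @insert a s _ _ ih =>
    rw [Set.union_insert]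
    by_cases ha : a ∈ C ∪ s
    · rwa [Set.insert_eq_of_mem ha]
    · exact ih.insert ha

theorem nice_conn (hS : Good S) {C : Set G} (hCi : C.Infinite) (hcount : C.Countable)
    (hC : Conn S C)
    (hcof : ∀ F : Set G, F.Finite → ∃ D ⊆ C \ F, Conn S D ∧ Clo S D (C \ F) ∧ (C \ D).Finite) :
    Nice C := by
  let Inv : List G → Prop := fun P => P.Nodup ∧ (∀ x ∈ P, x ∈ C) ∧
    P.IsChain (fun x y => x⁻¹ * y ∈ S ^ 3) ∧ Conn S (C \ {x | x ∈ P}) ∧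
    ∃ a ∈ C \ {x | x ∈ P}, ∀ c ∈ P.getLast?, c⁻¹ * a ∈ S ^ 3
  have h0 : Inv [] := by
    obtain ⟨a, ha⟩ := hCi.nonempty
    exact ⟨by simp, by simp, by simp, by simpa using hC, a, by simpa using ha, by simp⟩
  have hext : ∀ P, Inv P → ∀ x ∈ C, ∃ L, L ≠ [] ∧ Inv (P ++ L) ∧ x ∈ P ++ L := by
    rintro P ⟨i1, i2, i3, i4, a, ha, i5⟩ x hx
    have hPf : {x | x ∈ P}.Finite := P.finite_toSet
    have : ∃ x' ∈ C \ {x | x ∈ P}, x ∈ P ∨ x' = x := by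
      by_cases hxP : x ∈ P
      · exact ⟨a, ha, Or.inl hxP⟩
      · exact ⟨x, ⟨hx, hxP⟩, Or.inr rfl⟩
    obtain ⟨x', hx', hxx⟩ := this
    obtain ⟨W, hW, hWf, hWc, haW, hxW⟩ := finite_conn hS i4 ha hx'
    obtain ⟨D, hD, hDc, hDcl, hDf⟩ := hcof ({x | x ∈ P} ∪ W) (hPf.union hWf)
    have hDi : D.Infinite := by
      intro h
      exact hCi ((h.union hDf).subset (fun y hy => by
        by_cases hyD : y ∈ D
        · exact Or.inl hyD
        · exact Or.inr ⟨hy, hyD⟩))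
    set E := C \ {x | x ∈ P} with hE
    have hDE : D ⊆ E := fun y hy => ⟨(hD hy).1, fun h => (hD hy).2 (Or.inl h)⟩
    have hDW : ∀ y ∈ D, y ∉ W := fun y hy h => (hD hy).2 (Or.inr h)
    let N := E \ D
    have hNf : N.Finite := hDf.subset (fun y hy => ⟨hy.1.1, hy.2⟩)
    have hWN : W ⊆ N := fun y hy => ⟨hW hy, fun h => hDW y h hy⟩
    have hNc : Conn S N := by
      have claim : ∀ Y ⊆ N, Clo S Y N → (∀ y ∈ Y, y ∉ W) → Y = ∅ := by
        intro Y hY hc hYW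
        by_contra hne
        have := i4 Y (fun y hy => (hY hy).1) (Set.nonempty_iff_ne_empty.2 hne) (by
          intro y hy z hz hyz
          by_cases hzD : z ∈ D
          · have := hDcl z hzD y ⟨(hY hy).1.1, fun h => h.elim (hY hy).1.2 (hYW y hy)⟩ (hS.symm hyz)
            exact absurd this (hY hy).2
          · exact hc y hy z ⟨hz, hzD⟩ hyz)
        exact hYW a (this.symm ▸ ha) haW
      intro Y hY hne hc
      by_cases hYW : (Y ∩ W).Nonempty
      · have h1 : Y ∩ W = W := hWc _ Set.inter_subset_right hYW
          (fun u hu v hv huv => ⟨hc u hu.1 v (hWN hv) huv, hv⟩)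
        have := claim (N \ Y) Set.sdiff_subset (clo_compl hS hc)
          (fun y hy hyW => hy.2 (h1.symm ▸ hyW : y ∈ Y ∩ W).1)
        exact hY.antisymm (Set.sdiff_eq_empty.1 this)
      · exact absurd (claim Y hY hc (fun y hy h => hYW ⟨y, hy, h⟩)) hne.ne_empty
    have : ∃ b ∈ N, ∃ a' ∈ D, b⁻¹ * a' ∈ S := by
      by_contra hno
      push Not at hno
      have := i4 N Set.sdiff_subset ⟨a, hWN haW⟩ (by
        intro y hy z hz hyz
        exact ⟨hz, fun hzD => hno y hy z hzD hyz⟩)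
      obtain ⟨d, hd⟩ := hDi.nonempty
      exact (this.symm ▸ hDE hd : d ∈ N).2 hd
    obtain ⟨b, hb, a', ha', hba⟩ := this
    obtain ⟨L, l1, l2, l3, l4, c, l5, l6⟩ := ham hS _ N hNf le_rfl hNc a (hWN haW) b hb
    have hrem : C \ {x | x ∈ P ++ L} = D := by
      ext y
      simp only [List.mem_append, l2]
      constructor
      · rintro ⟨h1, h2⟩
        by_contra hyD
        exact h2 (Or.inr ⟨⟨h1, fun h => h2 (Or.inl h)⟩, hyD⟩)
      · intro hy
        exact ⟨(hDE hy).1, fun h => h.elim (hDE hy).2 (fun h => h.2 hy)⟩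
    refine ⟨L, ?_, ⟨?_, ?_, ?_, ?_, ?_⟩, ?_⟩
    · rintro rfl
      simp at l4
    · refine List.nodup_append.2 ⟨i1, l1, ?_⟩
      intro u hu v hv huv
      subst huv
      exact ((l2 u).1 hv).1.2 hu
    · intro y hy
      rcases List.mem_append.1 hy with h | h
      · exact i2 y h
      · exact ((l2 y).1 h).1.1
    · refine List.isChain_append.2 ⟨i3, l3, ?_⟩
      intro u hu v hv
      rw [l4] at hv
      simp only [Option.mem_def, Option.some.injEq] at hv
      subst hv
      exact i5 u hu
    · rw [hrem]; exact hDc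
    · rw [hrem]
      refine ⟨a', ha', ?_⟩
      intro u hu
      have : (P ++ L).getLast? = some c := by simp [l5]
      rw [this] at hu
      simp only [Option.mem_def, Option.some.injEq] at hu
      subst hu
      exact hS.step3 l6 hba (by simpa using hS.one)
    · rcases hxx with h | h
      · exact List.mem_append_left _ h
      · exact List.mem_append_right _ ((l2 x).2 (h ▸ hWN hxW))
  obtain ⟨f, f1, f2, f3⟩ := seq_of_lists hcount hCi.nonempty (fun x y => x⁻¹ * y ∈ S ^ 3) Inv h0 hext
    (fun P h => h.1) (fun P h => h.2.1) (fun P h => h.2.2.1)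
  exact ⟨f, f1, f2, S ^ 3, hS.pow_fin 3, f3⟩

theorem Good.countable (hS : Good S) : Countable G := by
  have : (Set.univ : Set G) = ⋃ n : ℕ, S ^ n := by
    ext x; simpa using hS.gen x
  rw [← Set.countable_univ_iff, this]
  exact Set.countable_iUnion fun n => (hS.pow_fin n).countable

theorem nice_of_indec [Infinite G] (hS : Good S) {C : Set G} (hCi : C.Infinite) (hCb : (bd S C).Finite)
    (hind : ∀ B ⊆ C, (bd S B).Finite → (bd S (C \ B)).Finite → B.Finite ∨ (C \ B).Finite) :
    Nice C := by
  have := hS.countable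
  obtain ⟨D, hD, hDc, hDcl, hDf⟩ := cofin_comp hS hCi hCb hind Set.finite_empty
  rw [Set.sdiff_empty] at hD
  have hDi : D.Infinite := by
    intro h
    exact hCi ((h.union hDf).subset (fun y hy => by
      by_cases hyD : y ∈ D
      · exact Or.inl hyD
      · exact Or.inr ⟨hy, hyD⟩))
  have hn : Nice D := by
    refine nice_conn hS hDi (Set.to_countable _) hDc fun F hF => ?_
    obtain ⟨D', h1, h2, h3, h4⟩ := cofin_comp hS hCi hCb hind (hF.union hDf)
    have he : C \ (F ∪ C \ D) = D \ F := by
      ext y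
      have := @hD y
      simp only [Set.mem_sdiff, Set.mem_union]
      tauto
    rw [he] at h1 h3
    exact ⟨D', h1, h2, h3, h4.subset (fun y hy => ⟨hD hy.1, hy.2⟩)⟩
  have := hn.union hDf
  rwa [Set.union_sdiff_cancel hD] at this

theorem Nice.split {C : Set G} (h : Nice C) : ∃ A B : Set G, Nice A ∧ Nice B ∧ Disjoint A B ∧ A ∪ B = C := by
  obtain ⟨f, hf, hr, T, hT, hfT⟩ := h
  have h2 : ∀ n, (f n)⁻¹ * f (n + 2) ∈ T * T := fun n =>
    Set.mem_mul.2 ⟨_, hfT n, _, hfT (n + 1), by simp [mul_assoc]⟩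
  refine ⟨Set.range fun n => f (2 * n), Set.range fun n => f (2 * n + 1),
    ⟨_, ?_, rfl, T * T, hT.mul hT, fun n => h2 _⟩, ⟨_, ?_, rfl, T * T, hT.mul hT, fun n => h2 _⟩, ?_, ?_⟩
  · intro a b h
    have := hf h
    omega
  · intro a b h
    have := hf h
    omega
  · rw [Set.disjoint_left]
    rintro _ ⟨n, rfl⟩ ⟨m, h⟩
    have := hf h
    omega
  · rw [← hr]
    ext y
    constructor
    · rintro (⟨n, rfl⟩ | ⟨n, rfl⟩) <;> exact ⟨_, rfl⟩
    · rintro ⟨n, rfl⟩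
      rcases Nat.even_or_odd' n with ⟨k, rfl | rfl⟩
      · exact Or.inl ⟨k, rfl⟩
      · exact Or.inr ⟨k, rfl⟩

theorem int_action {A B : Set G} (hA : Nice A) (hB : Nice B) (hd : Disjoint A B)
    (hu : A ∪ B = Set.univ) :
    ∃ a : RightAction (Multiplicative ℤ) G, a.IsTransitive ∧
       ∀ S : Set G, IsFinGenSet S → a.IsTranslationLike (wordMetric S) := by
  obtain ⟨f, hf, rfl, T, hT, hfT⟩ := hA
  obtain ⟨g, hg, rfl, U, hU, hgU⟩ := hB
  rw [Set.disjoint_left] at hd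
  let e : Multiplicative ℤ → G := fun z => match z.toAdd with
    | Int.ofNat n => f n
    | Int.negSucc n => g n
  have he : Function.Bijective e := by
    constructor
    · intro a b hab
      apply Multiplicative.toAdd.injective
      simp only [e] at hab
      rcases ha : a.toAdd with n | n <;> rcases hb : b.toAdd with m | m <;>
        simp only [ha, hb] at hab
      · rw [hf hab]
      · exact absurd ⟨m, hab.symm⟩ (hd ⟨n, rfl⟩)
      · exact absurd ⟨n, hab⟩ (hd ⟨m, rfl⟩)
      · rw [hg hab]
    · intro y
      have : y ∈ Set.range f ∪ Set.range g := hu ▸ trivial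
      rcases this with ⟨n, rfl⟩ | ⟨n, rfl⟩
      · exact ⟨Multiplicative.ofAdd (Int.ofNat n), rfl⟩
      · exact ⟨Multiplicative.ofAdd (Int.negSucc n), rfl⟩
  refine action_of_equiv {Multiplicative.ofAdd (1 : ℤ)} ?_ (Equiv.ofBijective e he) ?_
  · rw [eq_top_iff]
    intro x _
    rw [Subgroup.mem_closure_singleton]
    exact ⟨x.toAdd, by rw [← ofAdd_zsmul]; simp⟩
  · rintro _ rfl
    refine ⟨T ∪ U⁻¹ ∪ {(g 0)⁻¹ * f 0}, (hT.union hU.inv).union (Set.finite_singleton _), fun w => ?_⟩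
    simp only [Equiv.ofBijective_apply]
    rcases hw : w.toAdd with n | n
    · have h1 : e w = f n := by simp only [e, hw]
      have h2 : e (w * Multiplicative.ofAdd 1) = f (n + 1) := by
        have : (w * Multiplicative.ofAdd (1 : ℤ)).toAdd = Int.ofNat (n + 1) := by
          rw [toAdd_mul, hw]; rfl
        simp only [e, this]
      rw [h1, h2]
      exact Or.inl (Or.inl (hfT n))
    · have h1 : e w = g n := by simp only [e, hw]
      rcases n with _ | n
      · have h2 : e (w * Multiplicative.ofAdd 1) = f 0 := by
          have : (w * Multiplicative.ofAdd (1 : ℤ)).toAdd = Int.ofNat 0 := by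
            rw [toAdd_mul, hw]; rfl
          simp only [e, this]
        rw [h1, h2]
        exact Or.inr rfl
      · have h2 : e (w * Multiplicative.ofAdd 1) = g n := by
          have : (w * Multiplicative.ofAdd (1 : ℤ)).toAdd = Int.negSucc n := by
            rw [toAdd_mul, hw]
            simp only [toAdd_ofAdd, Int.negSucc_eq]
            push_cast
            ring
          simp only [e, this]
        rw [h1, h2]
        refine Or.inl (Or.inr ?_)
        simpa using hgU n

/-- At most two ends gives an action of the integers; otherwise there are three ends. -/
theorem dichotomy [Infinite G] (hS : Good S) :
    (∃ a : RightAction (Multiplicative ℤ) G, a.IsTransitive ∧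
       ∀ S : Set G, IsFinGenSet S → a.IsTranslationLike (wordMetric S)) ∨
    ∃ A : Fin 3 → Set G, (∀ i, (A i).Infinite) ∧ (∀ i, (bd S (A i)).Finite) ∧
      Pairwise fun i j => Disjoint (A i) (A j) := by
  by_cases h3 : ∃ A : Fin 3 → Set G, (∀ i, (A i).Infinite) ∧ (∀ i, (bd S (A i)).Finite) ∧
      Pairwise fun i j => Disjoint (A i) (A j)
  · exact Or.inr h3
  left
  have three : ∀ X Y Z : Set G, X.Infinite → Y.Infinite → Z.Infinite → (bd S X).Finite →
      (bd S Y).Finite → (bd S Z).Finite → Disjoint X Y → Disjoint X Z → Disjoint Y Z → False := by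
    intro X Y Z hX hY hZ bX bY bZ hXY hXZ hYZ
    refine h3 ⟨![X, Y, Z], ?_, ?_, ?_⟩
    · intro i; fin_cases i <;> assumption
    · intro i; fin_cases i <;> assumption
    · intro i j hij
      fin_cases i <;> fin_cases j <;> first | exact absurd rfl hij | assumption | (apply Disjoint.symm; assumption)
  have hub : (bd S (Set.univ : Set G)).Finite := by
    have : bd S (Set.univ : Set G) = ∅ := by
      ext y; simp [bd]
    rw [this]; exact Set.finite_empty
  by_cases hind : ∀ B ⊆ (Set.univ : Set G), (bd S B).Finite → (bd S (Set.univ \ B)).Finite →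
      B.Finite ∨ (Set.univ \ B).Finite
  · obtain ⟨A, B, hA, hB, hd, hu⟩ := (nice_of_indec hS Set.infinite_univ hub hind).split
    exact int_action hA hB hd hu
  · push Not at hind
    obtain ⟨C, -, bC, bC', iC, iC'⟩ := hind
    have hdis : Disjoint C (Set.univ \ C) := Set.disjoint_sdiff_right
    refine int_action (A := C) (B := Set.univ \ C) ?_ ?_ hdis (by simp)
    · refine nice_of_indec hS iC bC fun B hB b1 b2 => ?_
      by_contra hno
      push Not at hno
      exact three B (C \ B) (Set.univ \ C) hno.1 hno.2 iC' b1 b2 bC' Set.disjoint_sdiff_right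
        (hdis.mono_left hB) (hdis.mono_left Set.sdiff_subset)
    · refine nice_of_indec hS iC' bC' fun B hB b1 b2 => ?_
      by_contra hno
      push Not at hno
      exact three B ((Set.univ \ C) \ B) C hno.1 hno.2 iC b1 b2 bC Set.disjoint_sdiff_right
        (hdis.symm.mono_left hB) (hdis.symm.mono_left Set.sdiff_subset)

end nice
section tree
variable {G : Type*} [Group G] {S : Set G}

/-- Word length. -/
noncomputable def len (S : Set G) (g : G) : ℕ := sInf {n | g ∈ S ^ n}

theorem len_mem (hS : Good S) (g : G) : g ∈ S ^ len S g := Nat.sInf_mem (s := {n | g ∈ S ^ n}) (hS.gen g)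

theorem len_le {n : ℕ} {g : G} (h : g ∈ S ^ n) : len S g ≤ n := Nat.sInf_le h

theorem mem_of_len (hS : Good S) {n : ℕ} {g : G} (h : len S g ≤ n) : g ∈ S ^ n :=
  hS.pow_mono h (len_mem hS g)

theorem len_mul (hS : Good S) (g h : G) : len S (g * h) ≤ len S g + len S h :=
  len_le (by rw [pow_add]; exact Set.mul_mem_mul (len_mem hS g) (len_mem hS h))

theorem len_inv (hS : Good S) (g : G) : len S g⁻¹ = len S g := by
  apply le_antisymm
  · exact len_le (hS.pow_inv _ (len_mem hS g))
  · have := len_le (hS.pow_inv _ (len_mem hS g⁻¹))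
    simpa using this

theorem fin_sub_pow (hS : Good S) {F : Set G} (hF : F.Finite) : ∃ n, F ⊆ S ^ n := by
  obtain ⟨n, hn⟩ := (hF.image (len S)).bddAbove
  exact ⟨n, fun x hx => mem_of_len hS (hn ⟨x, hx, rfl⟩)⟩

/-- Left translate of a set. -/
def tr (b : G) (A : Set G) : Set G := {x | b⁻¹ * x ∈ A}

theorem mem_tr {b : G} {A : Set G} {x : G} : x ∈ tr b A ↔ b⁻¹ * x ∈ A := Iff.rfl

theorem bd_tr {b : G} {A : Set G} {x : G} (h : x ∈ bd S (tr b A)) : b⁻¹ * x ∈ bd S A := by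
  obtain ⟨h1, z, h2, h3⟩ := h
  exact ⟨h1, b⁻¹ * z, h2, by simpa [mul_assoc] using h3⟩

theorem conn_ball (hS : Good S) (b : G) (R : ℕ) : Conn S (tr b (S ^ R)) := by
  intro Y hY hne hc
  have down : ∀ n ≤ R, ∀ y ∈ Y, b⁻¹ * y ∈ S ^ n → b ∈ Y := by
    intro n
    induction n with
    | zero =>
      intro _ y hy h
      have : b = y := by simpa [inv_mul_eq_one] using h
      exact this ▸ hy
    | succ n ih =>
      intro hn y hy h
      rw [pow_succ] at h
      obtain ⟨u, hu, s, hs, hus⟩ := Set.mem_mul.1 h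
      have hyeq : y = b * u * s := by rw [mul_assoc, hus]; simp
      have h1 : b * u ∈ Y := by
        refine hc y hy _ ?_ ?_
        · exact mem_tr.2 (by simpa using hS.pow_mono (by omega : n ≤ R) hu)
        · rw [hyeq]; simpa [mul_assoc] using hS.inv _ hs
      exact ih (by omega) _ h1 (by simpa using hu)
  have hb : b ∈ Y := by
    obtain ⟨y, hy⟩ := hne
    exact down R le_rfl y hy (hY hy)
  have up : ∀ n ≤ R, ∀ u ∈ S ^ n, b * u ∈ Y := by
    intro n
    induction n with
    | zero => intro _ u hu; simp at hu; simpa [hu] using hb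
    | succ n ih =>
      intro hn u hu
      have hu' := hu
      rw [pow_succ] at hu
      obtain ⟨v, hv, s, hs, rfl⟩ := Set.mem_mul.1 hu
      refine hc _ (ih (by omega) v hv) _ ?_ (by simpa [mul_assoc] using hs)
      exact mem_tr.2 (by simpa using hS.pow_mono hn hu')
  refine hY.antisymm fun z hz => ?_
  simpa using up R le_rfl _ hz

theorem tri (hS : Good S) {R : ℕ} {A A' : Set G} (hA : bd S A ⊆ S ^ R) (hA' : bd S A' ⊆ S ^ R)
    {b b' : G} (hbb : b⁻¹ * b' ∉ S ^ (2 * R)) {x : G} (hx : x ∈ tr b A) (hx' : x ∈ tr b' A')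
    (hne : tr b A ∪ tr b (S ^ R) ≠ Set.univ ∨ True) :
    b' ∈ tr b A ∨ b ∈ tr b' A' := by
  clear hne
  by_contra hno
  push Not at hno
  obtain ⟨n1, n2⟩ := hno
  have h1R : (1 : G) ∈ S ^ R := hS.pow_mono (Nat.zero_le R) (by simp)
  have hdis : ∀ y, y ∈ tr b (S ^ R) → y ∈ tr b' (S ^ R) → False := by
    intro y h1 h2
    apply hbb
    rw [two_mul, pow_add]
    exact Set.mem_mul.2 ⟨_, h1, _, hS.pow_inv _ h2, by simp⟩
  -- the ball around b' misses tr b A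
  have hmiss : ∀ y ∈ tr b' (S ^ R), y ∉ tr b A := by
    by_contra hh
    push Not at hh
    obtain ⟨y, hy1, hy2⟩ := hh
    have := conn_ball hS b' R (tr b' (S ^ R) ∩ tr b A) Set.inter_subset_left ⟨y, hy1, hy2⟩ (by
      intro u hu v hv huv
      refine ⟨hv, ?_⟩
      by_contra hvA
      exact hdis u (hA (bd_tr ⟨hu.2, v, hvA, huv⟩)) hu.1)
    have hb' : b' ∈ tr b' (S ^ R) := by simpa [mem_tr] using h1R
    rw [← this] at hb'
    exact n1 hb'.2
  have hbb' : b ∈ tr b (S ^ R) := by simpa [mem_tr] using h1R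
  -- the union of the part and its ball is connected
  let Y : Set G := {y | y ∈ tr b A ∧ y ∈ tr b' A' } ∪ {y | y ∈ tr b (S ^ R) ∧ y ∈ tr b' A'}
  have hYclo : ∀ y ∈ Y, ∀ z, (z ∈ tr b A ∨ z ∈ tr b (S ^ R)) → y⁻¹ * z ∈ S → z ∈ Y := by
    intro y hy z hz hyz
    have hyA' : y ∈ tr b' A' := by rcases hy with h | h <;> exact h.2
    have hzA' : z ∈ tr b' A' := by
      by_contra hzA
      have hyb : y ∈ tr b' (S ^ R) := hA' (bd_tr ⟨hyA', z, hzA, hyz⟩)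
      rcases hy with h | h
      · exact hmiss y hyb h.1
      · exact hdis y h.1 hyb
    rcases hz with h | h
    · exact Or.inl ⟨h, hzA'⟩
    · exact Or.inr ⟨h, hzA'⟩
  have hball : ∀ y ∈ tr b (S ^ R), y ∉ Y := by
    by_contra hh
    push Not at hh
    obtain ⟨y, hy1, hy2⟩ := hh
    have := conn_ball hS b R (tr b (S ^ R) ∩ Y) Set.inter_subset_left ⟨y, hy1, hy2⟩ (by
      intro u hu v hv huv
      exact ⟨hv, hYclo u hu.2 v (Or.inr hv) huv⟩)
    rw [← this] at hbb'
    rcases hbb'.2 with h | h <;> exact n2 h.2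
  have hYu : Y = Set.univ := conn_univ hS Y (Set.subset_univ _) ⟨x, Or.inl ⟨hx, hx'⟩⟩ (by
    intro y hy z _ hyz
    refine hYclo y hy z ?_ hyz
    by_contra hz
    push Not at hz
    rcases hy with h | h
    · exact hball y (hA (bd_tr ⟨h.1, z, hz.1, hyz⟩)) (Or.inl h)
    · exact hball y h.1 (Or.inr h))
  have : b ∈ Y := hYu ▸ trivial
  rcases this with h | h <;> exact n2 h.2

theorem crossing {C : Set G} (hS : Good S) (h1 : (1 : G) ∉ C) : ∀ n, ∀ c ∈ C, c ∈ S ^ n →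
    ∃ z ∈ bd S C, ∃ k l, k + l = n ∧ z ∈ S ^ k ∧ z⁻¹ * c ∈ S ^ l := by
  intro n
  induction n with
  | zero => intro c hc h; simp at h; exact absurd (h ▸ hc) h1
  | succ n ih =>
    intro c hc h
    have h' := h
    rw [pow_succ] at h
    obtain ⟨c', hc', s, hs, rfl⟩ := Set.mem_mul.1 h
    by_cases hcC : c' ∈ C
    · obtain ⟨z, hz, k, l, hkl, hk, hl⟩ := ih c' hcC hc'
      refine ⟨z, hz, k, l + 1, by omega, hk, ?_⟩
      rw [pow_succ, ← mul_assoc]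
      exact Set.mul_mem_mul hl hs
    · exact ⟨c' * s, ⟨hc, c', hcC, by simpa using hS.inv _ hs⟩, n + 1, 0, by omega, h', by simp⟩

theorem rank_ineq (hS : Good S) {R : ℕ} {A : Set G} (hA : bd S A ⊆ S ^ R) {b c : G}
    (hb : (1 : G) ∉ tr b A) (hc : c ∈ tr b A) : len S b + len S (b⁻¹ * c) ≤ len S c + 2 * R := by
  obtain ⟨z, hz, k, l, hkl, hk, hl⟩ := crossing hS hb _ c hc (len_mem hS c)
  have h1 : len S (b⁻¹ * z) ≤ R := len_le (hA (bd_tr hz))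
  have h2 : len S b ≤ len S z + len S (b⁻¹ * z) := by
    have := len_mul hS z (b⁻¹ * z)⁻¹
    rw [len_inv hS] at this
    simpa using this
  have h3 : len S (b⁻¹ * c) ≤ len S (b⁻¹ * z) + len S (z⁻¹ * c) := by
    have := len_mul hS (b⁻¹ * z) (z⁻¹ * c)
    simpa [mul_assoc] using this
  have h4 := len_le hk
  have h5 := len_le hl
  omega

theorem exit_bd {A : Set G} {y : G} (hy : y ∈ A) : ∀ n, ∀ u ∈ S ^ n, y * u ∉ A →
    ∃ z ∈ bd S A, ∃ m ≤ n, y⁻¹ * z ∈ S ^ m := by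
  intro n
  induction n with
  | zero => intro u hu h; simp at hu; simp [hu, hy] at h
  | succ n ih =>
    intro u hu h
    rw [pow_succ] at hu
    obtain ⟨v, hv, s, hs, rfl⟩ := Set.mem_mul.1 hu
    by_cases hvA : y * v ∈ A
    · exact ⟨y * v, ⟨hvA, y * (v * s), h, by simpa [mul_assoc] using hs⟩, n, by omega, by simpa using hv⟩
    · obtain ⟨z, hz, m, hm, hzm⟩ := ih v hv hvA
      exact ⟨z, hz, m, by omega, hzm⟩

theorem deep_point (hS : Good S) {A : Set G} (hA : A.Infinite) (hb : (bd S A).Finite) (q : ℕ) :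
    ∃ y ∈ A, ∀ u ∈ S ^ q, y * u ∈ A := by
  obtain ⟨y, hy, hyn⟩ := (hA.sdiff (hb.mul (hS.pow_fin q))).nonempty
  refine ⟨y, hy, fun u hu => ?_⟩
  by_contra hno
  obtain ⟨z, hz, m, hm, hzm⟩ := exit_bd hy q u hu hno
  exact hyn (Set.mem_mul.2 ⟨z, hz, _, hS.pow_inv _ (hS.pow_mono hm hzm), by simp⟩)

theorem exists_net (S : Set G) (q : ℕ) (hS : Good S) : ∃ Z : Set G,
    (∀ b ∈ Z, ∀ b' ∈ Z, b ≠ b' → b⁻¹ * b' ∉ S ^ q) ∧ ∀ g, ∃ b ∈ Z, b⁻¹ * g ∈ S ^ q := by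
  obtain ⟨Z, hZ⟩ := zorn_subset {Z : Set G | ∀ b ∈ Z, ∀ b' ∈ Z, b ≠ b' → b⁻¹ * b' ∉ S ^ q} (by
    intro c hc hch
    refine ⟨⋃₀ c, ?_, fun s hs => Set.subset_sUnion_of_mem hs⟩
    rintro b ⟨s, hs, hb⟩ b' ⟨s', hs', hb'⟩ hne
    rcases hch.total hs hs' with h | h
    · exact hc hs' b (h hb) b' hb' hne
    · exact hc hs b hb b' (h hb') hne)
  refine ⟨Z, hZ.prop, fun g => ?_⟩
  by_contra hno
  push Not at hno
  have hin : insert g Z ∈ {Z : Set G | ∀ b ∈ Z, ∀ b' ∈ Z, b ≠ b' → b⁻¹ * b' ∉ S ^ q} := by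
    rintro b (rfl | hb) b' (rfl | hb') hne
    · exact absurd rfl hne
    · intro h
      exact hno b' hb' (by simpa using hS.pow_inv _ h)
    · exact hno b hb
    · exact hZ.prop b hb b' hb' hne
  have := hZ.le_of_ge hin (Set.subset_insert _ _)
  exact hno g (this (Set.mem_insert _ _)) (by simpa using hS.pow_mono (Nat.zero_le q) (by simp))

theorem binary (hS : Good S) {A : Fin 3 → Set G} (hAi : ∀ i, (A i).Infinite)
    (hAb : ∀ i, (bd S (A i)).Finite) (hAd : Pairwise fun i j => Disjoint (A i) (A j))
    (hA1 : ∀ i, (1 : G) ∉ A i) :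
    ∃ (Z : Set G) (q M : ℕ) (t : Bool → G → G), (∀ g, ∃ b ∈ Z, b⁻¹ * g ∈ S ^ q) ∧
      (∀ i, ∀ b ∈ Z, t i b ∈ Z ∧ len S b < len S (t i b) ∧ len S (b⁻¹ * t i b) ≤ M) ∧
      ∀ i j, ∀ b ∈ Z, ∀ b' ∈ Z, t i b = t j b' → i = j ∧ b = b' := by
  obtain ⟨R, hR⟩ := fin_sub_pow hS (Set.finite_iUnion hAb)
  have hR' : ∀ i, bd S (A i) ⊆ S ^ R := fun i => (Set.subset_iUnion (fun i => bd S (A i)) i).trans hR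
  obtain ⟨Z, hsep, hcov⟩ := exists_net S (2 * R) hS
  choose y hyA hy using fun i => deep_point hS (hAi i) (hAb i) (2 * R)
  obtain ⟨M, hM⟩ := (Set.finite_range fun i => len S (y i)).bddAbove
  have hM' : ∀ i, len S (y i) ≤ M := fun i => hM ⟨i, rfl⟩
  have hτ : ∀ b : G, ∃ τ : Bool → Fin 3, Function.Injective τ ∧ ∀ i, (1 : G) ∉ tr b (A (τ i)) := by
    intro b
    simp only [mem_tr, mul_one]
    have hdj : ∀ i j, i ≠ j → b⁻¹ ∈ A i → b⁻¹ ∉ A j := fun i j hij h h' =>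
      Set.disjoint_left.1 (hAd hij) h h'
    by_cases h0 : b⁻¹ ∈ A 0
    · refine ⟨fun i => if i then 1 else 2, by decide, ?_⟩
      rintro (_ | _)
      · exact hdj 0 2 (by decide) h0
      · exact hdj 0 1 (by decide) h0
    · by_cases h1 : b⁻¹ ∈ A 1
      · refine ⟨fun i => if i then 0 else 2, by decide, ?_⟩
        rintro (_ | _)
        · exact hdj 1 2 (by decide) h1
        · exact h0
      · refine ⟨fun i => if i then 0 else 1, by decide, ?_⟩
        rintro (_ | _)
        · exact h1
        · exact h0
  choose τ hτi hτ1 using hτ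
  have hgrow : ∀ b ∈ Z, ∀ i, ∀ c ∈ Z, c ∈ tr b (A (τ b i)) → len S b < len S c := by
    intro b hb i c hc hcA
    have h1 := rank_ineq hS (hR' _) (hτ1 b i) hcA
    have hne : b ≠ c := by
      rintro rfl
      exact hA1 _ (by simpa [mem_tr] using hcA)
    have h2 : ¬ len S (b⁻¹ * c) ≤ 2 * R := fun h => hsep b hb c hc hne (mem_of_len hS h)
    omega
  have hnext : ∀ i b, b ∈ Z → ∃ c ∈ Z, c ∈ tr b (A (τ b i)) ∧ len S (b⁻¹ * c) ≤ M + 4 * R ∧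
      ∀ c' ∈ Z, c' ∈ tr b (A (τ b i)) → len S c ≤ len S c' := by
    intro i b hb
    obtain ⟨c0, hc0, hc0'⟩ := hcov (b * y (τ b i))
    have hc0A : c0 ∈ tr b (A (τ b i)) := by
      have := hy (τ b i) _ (hS.pow_inv _ hc0')
      simpa [mem_tr, mul_assoc] using this
    have hl0 : len S c0 ≤ len S b + M + 2 * R := by
      have e1 : c0 = (b * y (τ b i)) * (c0⁻¹ * (b * y (τ b i)))⁻¹ := by group
      have h1 := len_mul hS (b * y (τ b i)) (c0⁻¹ * (b * y (τ b i)))⁻¹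
      rw [← e1, len_inv hS] at h1
      have h2 := len_mul hS b (y (τ b i))
      have h3 := len_le hc0'
      have h4 := hM' (τ b i)
      omega
    have hex : ∃ n, ∃ c ∈ Z, c ∈ tr b (A (τ b i)) ∧ len S c = n := ⟨_, c0, hc0, hc0A, rfl⟩
    classical
    obtain ⟨c, hc, hcA, hcn⟩ := Nat.find_spec hex
    have hmin : ∀ c' ∈ Z, c' ∈ tr b (A (τ b i)) → len S c ≤ len S c' := by
      intro c' h1 h2
      rw [hcn]
      exact Nat.find_min' hex ⟨c', h1, h2, rfl⟩
    refine ⟨c, hc, hcA, ?_, hmin⟩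
    have h1 := rank_ineq hS (hR' _) (hτ1 b i) hcA
    have h2 := hmin c0 hc0 hc0A
    omega
  choose! t t1 t2 t3 t4 using hnext
  refine ⟨Z, 2 * R, M + 4 * R, t, hcov, fun i b hb => ⟨t1 i b hb, hgrow b hb i _ (t1 i b hb) (t2 i b hb), t3 i b hb⟩, ?_⟩
  intro i j b hb b' hb' heq
  by_cases hbb : b = b'
  · subst hbb
    refine ⟨?_, rfl⟩
    by_contra hij
    have h1 := t2 i b hb
    have h2 := t2 j b hb
    rw [← heq] at h2
    exact Set.disjoint_left.1 (hAd ((hτi b).ne hij)) h1 h2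
  · exfalso
    have h2 := t2 j b' hb'
    rw [← heq] at h2
    rcases tri hS (hR' _) (hR' _) (hsep b hb b' hb' hbb) (t2 i b hb) h2 (Or.inr trivial) with h | h
    · have h3 := t4 i b hb b' hb' h
      have h4 := hgrow b' hb' j _ (t1 j b' hb') (t2 j b' hb')
      rw [heq] at h3
      omega
    · have h3 := t4 j b' hb' b hb h
      have h4 := hgrow b hb i _ (t1 i b hb) (t2 i b hb)
      rw [heq] at h4
      omega

theorem spread (hS : Good S) {A : Fin 3 → Set G} (hAi : ∀ i, (A i).Infinite)
    (hAb : ∀ i, (bd S (A i)).Finite) (hAd : Pairwise fun i j => Disjoint (A i) (A j))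
    (n : ℕ) : ∃ (F : G × Fin n → G) (D : ℕ), Function.Injective F ∧
      ∀ p, len S p.1 < len S (F p) ∧ p.1⁻¹ * F p ∈ S ^ D := by
  have h1f : (bd S ({1} : Set G)).Finite := (Set.finite_singleton (1 : G)).subset fun x hx => hx.1
  obtain ⟨Z, q, M, t, hcov, ht, hinj⟩ := binary hS (A := fun i => A i \ {1})
    (fun i => (hAi i).sdiff (Set.finite_singleton _)) (fun i => bd_diff_fin hS (hAb i) h1f)
    (fun i j hij => (hAd hij).mono Set.sdiff_subset Set.sdiff_subset) (fun i h => h.2 rfl)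
  choose ν hν1 hν2 using hcov
  let it : List Bool → G → G := fun l b => l.foldr t b
  have hit : ∀ l : List Bool, ∀ b ∈ Z, it l b ∈ Z ∧ len S b + l.length ≤ len S (it l b) ∧
      len S (b⁻¹ * it l b) ≤ l.length * M := by
    intro l b hb
    induction l with
    | nil =>
      refine ⟨hb, by simp [it], ?_⟩
      exact len_le (by simp [it])
    | cons i l ih =>
      obtain ⟨i1, i2, i3⟩ := ih
      obtain ⟨j1, j2, j3⟩ := ht i _ i1
      have e : it (i :: l) b = t i (it l b) := rfl
      rw [e, List.length_cons]
      refine ⟨j1, by omega, ?_⟩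
      have := len_mul hS (b⁻¹ * it l b) ((it l b)⁻¹ * t i (it l b))
      simp only [mul_assoc, mul_inv_cancel_left] at this
      rw [add_mul, one_mul]
      omega
  have hitinj : ∀ l l' : List Bool, l.length = l'.length → ∀ b ∈ Z, ∀ b' ∈ Z, it l b = it l' b' →
      l = l' ∧ b = b' := by
    intro l
    induction l with
    | nil =>
      intro l' hl b hb b' hb' h
      have : l' = [] := List.length_eq_zero_iff.1 (by simpa using hl.symm)
      subst this
      exact ⟨rfl, h⟩
    | cons i l ih =>
      intro l' hl b hb b' hb' h
      rcases l' with _ | ⟨j, l'⟩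
      · simp at hl
      · obtain ⟨h1, h2⟩ := hinj i j _ (hit l b hb).1 _ (hit l' b' hb').1 h
        obtain ⟨h3, h4⟩ := ih l' (by simpa using hl) b hb b' hb' h2
        exact ⟨by rw [h1, h3], h4⟩
  have : Finite (S ^ q : Set G) := hS.pow_fin q
  have : Fintype (S ^ q : Set G) := Fintype.ofFinite _
  obtain ⟨N, hN⟩ : ∃ N, N = Fintype.card ((S ^ q : Set G) × Fin n) := ⟨_, rfl⟩
  let j := N + q + 1
  have hcard : Fintype.card ((S ^ q : Set G) × Fin n) ≤ Fintype.card (Fin j → Bool) := by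
    rw [← hN]
    simp only [Fintype.card_fun, Fintype.card_bool, Fintype.card_fin]
    have := (Nat.lt_two_pow_self (n := j)).le
    have hj : j = N + q + 1 := rfl
    omega
  obtain ⟨code⟩ := Function.Embedding.nonempty_of_card_le hcard
  let cd : G × Fin n → List Bool := fun p => List.ofFn (code (⟨_, hν2 p.1⟩, p.2))
  have hcdl : ∀ p, (cd p).length = j := fun p => by simp [cd, j]
  refine ⟨fun p => it (cd p) (ν p.1), q + j * M, ?_, ?_⟩
  · rintro ⟨g, i⟩ ⟨g', i'⟩ h
    obtain ⟨h1, h2⟩ := hitinj _ _ (by rw [hcdl, hcdl]) _ (hν1 g) _ (hν1 g') h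
    have h3 := code.injective (List.ofFn_injective h1)
    simp only [Prod.mk.injEq, Subtype.mk.injEq] at h3
    obtain ⟨h4, rfl⟩ := h3
    rw [h2] at h4
    rw [mul_left_cancel h4]
  · rintro ⟨g, i⟩
    obtain ⟨-, h2, h3⟩ := hit (cd (g, i)) _ (hν1 g)
    rw [hcdl] at h2 h3
    simp only
    have h4 := len_le (hν2 g)
    constructor
    · have h5 := len_mul hS (ν g) ((ν g)⁻¹ * g)
      rw [mul_inv_cancel_left] at h5
      have hj : j = N + q + 1 := rfl
      omega
    · apply mem_of_len hS
      have h5 := len_mul hS ((ν g)⁻¹ * g)⁻¹ ((ν g)⁻¹ * it (cd (g, i)) (ν g))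
      rw [len_inv hS] at h5
      simp only [mul_inv_rev, inv_inv, mul_assoc, mul_inv_cancel_left] at h5
      omega

theorem len_one (S : Set G) : len S 1 = 0 := Nat.le_zero.1 (len_le (by simp))

theorem len_pos (hS : Good S) {g : G} (hg : g ≠ 1) : 0 < len S g := by
  by_contra h
  have := len_mem hS g
  rw [Nat.le_zero.1 (not_lt.1 h)] at this
  exact hg (by simpa using this)

/-- The vertex to which a slot of the rooted tree is attached. -/
def anchor {n : ℕ} : Option (G × Fin n) → G
  | none => 1
  | some p => p.1

theorem tree_bij (hS : Good S) {A : Fin 3 → Set G} (hAi : ∀ i, (A i).Infinite)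
    (hAb : ∀ i, (bd S (A i)).Finite) (hAd : Pairwise fun i j => Disjoint (A i) (A j))
    (n : ℕ) (hn : S.ncard ≤ n) : ∃ (Φ : Option (G × Fin n) → {g : G // g ≠ 1}) (D : ℕ),
      Function.Bijective Φ ∧
      ∀ p, len S (anchor p) < len S (Φ p).1 ∧ (anchor p)⁻¹ * (Φ p).1 ∈ S ^ D := by
  obtain ⟨F, D, hF, hFp⟩ := spread hS hAi hAb hAd (n + 1)
  have hF1 : ∀ p, F p ≠ 1 := by
    intro p h
    have := (hFp p).1
    rw [h, len_one] at this
    omega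
  let f : Option (G × Fin n) → {g : G // g ≠ 1} := fun
    | none => ⟨F (1, Fin.last n), hF1 _⟩
    | some p => ⟨F (p.1, p.2.castSucc), hF1 _⟩
  have hf : Function.Injective f := by
    rintro (_ | ⟨g, i⟩) (_ | ⟨g', i'⟩) h
    · rfl
    · have := hF (congrArg Subtype.val h)
      simp only [Prod.mk.injEq] at this
      exact absurd this.2.symm (Fin.castSucc_lt_last i').ne
    · have := hF (congrArg Subtype.val h)
      simp only [Prod.mk.injEq] at this
      exact absurd this.2 (Fin.castSucc_lt_last i).ne
    · have := hF (congrArg Subtype.val h)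
      simp only [Prod.mk.injEq, Fin.castSucc_inj] at this
      rw [this.1, this.2]
  have : Finite S := hS.fin
  have : Fintype S := Fintype.ofFinite _
  obtain ⟨code⟩ : Nonempty (S ↪ Fin n) := by
    apply Function.Embedding.nonempty_of_card_le
    rw [Fintype.card_fin, ← Nat.card_eq_fintype_card, Nat.card_coe_set_eq]
    exact hn
  have hpar : ∀ g : {g : G // g ≠ 1}, ∃ p, ∃ s ∈ S, g.1 = p * s ∧ len S p < len S g.1 := by
    rintro ⟨g, hg⟩
    have h := len_mem hS g
    obtain ⟨m, hm⟩ : ∃ m, len S g = m + 1 := ⟨len S g - 1, by have := len_pos hS hg; omega⟩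
    rw [hm, pow_succ] at h
    obtain ⟨p, hp, s, hs, rfl⟩ := Set.mem_mul.1 h
    refine ⟨p, s, hs, rfl, ?_⟩
    have := len_le hp
    simp only
    omega
  choose par s hs hps hpl using hpar
  let g : {g : G // g ≠ 1} → Option (G × Fin n) := fun x => some (par x, code ⟨s x, hs x⟩)
  have hg : Function.Injective g := by
    intro x y h
    simp only [g, Option.some.injEq, Prod.mk.injEq] at h
    have h2 := code.injective h.2
    simp only [Subtype.mk.injEq] at h2
    apply Subtype.ext
    rw [hps x, hps y, h.1, h2]
  obtain ⟨Φ, hΦ, hR⟩ := Function.Embedding.schroeder_bernstein_of_rel hf hg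
    (fun p x => len S (anchor p) < len S x.1 ∧ (anchor p)⁻¹ * x.1 ∈ S ^ (D + 1)) (by
      rintro (_ | ⟨g, i⟩)
      · exact ⟨(hFp (1, Fin.last n)).1, hS.pow_mono (Nat.le_succ D) (hFp (1, Fin.last n)).2⟩
      · exact ⟨(hFp (g, i.castSucc)).1, hS.pow_mono (Nat.le_succ D) (hFp (g, i.castSucc)).2⟩) (by
      intro x
      refine ⟨hpl x, hS.pow_mono (Nat.le_add_left 1 D) ?_⟩
      have : (par x)⁻¹ * x.1 = s x := by
        conv_lhs => rw [hps x]
        simp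
      rw [pow_one]
      exact this.symm ▸ hs x)
  exact ⟨Φ, D + 1, hΦ, hR⟩

/-- The inverse letter. -/
def flip {k : ℕ} (x : Fin k × Bool) : Fin k × Bool := (x.1, !x.2)

/-- The letter that may not be prepended. -/
def forb {k : ℕ} (z0 : Fin k × Bool) : List (Fin k × Bool) → Fin k × Bool
  | [] => z0
  | y :: _ => flip y

theorem red_cons {k : ℕ} (z0 x : Fin k × Bool) (L : List (Fin k × Bool)) :
    FreeGroup.IsReduced (x :: L) ↔ (L = [] ∨ x ≠ forb z0 L) ∧ FreeGroup.IsReduced L := by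
  rcases L with _ | ⟨y, L⟩
  · simp
  · rw [FreeGroup.isReduced_cons_cons]
    obtain ⟨a, b⟩ := x
    obtain ⟨c, d⟩ := y
    simp only [forb, flip, ne_eq, Prod.mk.injEq, reduceCtorEq, false_or]
    cases b <;> cases d <;> simp

theorem free_action (hS : Good S) {A : Fin 3 → Set G} (hAi : ∀ i, (A i).Infinite)
    (hAb : ∀ i, (bd S (A i)).Finite) (hAd : Pairwise fun i j => Disjoint (A i) (A j)) :
    ∃ k : ℕ, 2 ≤ k ∧ ∃ a : RightAction (FreeGroup (Fin k)) G, a.IsTransitive ∧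
       ∀ S : Set G, IsFinGenSet S → a.IsTranslationLike (wordMetric S) := by
  classical
  obtain ⟨k, hk⟩ : ∃ k, k = S.ncard + 2 := ⟨_, rfl⟩
  obtain ⟨Φ, D, hΦ, hΦp⟩ := tree_bij hS hAi hAb hAd (2 * k - 1) (by omega)
  have hidx : ∀ z : Fin k × Bool, Nonempty ({x // x ≠ z} ≃ Fin (2 * k - 1)) := by
    intro z
    apply Fintype.card_eq.1
    rw [Fintype.card_subtype_compl]
    simp [mul_comm]
  let idx : ∀ z : Fin k × Bool, {x // x ≠ z} ≃ Fin (2 * k - 1) := fun z => (hidx z).some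
  let z0 : Fin k × Bool := (⟨0, by omega⟩, true)
  let E : List (Fin k × Bool) → G := fun L => List.rec (1 : G) (fun x L g =>
    if h : x = forb z0 L then (Φ none).1 else (Φ (some (g, idx (forb z0 L) ⟨x, h⟩))).1) L
  have E0 : E [] = 1 := rfl
  have Eeq : ∀ x L, x = forb z0 L → E (x :: L) = (Φ none).1 := by
    intro x L h
    exact dif_pos h
  have Ene : ∀ x L (h : x ≠ forb z0 L),
      E (x :: L) = (Φ (some (E L, idx (forb z0 L) ⟨x, h⟩))).1 := by
    intro x L h
    exact dif_neg h
  have E1 : ∀ x L, E (x :: L) ≠ 1 := by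
    intro x L
    by_cases h : x = forb z0 L
    · rw [Eeq x L h]; exact (Φ none).2
    · rw [Ene x L h]; exact (Φ _).2
  have Einj : ∀ L L', FreeGroup.IsReduced L → FreeGroup.IsReduced L' → E L = E L' → L = L' := by
    intro L
    induction L with
    | nil =>
      rintro (_ | ⟨y, L'⟩) _ _ h
      · rfl
      · exact absurd h.symm (E1 y L')
    | cons x L ih =>
      rintro (_ | ⟨y, L'⟩) hL hL' h
      · exact absurd h (E1 x L)
      · rw [red_cons z0] at hL hL'
        by_cases hx : x = forb z0 L <;> by_cases hy : y = forb z0 L'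
        · have h1 : L = [] := hL.1.resolve_right (fun h => h hx)
          have h2 : L' = [] := hL'.1.resolve_right (fun h => h hy)
          subst h1 h2
          rw [hx, hy]
        · rw [Eeq x L hx, Ene y L' hy] at h
          have := hΦ.1 (Subtype.ext h)
          cases this
        · rw [Ene x L hx, Eeq y L' hy] at h
          have := hΦ.1 (Subtype.ext h)
          cases this
        · rw [Ene x L hx, Ene y L' hy] at h
          have h1 := hΦ.1 (Subtype.ext h)
          simp only [Option.some.injEq, Prod.mk.injEq] at h1
          have h2 := ih L' hL.2 hL'.2 h1.1
          subst h2
          have h3 := (idx _).injective h1.2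
          simp only [Subtype.mk.injEq] at h3
          rw [h3]
  have Esurj : ∀ n, ∀ g, len S g ≤ n → ∃ L, FreeGroup.IsReduced L ∧ E L = g := by
    intro n
    induction n with
    | zero =>
      intro g hg
      refine ⟨[], FreeGroup.IsReduced.nil, ?_⟩
      by_contra hne
      have := len_pos hS (Ne.symm hne)
      omega
    | succ n ih =>
      intro g hg
      by_cases hg1 : g = 1
      · exact ⟨[], FreeGroup.IsReduced.nil, hg1.symm⟩
      · obtain ⟨p, hp⟩ := hΦ.2 ⟨g, hg1⟩
        have hpg : (Φ p).1 = g := by rw [hp]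
        rcases p with _ | ⟨g', i⟩
        · exact ⟨[z0], FreeGroup.IsReduced.singleton, by rw [Eeq z0 [] rfl, hpg]⟩
        · have hlt := (hΦp (some (g', i))).1
          rw [hpg] at hlt
          change len S g' < len S g at hlt
          obtain ⟨L, hL, hLg⟩ := ih g' (by omega)
          obtain ⟨⟨x, hx⟩, hxi⟩ := (idx (forb z0 L)).surjective i
          refine ⟨x :: L, (red_cons z0 x L).2 ⟨Or.inr hx, hL⟩, ?_⟩
          rw [Ene x L hx, hxi, hLg, hpg]
  have Estep : ∀ x L, FreeGroup.IsReduced (x :: L) → (E L)⁻¹ * E (x :: L) ∈ S ^ D := by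
    intro x L h
    rw [red_cons z0] at h
    by_cases hx : x = forb z0 L
    · have h1 : L = [] := h.1.resolve_right (fun h => h hx)
      subst h1
      rw [Eeq x [] hx]
      exact (hΦp none).2
    · rw [Ene x L hx]
      exact (hΦp (some (E L, idx (forb z0 L) ⟨x, hx⟩))).2
  let e : FreeGroup (Fin k) → G := fun w => E (w⁻¹).toWord
  have he : Function.Bijective e := by
    constructor
    · intro a b h
      have := Einj _ _ FreeGroup.isReduced_toWord FreeGroup.isReduced_toWord h
      exact inv_injective (FreeGroup.toWord_injective this)
    · intro g
      obtain ⟨L, hL, hLg⟩ := Esurj _ g le_rfl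
      refine ⟨(FreeGroup.mk L)⁻¹, ?_⟩
      simp only [e, inv_inv, FreeGroup.toWord_mk]
      rw [hL.reduce_eq, hLg]
  refine ⟨k, by omega, action_of_equiv (Set.range FreeGroup.of) (FreeGroup.closure_range_of _)
    (Equiv.ofBijective e he) ?_⟩
  rintro _ ⟨i, rfl⟩
  refine ⟨S ^ D, hS.pow_fin D, fun w => ?_⟩
  simp only [Equiv.ofBijective_apply, e]
  obtain ⟨L, hL⟩ : ∃ L, L = (w⁻¹).toWord := ⟨_, rfl⟩
  have hLr : FreeGroup.IsReduced L := hL ▸ FreeGroup.isReduced_toWord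
  have hw : w⁻¹ = FreeGroup.mk L := by rw [hL, FreeGroup.mk_toWord]
  have h2 : ((w * FreeGroup.of i)⁻¹).toWord = FreeGroup.reduce ((i, false) :: L) := by
    rw [mul_inv_rev, hw, FreeGroup.of, FreeGroup.inv_mk, FreeGroup.mul_mk, FreeGroup.toWord_mk]
    rfl
  rw [h2, ← hL]
  by_cases hr : FreeGroup.IsReduced ((i, false) :: L)
  · rw [hr.reduce_eq]
    exact Estep _ _ hr
  · have hr' := hr
    rw [red_cons z0] at hr'
    have h3 : L ≠ [] ∧ (i, false) = forb z0 L := by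
      by_contra hno
      apply hr'
      refine ⟨?_, hLr⟩
      by_cases hLn : L = []
      · exact Or.inl hLn
      · exact Or.inr (fun h => hno ⟨hLn, h⟩)
    rcases L with _ | ⟨y, L⟩
    · exact absurd rfl h3.1
    · have hy : y = (i, true) := by
        have := h3.2
        obtain ⟨c, d⟩ := y
        simp only [forb, flip, Prod.mk.injEq] at this
        rw [Prod.mk.injEq]
        exact ⟨this.1.symm, by have h5 := this.2; clear * - h5; cases d <;> simp at h5 ⊢⟩
      subst hy
      have h4 : FreeGroup.reduce ((i, false) :: (i, true) :: L) = L := by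
        rw [FreeGroup.reduce.cons, hLr.reduce_eq]
        simp
      rw [h4]
      have := hS.pow_inv _ (Estep _ _ hLr)
      simpa using this

end tree

end TL

/-- Every finitely generated infinite group admits a transitive translation-like action by
some free group: either by `ℤ` or by a finitely generated non-abelian free group. -/
theorem transitive_translation_like_by_free_group
    (G : Type*) [Group G] [Group.FG G] [Infinite G] :
    (∃ a : RightAction (Multiplicative ℤ) G, a.IsTransitive ∧
       ∀ S : Set G, IsFinGenSet S → a.IsTranslationLike (wordMetric S)) ∨
    (∃ k : ℕ, 2 ≤ k ∧ ∃ a : RightAction (FreeGroup (Fin k)) G, a.IsTransitive ∧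
       ∀ S : Set G, IsFinGenSet S → a.IsTranslationLike (wordMetric S)) := by
  obtain ⟨S, hS⟩ := TL.exists_good G
  rcases TL.dichotomy hS with h | ⟨A, h1, h2, h3⟩
  · exact Or.inl h
  · exact Or.inr (TL.free_action hS h1 h2 h3)
end

section
/- Every finitely generated infinite group G has a Cayley graph (with respect to some finite generating set) that admits a regular spanning tree, i.e. a spanning subgraph which is a tree all of whose vertices have the same degree. -/
open scoped Pointwise

/-- The (right) Cayley graph of a group w.r.t. a set `S`: `g` and `gs` are adjacent
for `s ∈ S ∪ S⁻¹`. -/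
def cayleyGraph {G : Type*} [Group G] (S : Set G) : SimpleGraph G :=
  SimpleGraph.fromRel (fun g h => g⁻¹ * h ∈ S ∪ S⁻¹)



namespace RST

/-- The graph of a parent function with strictly decreasing rank is a tree. -/
theorem tree_of_parent {V : Type*} (r : V) (φ : V → V) (ρ : V → ℕ)
    (h : ∀ w, w ≠ r → ρ (φ w) < ρ w) :
    (SimpleGraph.fromRel (fun a b => a ≠ r ∧ φ a = b)).IsTree := by
  have hne : ∀ a, a ≠ r → a ≠ φ a := fun a ha e => by
    have := h a ha
    rw [← e] at this
    exact lt_irrefl _ this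
  have hr : ∀ n v, ρ v = n →
      (SimpleGraph.fromRel (fun a b => a ≠ r ∧ φ a = b)).Reachable v r := by
    intro n
    induction n using Nat.strong_induction_on with
    | _ n ih =>
      intro v hv
      by_cases hvr : v = r
      · subst hvr; exact SimpleGraph.Reachable.refl _
      · have h1 := ih (ρ (φ v)) (hv ▸ h v hvr) (φ v) rfl
        refine SimpleGraph.Reachable.trans (SimpleGraph.Adj.reachable ?_) h1
        rw [SimpleGraph.fromRel_adj]
        exact ⟨hne v hvr, Or.inl ⟨hvr, rfl⟩⟩
  have key : ∀ v, v ≠ r → ¬ ((SimpleGraph.fromRel (fun a b => a ≠ r ∧ φ a = b)).deleteEdges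
      {s(v, φ v)}).Reachable v (φ v) := by
    intro v hv hreach
    rw [SimpleGraph.reachable_iff_reflTransGen] at hreach
    have hinv : ∀ y, Relation.ReflTransGen ((SimpleGraph.fromRel
        (fun a b => a ≠ r ∧ φ a = b)).deleteEdges {s(v, φ v)}).Adj v y →
        Relation.ReflTransGen (fun a b => a ≠ r ∧ φ a = b) y v := by
      intro y hy
      induction hy with
      | refl => exact Relation.ReflTransGen.refl
      | tail _ hbc ih =>
        rename_i b c _
        rw [SimpleGraph.deleteEdges_adj, SimpleGraph.fromRel_adj] at hbc
        obtain ⟨⟨_, hbc⟩, hdel⟩ := hbc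
        rcases hbc with hbc | hbc
        · rcases Relation.ReflTransGen.cases_head ih with e | ⟨d, hd, hdv⟩
          · subst e
            exfalso
            apply hdel
            rw [← hbc.2]
            rfl
          · rw [← hbc.2, hd.2]; exact hdv
        · exact Relation.ReflTransGen.head hbc ih
    have h2 := hinv _ hreach
    have h3 : ∀ y, Relation.ReflTransGen (fun a b => a ≠ r ∧ φ a = b) y v → ρ v ≤ ρ y := by
      intro y hy
      induction hy using Relation.ReflTransGen.head_induction_on with
      | refl => exact le_rfl
      | head hab _ ih =>
        have := h _ hab.1
        rw [hab.2] at this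
        omega
    have := h3 _ h2
    have := h v hv
    omega
  refine { connected := ?_, isAcyclic := ?_ }
  · have : Nonempty V := ⟨r⟩
    exact SimpleGraph.Connected.mk fun a b => (hr _ a rfl).trans (hr _ b rfl).symm
  · rw [SimpleGraph.isAcyclic_iff_forall_adj_isBridge]
    intro v w hvw
    rw [SimpleGraph.fromRel_adj] at hvw
    rcases hvw.2 with ⟨h1, h2⟩ | ⟨h1, h2⟩
    · rw [← h2, SimpleGraph.isBridge_iff]
      exact key v h1
    · rw [← h2, Sym2.eq_swap, SimpleGraph.isBridge_iff]
      exact key w h1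

/-- The vertex owning a slot: the extra slot belongs to the root. -/
def par {V E : Type*} (r : V) : Option (V × E) → V
  | none => r
  | some x => x.1

theorem fin_pow {G : Type*} [Group G] {S : Set G} (h : S.Finite) (n : ℕ) : (S ^ n).Finite := by
  induction n with
  | zero => simp
  | succ n ih => rw [pow_succ]; exact Set.Finite.mul ih h

theorem main_of_bij {G : Type*} [Group G] (S : Set G) (hS : IsFinGenSet S)
    {E : Type*} (r : G) (ρ : G → ℕ) (N : ℕ) (b : Option (G × E) → G)
    (hb : Function.Injective b) (hbr : ∀ w, (∃ s, b s = w) ↔ w ≠ r)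
    (hρ : ∀ s, ρ (par r s) < ρ (b s)) (hN : ∀ s, (par r s)⁻¹ * b s ∈ S ^ N) :
    ∃ S : Set G, IsFinGenSet S ∧ ∃ T : SimpleGraph G, T ≤ cayleyGraph S ∧ T.IsTree ∧
      ∃ d : ℕ∞, ∀ v : G, (T.neighborSet v).encard = d := by
  classical
  have hc : ∀ w, ∃ s, w ≠ r → b s = w := by
    intro w
    by_cases hw : w = r
    · exact ⟨none, fun h => absurd hw h⟩
    · obtain ⟨s, hs⟩ := (hbr w).2 hw
      exact ⟨s, fun _ => hs⟩
  choose β hβ using hc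
  set φ : G → G := fun w => par r (β w) with hφ
  have hbne : ∀ s, b s ≠ r := fun s => (hbr _).1 ⟨s, rfl⟩
  have hβb : ∀ s, β (b s) = s := fun s => hb (hβ _ (hbne s))
  have hφb : ∀ s, φ (b s) = par r s := fun s => by simp only [hφ, hβb]
  have hφρ : ∀ w, w ≠ r → ρ (φ w) < ρ w := by
    intro w hw
    have := hρ (β w)
    rwa [hβ w hw] at this
  refine ⟨S ^ N ∪ S, ⟨Set.Finite.union (fin_pow hS.1 _) hS.1, ?_⟩,
    SimpleGraph.fromRel (fun a b => a ≠ r ∧ φ a = b), ?_, tree_of_parent r φ ρ hφρ,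
    ENat.card E + 1, ?_⟩
  · rw [eq_top_iff, ← hS.2]
    exact Subgroup.closure_mono Set.subset_union_right
  · intro a c hac
    rw [SimpleGraph.fromRel_adj] at hac
    unfold cayleyGraph
    rw [SimpleGraph.fromRel_adj]
    refine ⟨hac.1, ?_⟩
    have hst : ∀ w, w ≠ r → (φ w)⁻¹ * w ∈ S ^ N := by
      intro w hw
      have := hN (β w)
      rwa [hβ w hw] at this
    rcases hac.2 with ⟨h1, h2⟩ | ⟨h1, h2⟩
    · right; left; left
      rw [← h2]; exact hst a h1
    · left; left; left
      rw [← h2]; exact hst c h1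
  · intro v
    set q : G := if v = r then b none else φ v with hq
    have hset : (SimpleGraph.fromRel (fun a b => a ≠ r ∧ φ a = b)).neighborSet v
        = insert q ((fun e : E => b (some (v, e))) '' Set.univ) := by
      ext w
      rw [SimpleGraph.mem_neighborSet, SimpleGraph.fromRel_adj]
      simp only [Set.mem_insert_iff, Set.image_univ, Set.mem_range]
      constructor
      · rintro ⟨hvw, ⟨h1, h2⟩ | ⟨h1, h2⟩⟩
        · left; rw [hq, if_neg h1, h2]
        · have hbw := hβ w h1
          rcases hs : β w with _ | ⟨v', e⟩
          · left
            have : v = r := by rw [← h2]; simp only [hφ, hs, par]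
            rw [hq, if_pos this, ← hs, hbw]
          · right
            have : v' = v := by rw [← h2]; simp only [hφ, hs, par]
            subst this
            exact ⟨e, by rw [← hs, hbw]⟩
      · have aux : ∀ s, par r s = v → v ≠ b s ∧ (v ≠ r ∧ φ v = b s ∨ b s ≠ r ∧ φ (b s) = v) := by
          intro s hs
          refine ⟨fun e => ?_, Or.inr ⟨hbne s, by rw [hφb, hs]⟩⟩
          have := hρ s
          rw [hs, ← e] at this
          exact lt_irrefl _ this
        rintro (h | ⟨e, rfl⟩)
        · by_cases hv : v = r
          · rw [h, hq, if_pos hv]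
            exact aux none (by simp [par, hv])
          · rw [h, hq, if_neg hv]
            refine ⟨fun e => ?_, Or.inl ⟨hv, rfl⟩⟩
            have := hφρ v hv
            rw [← e] at this
            exact lt_irrefl _ this
        · exact aux (some (v, e)) rfl
    rw [hset, Set.encard_insert_of_notMem, Function.Injective.encard_image, Set.encard_univ]
    · intro e e' h
      have := hb h
      simpa using this
    · rintro ⟨e, -, he⟩
      by_cases hv : v = r
      · rw [hq, if_pos hv] at he
        have := hb he
        simp at this
      · rw [hq, if_neg hv] at he
        have h1 := hρ (some (v, e))
        have h2 := hφρ v hv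
        simp only at he
        rw [he] at h1
        simp only [par] at h1
        omega

section basics

variable {G : Type*} [Group G]

/-- A finite symmetric generating set containing the identity. -/
structure Gen (S : Set G) : Prop where
  fin : S.Finite
  one : (1 : G) ∈ S
  inv : ∀ s ∈ S, s⁻¹ ∈ S
  top : Subgroup.closure S = ⊤

/-- `b` is at word distance at most `n` from `a`. -/
def Near (S : Set G) (n : ℕ) (a b : G) : Prop := a⁻¹ * b ∈ S ^ n

/-- One step inside `Z`. -/
def Stp (S Z : Set G) (a b : G) : Prop := a ∈ Z ∧ b ∈ Z ∧ a⁻¹ * b ∈ S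

/-- Connected by a path inside `Z`. -/
def Reach (S Z : Set G) : G → G → Prop := Relation.ReflTransGen (Stp S Z)

/-- The component of `a` in `Z`. -/
def comp (S Z : Set G) (a : G) : Set G := {b | Reach S Z a b}

/-- Connected by a path of length `n` inside `Z`. -/
def ReachN (S Z : Set G) : ℕ → G → G → Prop
  | 0, a, b => a = b
  | n + 1, a, b => ∃ c, ReachN S Z n a c ∧ Stp S Z c b

variable {S : Set G}

theorem Near.trans {m n : ℕ} {a b c : G} (h1 : Near S m a b) (h2 : Near S n b c) :
    Near S (m + n) a c := by
  unfold Near at *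
  rw [pow_add]
  have : a⁻¹ * c = (a⁻¹ * b) * (b⁻¹ * c) := by group
  rw [this]
  exact Set.mul_mem_mul h1 h2

theorem Near.symm (hS : Gen S) {n : ℕ} {a b : G} (h : Near S n a b) : Near S n b a := by
  unfold Near at *
  have hs : S⁻¹ = S := by
    ext x
    constructor
    · intro hx; simpa using hS.inv _ hx
    · intro hx; exact hS.inv _ hx
  have : b⁻¹ * a = (a⁻¹ * b)⁻¹ := by group
  rw [this, ← hs, inv_pow]
  exact Set.inv_mem_inv.2 h

theorem Near.mono (hS : Gen S) {m n : ℕ} (hmn : m ≤ n) {a b : G} (h : Near S m a b) :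
    Near S n a b := Set.pow_subset_pow_right hS.one hmn h

theorem Near.rfl' (hS : Gen S) {n : ℕ} {a : G} : Near S n a a := by
  have : Near S 0 a a := by simp [Near]
  exact this.mono hS (Nat.zero_le _)

theorem near_one {a b : G} : Near S 1 a b ↔ a⁻¹ * b ∈ S := by simp [Near]

theorem Stp.symm (hS : Gen S) {Z : Set G} {a b : G} (h : Stp S Z a b) : Stp S Z b a := by
  refine ⟨h.2.1, h.1, ?_⟩
  have : b⁻¹ * a = (a⁻¹ * b)⁻¹ := by group
  rw [this]
  exact hS.inv _ h.2.2

theorem Reach.symm (hS : Gen S) {Z : Set G} {a b : G} (h : Reach S Z a b) : Reach S Z b a := by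
  induction h with
  | refl => exact Relation.ReflTransGen.refl
  | tail _ h ih => exact Relation.ReflTransGen.head (h.symm hS) ih

theorem Reach.mono {Z Z' : Set G} (hZ : Z ⊆ Z') {a b : G} (h : Reach S Z a b) : Reach S Z' a b :=
  Relation.ReflTransGen.mono (fun _ _ h => ⟨hZ h.1, hZ h.2.1, h.2.2⟩) _ _ h

theorem Reach.smul {Z : Set G} (g : G) {a b : G} (h : Reach S Z a b) :
    Reach S {x | g⁻¹ * x ∈ Z} (g * a) (g * b) := by
  induction h with
  | refl => exact Relation.ReflTransGen.refl
  | tail _ h ih =>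
    refine Relation.ReflTransGen.tail ih ⟨?_, ?_, ?_⟩
    · simpa using h.1
    · simpa using h.2.1
    · simpa [mul_assoc] using h.2.2

theorem reach_univ (hS : Gen S) (a b : G) : Reach S Set.univ a b := by
  have key : ∀ x : G, x ∈ Subgroup.closure S → ∀ a, Reach S Set.univ a (a * x) := by
    intro x hx
    induction hx using Subgroup.closure_induction with
    | mem x hx =>
      intro a
      exact Relation.ReflTransGen.single ⟨trivial, trivial, by simpa using hx⟩
    | one => intro a; rw [mul_one]; exact Relation.ReflTransGen.refl
    | mul x y _ _ hx hy =>
      intro a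
      have := (hx a).trans (hy (a * x))
      rwa [mul_assoc] at this
    | inv x _ hx =>
      intro a
      have := (hx (a * x⁻¹)).symm hS
      simpa using this
  have := key (a⁻¹ * b) (by rw [hS.top]; trivial) a
  simpa using this

theorem Reach.mem {Z : Set G} {a b : G} (h : Reach S Z a b) (ha : a ∈ Z) : b ∈ Z := by
  induction h with
  | refl => exact ha
  | tail _ h ih => exact h.2.1

theorem comp_subset {Z : Set G} {a : G} (ha : a ∈ Z) : comp S Z a ⊆ Z := fun _ h => Reach.mem h ha

theorem mem_of_comp_infinite {Z : Set G} {a : G} (h : (comp S Z a).Infinite) : a ∈ Z := by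
  by_contra ha
  apply h
  refine (Set.finite_singleton a).subset ?_
  intro b hb
  rcases Relation.ReflTransGen.cases_head hb with e | ⟨c, hc, _⟩
  · exact e.symm
  · exact absurd hc.1 ha

theorem Reach.comp {Z Z' : Set G} (hZ : Z' ⊆ Z) {a0 a b : G} (h : Reach S Z' a b)
    (ha : Reach S Z a0 a) : Reach S (Z' ∩ comp S Z a0) a b := by
  have : Reach S (Z' ∩ RST.comp S Z a0) a b ∧ Reach S Z a0 b := by
    induction h with
    | refl => exact ⟨Relation.ReflTransGen.refl, ha⟩
    | tail _ h ih =>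
      rename_i c d _
      have hd : Reach S Z a0 d := Relation.ReflTransGen.tail ih.2 ⟨hZ h.1, hZ h.2.1, h.2.2⟩
      exact ⟨Relation.ReflTransGen.tail ih.1 ⟨⟨h.1, ih.2⟩, ⟨h.2.1, hd⟩, h.2.2⟩, hd⟩
  exact this.1

theorem ReachN.reach {Z : Set G} {n : ℕ} {a b : G} (h : ReachN S Z n a b) : Reach S Z a b := by
  induction n generalizing b with
  | zero => cases h; exact Relation.ReflTransGen.refl
  | succ n ih =>
    obtain ⟨c, hc, hs⟩ := h
    exact Relation.ReflTransGen.tail (ih hc) hs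

theorem Reach.reachN {Z : Set G} {a b : G} (h : Reach S Z a b) : ∃ n, ReachN S Z n a b := by
  induction h with
  | refl => exact ⟨0, rfl⟩
  | tail _ h ih =>
    obtain ⟨n, hn⟩ := ih
    exact ⟨n + 1, _, hn, h⟩

theorem ReachN.near {Z : Set G} {n : ℕ} {a b : G} (h : ReachN S Z n a b) : Near S n a b := by
  induction n generalizing b with
  | zero => cases h; simp [Near]
  | succ n ih =>
    obtain ⟨c, hc, hs⟩ := h
    exact (ih hc).trans (near_one.2 hs.2.2)

theorem ReachN.comp {Z : Set G} {n : ℕ} {a0 a b : G} (h : ReachN S Z n a b)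
    (ha : Reach S Z a0 a) : ReachN S (RST.comp S Z a0) n a b := by
  induction n generalizing b with
  | zero => exact h
  | succ n ih =>
    obtain ⟨c, hc, hs⟩ := h
    have h1 : Reach S Z a0 c := Relation.ReflTransGen.trans ha hc.reach
    exact ⟨c, ih hc, h1, Relation.ReflTransGen.tail h1 hs, hs.2.2⟩

theorem last_exit {Y : Set G} {x t : G} {k : ℕ} (h : ReachN S Y k x t) (ht : t ≠ x) :
    ∃ x', x' ∈ Y ∧ x' ≠ x ∧ x⁻¹ * x' ∈ S ∧ ∃ k' < k, ReachN S (Y \ {x}) k' x' t := by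
  induction k generalizing t with
  | zero => exact absurd h.symm ht
  | succ k ih =>
    obtain ⟨c, hc, hs⟩ := h
    by_cases hcx : c = x
    · subst hcx
      exact ⟨t, hs.2.1, ht, hs.2.2, 0, Nat.succ_pos _, rfl⟩
    · obtain ⟨x', h1, h2, h3, k', hk, h4⟩ := ih hc hcx
      exact ⟨x', h1, h2, h3, k' + 1, by omega, c, h4, ⟨hs.1, hcx⟩, ⟨hs.2.1, ht⟩, hs.2.2⟩

/-- Removing a component of `Z \ {x}` from `Z` leaves everything connected to `x`. -/
theorem conn_diff (hS : Gen S) {Z : Set G} {x a : G} (hx : x ∈ Z) (hZ : ∀ z ∈ Z, Reach S Z x z)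
    (ha : a ∈ Z \ {x}) :
    ∀ z ∈ Z \ comp S (Z \ {x}) a, Reach S (Z \ comp S (Z \ {x}) a) x z := by
  intro z hz
  have hxc : x ∉ comp S (Z \ {x}) a := fun h => (comp_subset ha h).2 rfl
  by_cases hzx : z = x
  · subst hzx; exact Relation.ReflTransGen.refl
  obtain ⟨k, hk⟩ := (hZ z hz.1).reachN
  obtain ⟨x', h1, h2, h3, k', -, h4⟩ := last_exit hk hzx
  have h5 := h4.comp (a0 := x') Relation.ReflTransGen.refl
  have h6 : comp S (Z \ {x}) x' ⊆ Z \ comp S (Z \ {x}) a := by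
    intro y hy
    refine ⟨(comp_subset (S := S) (Z := Z \ {x}) ⟨h1, h2⟩ hy).1, fun hya => hz.2 ?_⟩
    exact Relation.ReflTransGen.trans hya (Relation.ReflTransGen.trans (Reach.symm hS hy) h4.reach)
  refine Relation.ReflTransGen.head ⟨⟨hx, hxc⟩, h6 Relation.ReflTransGen.refl, h3⟩ ?_
  exact h5.reach.mono h6

theorem finite_cover (hS : Gen S) {Y F : Set G} {x : G} (hY : ∀ y ∈ Y, Reach S Y x y)
    (hF : F.Finite) : ∃ N : Set G, N.Finite ∧ ∀ y ∈ Y \ F, ∃ n ∈ N, Reach S (Y \ F) n y := by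
  refine ⟨insert x (F * S), (hF.mul hS.fin).insert x, ?_⟩
  have : ∀ y, Reach S Y x y → y ∈ F ∨ ∃ n ∈ insert x (F * S), Reach S (Y \ F) n y := by
    intro y hy
    induction hy with
    | refl => exact Or.inr ⟨x, Set.mem_insert _ _, Relation.ReflTransGen.refl⟩
    | tail _ h ih =>
      rename_i b c _
      by_cases hc : c ∈ F
      · exact Or.inl hc
      right
      by_cases hb : b ∈ F
      · refine ⟨c, Or.inr ?_, Relation.ReflTransGen.refl⟩
        have : c = b * (b⁻¹ * c) := by group
        rw [this]
        exact Set.mul_mem_mul hb h.2.2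
      · rcases ih with ih | ⟨n, hn, hr⟩
        · exact absurd ih hb
        · exact ⟨n, hn, Relation.ReflTransGen.tail hr ⟨⟨h.1, hb⟩, ⟨h.2.1, hc⟩, h.2.2⟩⟩
  intro y hy
  rcases this y (hY y hy.1) with h | h
  · exact absurd h hy.2
  · exact h

theorem exists_inf (hS : Gen S) {Y F : Set G} {x : G} (hY : ∀ y ∈ Y, Reach S Y x y)
    (hF : F.Finite) (hinf : Y.Infinite) : ∃ a, (comp S (Y \ F) a).Infinite := by
  obtain ⟨N, hN, h⟩ := finite_cover hS hY hF
  by_contra! hcon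
  apply hinf
  refine ((hN.biUnion (fun n _ => hcon n)).union hF).subset ?_
  intro y hy
  by_cases hyF : y ∈ F
  · exact Or.inr hyF
  · obtain ⟨n, hn, hr⟩ := h y ⟨hy, hyF⟩
    exact Or.inl (Set.mem_biUnion hn hr)

theorem gen_countable (hS : Gen S) : Countable G := by
  have : (⋃ n : ℕ, S ^ n) = Set.univ := by
    ext x
    simp only [Set.mem_iUnion, Set.mem_univ, iff_true]
    obtain ⟨n, hn⟩ := (reach_univ hS 1 x).reachN
    exact ⟨n, by simpa [Near] using hn.near⟩
  rw [← Set.countable_univ_iff, ← this]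
  exact Set.countable_iUnion fun n => (fin_pow hS.fin n).countable

end basics

section caseA

variable {G : Type*} [Group G] {S : Set G}

/-- Finite connected sets have enumerations with jumps at most three that
start at a given point and end next to it. -/
theorem finite_ham (hS : Gen S) (n : ℕ) : ∀ (Z : Set G) (x : G), Z.Finite → Z.ncard = n → x ∈ Z →
    (∀ z ∈ Z, Reach S Z x z) →
    ∃ L : List G, L.Nodup ∧ (∀ z, z ∈ L ↔ z ∈ Z) ∧ L.IsChain (Near S 3) ∧ L.head? = some x ∧
      ∃ y, L.getLast? = some y ∧ Near S 1 x y := by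
  induction n using Nat.strong_induction_on with
  | _ n ih =>
    intro Z x hfin hcard hx hconn
    by_cases hsing : ∀ z ∈ Z, z = x
    · refine ⟨[x], by simp, ?_, by simp, rfl, x, rfl, Near.rfl' hS⟩
      intro z
      simp only [List.mem_singleton]
      exact ⟨fun h => h ▸ hx, hsing z⟩
    · push Not at hsing
      obtain ⟨z, hz, hzx⟩ := hsing
      obtain ⟨k, hk⟩ := (hconn z hz).reachN
      obtain ⟨x', h1, h2, h3, -⟩ := last_exit hk hzx
      have hx' : x' ∈ Z \ {x} := ⟨h1, h2⟩
      set K := comp S (Z \ {x}) x' with hK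
      have hKsub : K ⊆ Z \ {x} := comp_subset hx'
      have hKZ : K ⊆ Z := fun y hy => (hKsub hy).1
      have hx'K : x' ∈ K := Relation.ReflTransGen.refl
      have hxK : x ∉ K := fun h => (hKsub h).2 rfl
      have hKfin : K.Finite := hfin.subset hKZ
      have hc1 : (Z \ K).ncard < n := by
        rw [← hcard]
        exact Set.ncard_lt_ncard ⟨Set.sdiff_subset, fun h => (h h1).2 hx'K⟩ hfin
      have hc2 : K.ncard < n := by
        rw [← hcard]
        exact Set.ncard_lt_ncard ⟨hKZ, fun h => hxK (h hx)⟩ hfin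
      obtain ⟨L1, nd1, m1, c1, hd1, y, hl1, hy⟩ := ih _ hc1 (Z \ K) x (hfin.subset Set.sdiff_subset)
        rfl ⟨hx, hxK⟩ (conn_diff hS hx hconn hx')
      obtain ⟨L2, nd2, m2, c2, hd2, y', hl2, hy'⟩ := ih _ hc2 K x' hKfin rfl hx'K (by
        intro w hw
        exact (Reach.comp (Set.Subset.refl _) hw Relation.ReflTransGen.refl).mono
          Set.inter_subset_right)
      refine ⟨L1 ++ L2.reverse, ?_, ?_, ?_, ?_, x', ?_, near_one.2 h3⟩
      · rw [List.nodup_append]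
        refine ⟨nd1, List.nodup_reverse.2 nd2, ?_⟩
        intro a ha b hb hab
        subst hab
        exact ((m1 a).1 ha).2 ((m2 a).1 (List.mem_reverse.1 hb))
      · intro w
        rw [List.mem_append, List.mem_reverse, m1, m2]
        constructor
        · rintro (h | h)
          · exact h.1
          · exact hKZ h
        · intro h
          by_cases hw : w ∈ K
          · exact Or.inr hw
          · exact Or.inl ⟨h, hw⟩
      · rw [List.isChain_append]
        refine ⟨c1, ?_, ?_⟩
        · rw [List.isChain_reverse]
          exact c2.imp fun a b h => h.symm hS
        · intro a ha b hb
          rw [hl1] at ha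
          rw [List.head?_reverse, hl2] at hb
          obtain rfl : y = a := by simpa using ha
          obtain rfl : y' = b := by simpa using hb
          exact ((hy.symm hS).trans (near_one.2 h3)).trans hy'
      · rw [List.head?_append, hd1]; rfl
      · rw [List.getLast?_append, List.getLast?_reverse, hd2]; rfl

/-- At most one infinite component after removing any finite set. -/
def OneEnded (S Y : Set G) : Prop := ∀ F : Set G, F.Finite → ∀ a b,
  (comp S (Y \ F) a).Infinite → (comp S (Y \ F) b).Infinite → Reach S (Y \ F) a b

/-- An infinite connected one-ended set with base point `x`. -/
structure Good (S Y : Set G) (x : G) : Prop where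
  inf : Y.Infinite
  mem : x ∈ Y
  conn : ∀ y ∈ Y, Reach S Y x y
  one : OneEnded S Y

theorem comp_conn (hS : Gen S) {Z : Set G} {a x : G} (hx : x ∈ comp S Z a) :
    ∀ y ∈ comp S Z a, Reach S (comp S Z a) x y := by
  intro y hy
  have h1 : Reach S Z x y := Relation.ReflTransGen.trans (Reach.symm hS hx) hy
  exact (Reach.comp (Set.Subset.refl _) h1 hx).mono Set.inter_subset_right

theorem step (hS : Gen S) (k : ℕ) : ∀ (Y : Set G) (x t : G), Good S Y x → ReachN S Y k x t →
    ∃ (Y' : Set G) (x' : G) (L : List G), Good S Y' x' ∧ Y' ⊆ Y ∧ t ∉ Y' ∧ L.Nodup ∧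
      (∀ z, z ∈ L ↔ z ∈ Y \ Y') ∧ L.IsChain (Near S 3) ∧ L.head? = some x ∧
      ∃ y, L.getLast? = some y ∧ Near S 2 y x' := by
  induction k using Nat.strong_induction_on with
  | _ k ih =>
    intro Y x t hg hk
    obtain ⟨a, ha⟩ := exists_inf hS hg.conn (Set.finite_singleton x) hg.inf
    have haY : a ∈ Y \ {x} := mem_of_comp_infinite ha
    set Y1 := comp S (Y \ {x}) a with hY1
    have hsub : Y1 ⊆ Y \ {x} := comp_subset haY
    have hsub' : Y1 ⊆ Y := fun y hy => (hsub hy).1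
    have hxY1 : x ∉ Y1 := fun h => (hsub h).2 rfl
    have hBfin : (Y \ Y1).Finite := by
      obtain ⟨N, hN, hcov⟩ := finite_cover hS hg.conn (Set.finite_singleton x)
      have : (Y \ Y1) ⊆ {x} ∪ ⋃ n ∈ {n ∈ N | (comp S (Y \ {x}) n).Finite}, comp S (Y \ {x}) n := by
        intro y hy
        by_cases hyx : y = x
        · exact Or.inl hyx
        right
        obtain ⟨n, hn, hr⟩ := hcov y ⟨hy.1, hyx⟩
        refine Set.mem_biUnion (x := n) ⟨hn, ?_⟩ hr
        by_contra hinf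
        have := hg.one {x} (Set.finite_singleton x) a n ha hinf
        exact hy.2 (Relation.ReflTransGen.trans this hr)
      refine Set.Finite.subset ?_ this
      refine (Set.finite_singleton x).union (Set.Finite.biUnion (hN.subset (Set.sep_subset _ _)) ?_)
      intro n hn
      exact hn.2
    obtain ⟨L1, nd1, m1, c1, hd1, y, hl1, hy⟩ := finite_ham hS _ (Y \ Y1) x hBfin rfl
      ⟨hg.mem, hxY1⟩ (conn_diff hS hg.mem hg.conn haY)
    have hgood : ∀ x' ∈ Y1, Good S Y1 x' := by
      intro x' hx'
      refine ⟨ha, hx', comp_conn hS hx', ?_⟩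
      intro F hF c d hc hd
      have hcm := mem_of_comp_infinite hc
      have hdm := mem_of_comp_infinite hd
      have hss : Y1 \ F ⊆ Y \ ({x} ∪ F) := by
        intro w hw
        refine ⟨hsub' hw.1, ?_⟩
        rintro (h | h)
        · exact (hsub hw.1).2 h
        · exact hw.2 h
      have hss2 : Y \ ({x} ∪ F) ⊆ Y \ {x} := fun w hw => ⟨hw.1, fun h => hw.2 (Or.inl h)⟩
      have h1 := hg.one ({x} ∪ F) ((Set.finite_singleton x).union hF) c d
        (hc.mono fun w hw => Reach.mono hss hw) (hd.mono fun w hw => Reach.mono hss hw)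
      refine (Reach.comp hss2 h1 hcm.1).mono ?_
      intro w hw
      exact ⟨hw.2, fun h => hw.1.2 (Or.inr h)⟩
    have fin : ∀ x' ∈ Y1, x⁻¹ * x' ∈ S → Near S 2 y x' := by
      intro x' _ hadj
      exact (hy.symm hS).trans (near_one.2 hadj)
    by_cases ht : t ∈ Y1
    · obtain ⟨x', h1, h2, h3, k', hk', h4⟩ := last_exit hk (hsub ht).2
      have hx' : x' ∈ Y1 := Relation.ReflTransGen.trans ht (h4.reach.symm hS)
      obtain ⟨Y', x'', L2, g2, s2, t2, nd2, m2, c2, hd2, y2, hl2, hy2⟩ :=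
        ih k' hk' Y1 x' t (hgood x' hx') (h4.comp hx')
      refine ⟨Y', x'', L1 ++ L2, g2, s2.trans hsub', t2, ?_, ?_, ?_, ?_, y2, ?_, hy2⟩
      · rw [List.nodup_append]
        refine ⟨nd1, nd2, ?_⟩
        intro u hu v hv huv
        subst huv
        exact ((m1 u).1 hu).2 ((m2 u).1 hv).1
      · intro w
        rw [List.mem_append, m1, m2]
        constructor
        · rintro (h | h)
          · exact ⟨h.1, fun hw => h.2 (s2 hw)⟩
          · exact ⟨hsub' h.1, h.2⟩
        · intro h
          by_cases hw : w ∈ Y1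
          · exact Or.inr ⟨hw, h.2⟩
          · exact Or.inl ⟨h.1, hw⟩
      · rw [List.isChain_append]
        refine ⟨c1, c2, ?_⟩
        intro u hu v hv
        rw [hl1] at hu
        rw [hd2] at hv
        obtain rfl : y = u := by simpa using hu
        obtain rfl : x' = v := by simpa using hv
        exact (fin x' hx' h3).mono hS (by norm_num)
      · rw [List.head?_append, hd1]; rfl
      · rw [List.getLast?_append, hl2]; rfl
    · have haY1 : a ∈ Y1 := Relation.ReflTransGen.refl
      obtain ⟨j, hj⟩ := (hg.conn a haY.1).reachN
      obtain ⟨x', h1, h2, h3, k', -, h4⟩ := last_exit hj haY.2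
      have hx' : x' ∈ Y1 := h4.reach.symm hS
      exact ⟨Y1, x', L1, hgood x' hx', hsub', ht, nd1, m1, c1, hd1, y, hl1, fin x' hx' h3⟩

/-- A set that can be enumerated by a one-way sequence with bounded jumps. -/
def Ray (S Z : Set G) : Prop := ∃ u : ℕ → G, Function.Injective u ∧ (∀ z, z ∈ Z ↔ ∃ n, u n = z) ∧
  ∃ N, ∀ n, Near S N (u n) (u (n + 1))

/-- A growing chain of lists has a limit sequence. -/
theorem limit_lists {α : Type*} (R : α → α → Prop) (L : ℕ → List α)
    (hpre : ∀ n, ∃ M, M ≠ [] ∧ L (n + 1) = L n ++ M)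
    (hnd : ∀ n, (L n).Nodup) (hch : ∀ n, (L n).IsChain R) :
    ∃ u : ℕ → α, Function.Injective u ∧ (∀ z, (∃ n, z ∈ L n) ↔ ∃ n, u n = z) ∧
      ∀ n, R (u n) (u (n + 1)) := by
  have hlen : ∀ n, n ≤ (L n).length := by
    intro n
    induction n with
    | zero => exact Nat.zero_le _
    | succ n ih =>
      obtain ⟨M, hM, e⟩ := hpre n
      rw [e, List.length_append]
      have := List.length_pos_iff.2 hM
      omega
  have hp : ∀ m n, m ≤ n → L m <+: L n := by
    intro m n hmn
    induction n, hmn using Nat.le_induction with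
    | base => exact ⟨[], List.append_nil _⟩
    | succ n _ ih =>
      obtain ⟨M, _, e⟩ := hpre n
      exact ih.trans ⟨M, e.symm⟩
  have hu : ∀ i, i < (L (i + 1)).length := fun i => hlen (i + 1)
  have key : ∀ m i (hi : i < (L m).length), (L (i + 1))[i]'(hu i) = (L m)[i] := by
    intro m i hi
    rcases le_total m (i + 1) with h | h
    · exact ((hp _ _ h).getElem hi).symm
    · exact (hp _ _ h).getElem (hu i)
  refine ⟨fun i => (L (i + 1))[i]'(hu i), ?_, ?_, ?_⟩
  · intro i j hij
    simp only at hij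
    have hi : i < (L (i + j + 1)).length := lt_of_lt_of_le (by omega) (hlen (i + j + 1))
    have hj : j < (L (i + j + 1)).length := lt_of_lt_of_le (by omega) (hlen (i + j + 1))
    rw [key _ i hi, key _ j hj] at hij
    exact (hnd _).getElem_inj_iff.1 hij
  · intro z
    constructor
    · rintro ⟨n, hn⟩
      obtain ⟨i, hi, e⟩ := List.getElem_of_mem hn
      exact ⟨i, by rw [← e]; exact key n i hi⟩
    · rintro ⟨n, rfl⟩
      exact ⟨n + 1, List.getElem_mem _⟩
  · intro i
    have hi : i + 1 < (L (i + 2)).length := hlen (i + 2)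
    have := List.isChain_iff_getElem.1 (hch (i + 2)) i hi
    rw [← key (i + 2) i (by omega), ← key (i + 2) (i + 1) hi] at this
    exact this

end caseA

section caseA2

variable {G : Type*} [Group G] {S : Set G}

theorem ray_of_good (hS : Gen S) {Y : Set G} {x : G} (hg : Good S Y x) : Ray S Y := by
  have hcount := gen_countable hS
  have hne : Nonempty G := ⟨1⟩
  obtain ⟨e, he⟩ := exists_surjective_nat G
  let P : Set G × G × List G → Prop := fun p => Good S p.1 p.2.1 ∧ p.1 ⊆ Y ∧ p.2.2.Nodup ∧
    (∀ z, z ∈ p.2.2 ↔ z ∈ Y \ p.1) ∧ p.2.2.IsChain (Near S 3) ∧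
    ∀ z ∈ p.2.2.getLast?, Near S 3 z p.2.1
  have hstep : ∀ (n : ℕ) (p : {p // P p}), ∃ q : {p // P p}, e n ∉ q.1.1 ∧
      ∃ M, M ≠ [] ∧ q.1.2.2 = p.1.2.2 ++ M := by
    rintro n ⟨⟨Y1, x1, L1⟩, g1, s1, nd1, m1, c1, l1⟩
    simp only at g1 s1 nd1 m1 c1 l1
    have ht : ∃ t, (e n ∈ Y1 → t = e n) ∧ t ∈ Y1 := by
      by_cases h : e n ∈ Y1
      · exact ⟨e n, fun _ => rfl, h⟩
      · exact ⟨x1, fun h' => absurd h' h, g1.mem⟩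
    obtain ⟨t, ht1, ht2⟩ := ht
    obtain ⟨k, hk⟩ := (g1.conn t ht2).reachN
    obtain ⟨Y', x', L, g2, s2, t2, nd2, m2, c2, hd2, y, hl2, hy⟩ := step hS k Y1 x1 t g1 hk
    refine ⟨⟨(Y', x', L1 ++ L), g2, s2.trans s1, ?_, ?_, ?_, ?_⟩, ?_, L, ?_, rfl⟩
    · simp only
      rw [List.nodup_append]
      refine ⟨nd1, nd2, ?_⟩
      intro u hu v hv huv
      subst huv
      exact ((m1 u).1 hu).2 ((m2 u).1 hv).1
    · intro w
      simp only
      rw [List.mem_append, m1, m2]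
      constructor
      · rintro (h | h)
        · exact ⟨h.1, fun hw => h.2 (s2 hw)⟩
        · exact ⟨s1 h.1, h.2⟩
      · intro h
        by_cases hw : w ∈ Y1
        · exact Or.inr ⟨hw, h.2⟩
        · exact Or.inl ⟨h.1, hw⟩
    · simp only
      rw [List.isChain_append]
      refine ⟨c1, c2, ?_⟩
      intro u hu v hv
      rw [hd2] at hv
      obtain rfl : x1 = v := by simpa using hv
      exact l1 u hu
    · intro z hz
      simp only [List.getLast?_append, hl2] at hz
      obtain rfl : y = z := by simpa using hz
      exact hy.mono hS (by norm_num)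
    · intro h
      have := s2 h
      rw [← ht1 this] at h
      exact t2 h
    · rintro rfl
      simp at hd2
  choose f hf1 hf2 using hstep
  let p0 : {p // P p} := ⟨(Y, x, []), hg, Set.Subset.refl _, by simp, by simp, by simp, by simp⟩
  let q : ℕ → {p // P p} := fun n => Nat.rec p0 (fun n p => f n p) n
  have hq : ∀ n, q (n + 1) = f n (q n) := fun n => rfl
  obtain ⟨u, hu1, hu2, hu3⟩ := limit_lists (Near S 3) (fun n => (q n).1.2.2)
    (fun n => by rw [hq]; exact hf2 n (q n)) (fun n => (q n).2.2.2.1)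
    (fun n => (q n).2.2.2.2.2.1)
  refine ⟨u, hu1, ?_, 3, hu3⟩
  intro z
  rw [← hu2]
  constructor
  · intro hz
    obtain ⟨n, rfl⟩ := he z
    refine ⟨n + 1, ((q (n + 1)).2.2.2.2.1 _).2 ⟨hz, ?_⟩⟩
    rw [hq]
    exact hf1 n (q n)
  · rintro ⟨n, hn⟩
    exact (((q n).2.2.2.2.1 _).1 hn).1

theorem exists_near (hS : Gen S) (a b : G) : ∃ N, Near S N a b := by
  obtain ⟨n, hn⟩ := (reach_univ hS a b).reachN
  exact ⟨n, hn.near⟩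

theorem ray_insert (hS : Gen S) {Z : Set G} (hZ : Ray S Z) {a : G} (ha : a ∉ Z) :
    Ray S (insert a Z) := by
  obtain ⟨u, hu, hr, N, hN⟩ := hZ
  obtain ⟨M, hM⟩ := exists_near hS a (u 0)
  refine ⟨fun n => Nat.casesOn n a u, ?_, ?_, N + M, ?_⟩
  · intro i j hij
    cases i with
    | zero =>
      cases j with
      | zero => rfl
      | succ j => exact absurd ((hr a).2 ⟨j, hij.symm⟩) ha
    | succ i =>
      cases j with
      | zero => exact absurd ((hr a).2 ⟨i, hij⟩) ha
      | succ j => rw [hu hij]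
  · intro z
    rw [Set.mem_insert_iff, hr]
    constructor
    · rintro (rfl | ⟨n, rfl⟩)
      · exact ⟨0, rfl⟩
      · exact ⟨n + 1, rfl⟩
    · rintro ⟨n, rfl⟩
      cases n with
      | zero => exact Or.inl rfl
      | succ n => exact Or.inr ⟨n, rfl⟩
  · intro n
    cases n with
    | zero => exact hM.mono hS (by omega)
    | succ n => exact (hN n).mono hS (by omega)

theorem ray_union (hS : Gen S) {Z B : Set G} (hZ : Ray S Z) (hB : B.Finite) :
    Ray S (B ∪ Z) := by
  induction B, hB using Set.Finite.induction_on with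
  | empty => simpa using hZ
  | insert _ _ ih =>
    rename_i a B _ _
    rw [Set.insert_union]
    by_cases h : a ∈ B ∪ Z
    · rw [Set.insert_eq_of_mem h]; exact ih
    · exact ray_insert hS ih h

/-- An enumeration of the whole group in which terms two apart are at bounded distance. -/
def Two (S : Set G) : Prop := ∃ u : ℕ → G, Function.Bijective u ∧
  ∃ N, ∀ n, Near S N (u n) (u (n + 2))

theorem two_of_ray (h : Ray S Set.univ) : Two S := by
  obtain ⟨u, hu, hr, N, hN⟩ := h
  exact ⟨u, ⟨hu, fun z => (hr z).1 trivial⟩, N + N, fun n => (hN n).trans (hN (n + 1))⟩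

theorem two_of_rays (hS : Gen S) {Y Z : Set G} (hY : Ray S Y) (hZ : Ray S Z)
    (hd : ∀ z, z ∈ Y → z ∉ Z) (hc : ∀ z, z ∈ Y ∨ z ∈ Z) : Two S := by
  obtain ⟨u, hu, hur, N, hN⟩ := hY
  obtain ⟨v, hv, hvr, M, hM⟩ := hZ
  have huv : ∀ i j, u i ≠ v j := fun i j h => hd _ ((hur _).2 ⟨i, rfl⟩) ((hvr _).2 ⟨j, h.symm⟩)
  refine ⟨fun n => if n % 2 = 0 then u (n / 2) else v (n / 2), ⟨?_, ?_⟩, N + M, ?_⟩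
  · intro i j hij
    simp only at hij
    split_ifs at hij with h1 h2 h2
    · have := hu hij; omega
    · exact absurd hij (huv _ _)
    · exact absurd hij.symm (huv _ _)
    · have := hv hij; omega
  · intro z
    rcases hc z with h | h
    · obtain ⟨n, rfl⟩ := (hur z).1 h
      refine ⟨2 * n, ?_⟩
      simp
    · obtain ⟨n, rfl⟩ := (hvr z).1 h
      refine ⟨2 * n + 1, ?_⟩
      have h1 : (2 * n + 1) % 2 = 1 := by omega
      have h2 : (2 * n + 1) / 2 = n := by omega
      simp only [h1, h2]
      simp
  · intro n
    have h1 : (n + 2) % 2 = n % 2 := by omega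
    have h2 : (n + 2) / 2 = n / 2 + 1 := by omega
    simp only [h1, h2]
    split_ifs
    · exact (hN _).mono hS (by omega)
    · exact (hM _).mono hS (by omega)

/-- Some finite set has at least three infinite complementary components. -/
def ThreeEnds (S : Set G) : Prop := ∃ F : Set G, F.Finite ∧ ∃ a b c,
  (comp S Fᶜ a).Infinite ∧ (comp S Fᶜ b).Infinite ∧ (comp S Fᶜ c).Infinite ∧
  ¬ Reach S Fᶜ a b ∧ ¬ Reach S Fᶜ a c ∧ ¬ Reach S Fᶜ b c

theorem oneEnded_comp (hS : Gen S) (h3 : ¬ ThreeEnds S) {F : Set G} (hF : F.Finite) {a b : G}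
    (ha : (comp S Fᶜ a).Infinite) (hb : (comp S Fᶜ b).Infinite) (hab : ¬ Reach S Fᶜ a b) :
    Good S (comp S Fᶜ a) a := by
  have haF := mem_of_comp_infinite ha
  have hbF := mem_of_comp_infinite hb
  refine ⟨ha, Relation.ReflTransGen.refl, comp_conn hS Relation.ReflTransGen.refl, ?_⟩
  intro F' hF' c d hc hd
  by_contra hcd
  have hcm := mem_of_comp_infinite hc
  have hdm := mem_of_comp_infinite hd
  have hsub : ∀ x ∈ Fᶜ, comp S Fᶜ x \ F' ⊆ (F ∪ F')ᶜ := by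
    intro x hx w hw h
    rcases h with h | h
    · exact comp_subset (S := S) hx hw.1 h
    · exact hw.2 h
  have hsub2 : (F ∪ F')ᶜ ⊆ Fᶜ := fun w hw h => hw (Or.inl h)
  obtain ⟨b', hb'⟩ := exists_inf hS (comp_conn hS (S := S) (Z := Fᶜ) (a := b) (x := b)
    Relation.ReflTransGen.refl) hF' hb
  have hbm := mem_of_comp_infinite hb'
  have hsep : ∀ c, Reach S Fᶜ a c → ¬ Reach S (F ∪ F')ᶜ c b' := by
    intro c hc h
    apply hab
    exact Relation.ReflTransGen.trans hc
      (Relation.ReflTransGen.trans (h.mono hsub2) (Reach.symm hS hbm.1))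
  apply h3
  refine ⟨F ∪ F', hF.union hF', c, d, b', hc.mono fun w hw => Reach.mono (hsub a haF) hw,
    hd.mono fun w hw => Reach.mono (hsub a haF) hw, hb'.mono fun w hw => Reach.mono (hsub b hbF) hw,
    ?_, hsep c hcm.1, hsep d hdm.1⟩
  intro h
  apply hcd
  refine (Reach.comp hsub2 h hcm.1).mono ?_
  intro w hw
  exact ⟨hw.2, fun h => hw.1 (Or.inr h)⟩

theorem two_of_not_three (hS : Gen S) [Infinite G] (h3 : ¬ ThreeEnds S) : Two S := by
  by_cases h : ∃ F : Set G, F.Finite ∧ ∃ a b, (comp S Fᶜ a).Infinite ∧ (comp S Fᶜ b).Infinite ∧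
      ¬ Reach S Fᶜ a b
  · obtain ⟨F, hF, a, b, ha, hb, hab⟩ := h
    have ga := oneEnded_comp hS h3 hF ha hb hab
    have gb := oneEnded_comp hS h3 hF hb ha (fun h => hab (h.symm hS))
    have hfin : (comp S Fᶜ a ∪ comp S Fᶜ b)ᶜ.Finite := by
      obtain ⟨N, hN, hcov⟩ := finite_cover hS (Y := Set.univ) (x := 1)
        (fun y _ => reach_univ hS 1 y) hF
      rw [← Set.compl_eq_univ_sdiff] at hcov
      have : (comp S Fᶜ a ∪ comp S Fᶜ b)ᶜ ⊆
          F ∪ ⋃ n ∈ {n ∈ N | (comp S Fᶜ n).Finite}, comp S Fᶜ n := by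
        intro y hy
        by_cases hyF : y ∈ F
        · exact Or.inl hyF
        right
        obtain ⟨n, hn, hr⟩ := hcov y hyF
        refine Set.mem_biUnion (x := n) ⟨hn, ?_⟩ hr
        by_contra hinf
        apply h3
        refine ⟨F, hF, a, b, n, ha, hb, hinf, hab, ?_, ?_⟩
        · intro h; exact hy (Or.inl (Relation.ReflTransGen.trans h hr))
        · intro h; exact hy (Or.inr (Relation.ReflTransGen.trans h hr))
      refine Set.Finite.subset ?_ this
      refine hF.union (Set.Finite.biUnion (hN.subset (Set.sep_subset _ _)) ?_)
      intro n hn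
      exact hn.2
    refine two_of_rays hS (ray_union hS (ray_of_good hS ga) hfin) (ray_of_good hS gb) ?_ ?_
    · rintro z (h | h) hz
      · exact h (Or.inr hz)
      · exact hab (Relation.ReflTransGen.trans h (Reach.symm hS hz))
    · intro z
      by_cases h1 : z ∈ comp S Fᶜ a
      · exact Or.inl (Or.inr h1)
      by_cases h2 : z ∈ comp S Fᶜ b
      · exact Or.inr h2
      · refine Or.inl (Or.inl ?_)
        rintro (h | h)
        · exact h1 h
        · exact h2 h
  · push Not at h
    refine two_of_ray (ray_of_good hS (x := 1) ⟨Set.infinite_univ, trivial,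
      fun y _ => reach_univ hS 1 y, ?_⟩)
    intro F hF a b ha hb
    rw [← Set.compl_eq_univ_sdiff] at ha hb ⊢
    exact h F hF a b ha hb

theorem final_of_two (hS : Gen S) (h : Two S) :
    ∃ S : Set G, IsFinGenSet S ∧ ∃ T : SimpleGraph G, T ≤ cayleyGraph S ∧ T.IsTree ∧
      ∃ d : ℕ∞, ∀ v : G, (T.neighborSet v).encard = d := by
  obtain ⟨u, hu, N, hN⟩ := h
  obtain ⟨M, hM⟩ := exists_near hS (u 0) (u 1)
  let e := Equiv.ofBijective u hu
  have he : ∀ n, e n = u n := fun n => rfl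
  have hes : ∀ n, e.symm (u n) = n := fun n => by rw [← he]; simp
  refine main_of_bij S ⟨hS.fin, hS.top⟩ (E := Unit) (u 0) (fun g => e.symm g) (N + M)
    (fun s => match s with
      | none => u 1
      | some x => u (e.symm x.1 + 2)) ?_ ?_ ?_ ?_
  · rintro (_ | ⟨a, _⟩) (_ | ⟨b, _⟩) hab
    · rfl
    · have := hu.1 hab; omega
    · have := hu.1 hab; omega
    · have := hu.1 hab
      simp only at this
      have h2 : e.symm a = e.symm b := by omega
      rw [e.symm.injective h2]
  · intro w
    obtain ⟨n, rfl⟩ := hu.2 w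
    constructor
    · rintro ⟨_ | ⟨a, _⟩, hs⟩ h0
      · have := hu.1 (hs.trans h0); omega
      · have := hu.1 (hs.trans h0); omega
    · intro h0
      rcases n with _ | _ | n
      · exact absurd rfl h0
      · exact ⟨none, rfl⟩
      · exact ⟨some (u n, ()), by simp only [hes]⟩
  · rintro (_ | ⟨a, _⟩)
    · simp [par, hes]
    · simp [par, hes]
  · rintro (_ | ⟨a, _⟩)
    · exact hM.mono hS (by omega)
    · obtain ⟨n, rfl⟩ := hu.2 a
      simp only [par, hes]
      exact (hN n).mono hS (by omega)

end caseA2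

section caseB

/-- `x` can be reached from the root set in exactly `k` steps. -/
def Lv {α : Type*} (R : α → α → Prop) (C : Set α) : ℕ → α → Prop
  | 0, x => x ∈ C
  | k + 1, x => ∃ y, Lv R C k y ∧ R y x

/-- Breadth-first search. -/
theorem level {α : Type*} (R : α → α → Prop) (C D : Set α)
    (hD : ∀ x ∈ D, ∃ r ∈ C, Relation.ReflTransGen R r x) :
    ∃ (n : α → ℕ) (p : α → α), (∀ x ∈ C, n x = 0) ∧
      (∀ x ∈ D, x ∉ C → R (p x) x ∧ n (p x) + 1 = n x) ∧
      (∀ x ∈ D, ∀ y, R x y → n y ≤ n x + 1) := by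
  classical
  have hL : ∀ x ∈ D, ∃ k, Lv R C k x := by
    intro x hx
    obtain ⟨r, hr, h⟩ := hD x hx
    clear hx
    induction h with
    | refl => exact ⟨0, hr⟩
    | tail _ h2 ih =>
      obtain ⟨k, hk⟩ := ih
      exact ⟨k + 1, _, hk, h2⟩
  have hle : ∀ k x, Lv R C k x → sInf {k | Lv R C k x} ≤ k := fun k x h => Nat.sInf_le h
  have hp : ∀ x, ∃ y, x ∈ D → x ∉ C → R y x ∧ sInf {k | Lv R C k y} + 1 = sInf {k | Lv R C k x} := by
    intro x
    by_cases hx : x ∈ D ∧ x ∉ C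
    · have hm : Lv R C (sInf {k | Lv R C k x}) x := Nat.sInf_mem (hL x hx.1)
      obtain ⟨k, hk⟩ : ∃ k, sInf {k | Lv R C k x} = k := ⟨_, rfl⟩
      rw [hk] at hm
      cases k with
      | zero => exact absurd hm hx.2
      | succ k =>
        obtain ⟨y, hy, hyx⟩ := hm
        refine ⟨y, fun _ _ => ⟨hyx, ?_⟩⟩
        have h1 := hle k y hy
        have h2 : Lv R C (sInf {k | Lv R C k y}) y :=
          Nat.sInf_mem (s := {k | Lv R C k y}) ⟨k, hy⟩
        have h3 := hle (sInf {k | Lv R C k y} + 1) x ⟨y, h2, hyx⟩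
        omega
    · exact ⟨x, fun h1 h2 => absurd ⟨h1, h2⟩ hx⟩
  choose p hp using hp
  refine ⟨fun x => sInf {k | Lv R C k x}, p, ?_, hp, ?_⟩
  · intro x hx
    exact Nat.le_zero.1 (hle 0 x hx)
  · intro x hx y hxy
    exact hle _ y ⟨x, Nat.sInf_mem (hL x hx), hxy⟩

variable {G : Type*} [Group G] {S : Set G}

/-- A bounded cell decomposition with cells indexed by a binary-branching tree. -/
structure TreeData (S : Set G) (C : Set G) (r : G) (c p L R : G → G) (n : G → ℕ) (M : ℕ) : Prop where
  rC : r ∈ C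
  cC : ∀ y, c y ∈ C
  cc : ∀ x ∈ C, c x = x
  cN : ∀ y, Near S M (c y) y
  pC : ∀ x ∈ C, x ≠ r → p x ∈ C ∧ n (p x) + 1 = n x ∧ Near S M (p x) x
  LC : ∀ x ∈ C, L x ∈ C ∧ L x ≠ r ∧ p (L x) = x
  RC : ∀ x ∈ C, R x ∈ C ∧ R x ≠ r ∧ p (R x) = x
  LR : ∀ x ∈ C, L x ≠ R x

theorem near_succ {m : ℕ} {x y : G} (h : Near S (m + 1) x y) :
    ∃ z, Near S m x z ∧ z⁻¹ * y ∈ S := by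
  unfold Near at *
  rw [pow_succ] at h
  obtain ⟨a, ha, b, hb, hab⟩ := Set.mem_mul.1 h
  refine ⟨x * a, by simpa using ha, ?_⟩
  have : (x * a)⁻¹ * y = b := by
    rw [mul_inv_rev, mul_assoc, ← hab]; group
  rwa [this]

theorem near_fin (hS : Gen S) (m : ℕ) (x : G) : {y | Near S m x y}.Finite := by
  have : {y | Near S m x y} ⊆ (fun s => x * s) '' (S ^ m) := by
    intro y hy
    exact ⟨x⁻¹ * y, hy, by simp⟩
  exact ((fin_pow hS.fin m).image _).subset this

theorem cells (hS : Gen S) (C : Set G) (m : ℕ)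
    (hdis : ∀ x ∈ C, ∀ x' ∈ C, ∀ y, Near S m x y → Near S m x' y → x = x')
    (hcov : ∀ y, ∃ x ∈ C, Near S (2 * m) x y) :
    ∃ c : G → G, (∀ y, c y ∈ C) ∧ (∀ x ∈ C, c x = x) ∧ (∀ y, Near S (2 * m) (c y) y) ∧
      (∀ y, Reach S {z | c z = c y} (c y) y) ∧ (∀ x ∈ C, ∀ y, Near S m x y → c y = x) := by
  obtain ⟨n, p, h0, hp, hn⟩ := level (Stp S Set.univ) C Set.univ (by
    intro x _
    obtain ⟨r, hr, _⟩ := hcov x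
    exact ⟨r, hr, reach_univ hS r x⟩)
  have hn0 : ∀ k x, x ∈ C → ∀ y, Near S k x y → n y ≤ k := by
    intro k x hx
    induction k with
    | zero =>
      intro y h
      have : x = y := by
        have : x⁻¹ * y = 1 := by simpa [Near] using h
        exact inv_mul_eq_one.1 this
      rw [← this, h0 x hx]
    | succ k ih =>
      intro y h
      obtain ⟨z, hz, hzy⟩ := near_succ h
      have := ih z hz
      have := hn z trivial y ⟨trivial, trivial, hzy⟩
      omega
  let c : G → G := fun y => p^[n y] y
  have c0 : ∀ y, y ∈ C → c y = y := by
    intro y h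
    simp only [c, h0 y h, Function.iterate_zero, id]
  have c1 : ∀ y, y ∉ C → c y = c (p y) := by
    intro y h
    simp only [c, ← (hp y trivial h).2, Function.iterate_succ_apply]
  have key : ∀ k y, n y = k → c y ∈ C ∧ Near S k (c y) y ∧ Reach S {z | c z = c y} (c y) y := by
    intro k
    induction k with
    | zero =>
      intro y hy
      have hyC : y ∈ C := by
        by_contra h
        have := (hp y trivial h).2
        omega
      rw [c0 y hyC]
      exact ⟨hyC, Near.rfl' hS, Relation.ReflTransGen.refl⟩
    | succ k ih =>
      intro y hy
      have hyC : y ∉ C := by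
        intro h
        have := h0 y h
        omega
      obtain ⟨h1, h2⟩ := hp y trivial hyC
      obtain ⟨i1, i2, i3⟩ := ih (p y) (by omega)
      have hc := c1 y hyC
      rw [hc]
      refine ⟨i1, i2.trans (near_one.2 h1.2.2), ?_⟩
      exact Relation.ReflTransGen.tail i3 ⟨rfl, hc, h1.2.2⟩
  refine ⟨c, fun y => (key _ y rfl).1, c0, ?_, fun y => (key _ y rfl).2.2, ?_⟩
  · intro y
    obtain ⟨x, hx, hxy⟩ := hcov y
    exact (key _ y rfl).2.1.mono hS (hn0 _ x hx y hxy)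
  · intro x hx y hxy
    exact hdis _ (key _ y rfl).1 _ hx y ((key _ y rfl).2.1.mono hS (hn0 _ x hx y hxy)) hxy

theorem three_points (hS : Gen S) (h3 : ThreeEnds S) : ∃ m, ∀ (g : G) (P : Set G), P.Finite →
    (∀ y, Near S m g y → y ∈ P) → ∃ a b c, a ∉ P ∧ b ∉ P ∧ c ∉ P ∧
      ¬ Reach S Pᶜ a b ∧ ¬ Reach S Pᶜ a c ∧ ¬ Reach S Pᶜ b c := by
  obtain ⟨F, hF, a, b, c, ha, hb, hc, hab, hac, hbc⟩ := h3
  have hm : ∃ m, ∀ y ∈ F, Near S m 1 y := by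
    choose N hN using fun y => exists_near hS 1 y
    obtain ⟨m, hm⟩ := (hF.image N).bddAbove
    exact ⟨m, fun y hy => (hN y).mono hS (hm ⟨y, hy, rfl⟩)⟩
  obtain ⟨m, hm⟩ := hm
  refine ⟨m, fun g P hP hgP => ?_⟩
  have pick : ∀ a, (comp S Fᶜ a).Infinite → ∃ a', a' ∉ P ∧ Reach S Fᶜ a (g⁻¹ * a') := by
    intro a ha
    have : (((fun x => g * x) '' comp S Fᶜ a) \ P).Infinite :=
      (ha.image (mul_right_injective g).injOn).sdiff hP
    obtain ⟨_, ⟨x, hx, rfl⟩, h2⟩ := this.nonempty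
    exact ⟨g * x, h2, by rw [inv_mul_cancel_left]; exact hx⟩
  have imp : ∀ a b, Reach S Pᶜ a b → Reach S Fᶜ (g⁻¹ * a) (g⁻¹ * b) := by
    intro a b h
    refine (h.smul g⁻¹).mono ?_
    intro x hx hxF
    apply hx
    apply hgP
    simpa [Near] using hm x hxF
  obtain ⟨a', ha', ha2⟩ := pick a ha
  obtain ⟨b', hb', hb2⟩ := pick b hb
  obtain ⟨c', hc', hc2⟩ := pick c hc
  refine ⟨a', b', c', ha', hb', hc', ?_, ?_, ?_⟩
  · exact fun h => hab ((ha2.trans (imp _ _ h)).trans (hb2.symm hS))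
  · exact fun h => hac ((ha2.trans (imp _ _ h)).trans (hc2.symm hS))
  · exact fun h => hbc ((hb2.trans (imp _ _ h)).trans (hc2.symm hS))

theorem treeData (hS : Gen S) (h3 : ThreeEnds S) :
    ∃ C r c p L R n M, TreeData S C r c p L R n M := by
  obtain ⟨m, hm⟩ := three_points hS h3
  obtain ⟨C, -, hd, hcv⟩ := Vitali.exists_disjoint_subfamily_covering_enlargement
    (fun x : G => {y | Near S m x y}) Set.univ (fun _ => 1) 2 (by norm_num)
    (fun _ _ => by norm_num) 1 (fun _ _ => le_rfl) (fun a _ => ⟨a, Near.rfl' hS⟩)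
  have hdis : ∀ x ∈ C, ∀ x' ∈ C, ∀ y, Near S m x y → Near S m x' y → x = x' := by
    intro x hx x' hx' y h1 h2
    by_contra hne
    exact Set.disjoint_left.1 (hd hx hx' hne) h1 h2
  have hcov : ∀ y, ∃ x ∈ C, Near S (2 * m) x y := by
    intro y
    obtain ⟨b, hb, ⟨z, hz1, hz2⟩, -⟩ := hcv y trivial
    refine ⟨b, hb, ?_⟩
    rw [two_mul]
    exact Near.trans hz2 (Near.symm hS hz1)
  obtain ⟨c, cC, cc, cN, cR, cB⟩ := cells hS C m hdis hcov
  obtain ⟨r, hr, -⟩ := hcov 1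
  obtain ⟨n, p, -, hp, hn⟩ := level (fun x x' => x ∈ C ∧ x' ∈ C ∧ ∃ y y', c y = x ∧ c y' = x' ∧
      y⁻¹ * y' ∈ S) {r} C (by
    intro x hx
    refine ⟨r, rfl, ?_⟩
    have h := reach_univ hS r x
    rw [← cc x hx, ← cc r hr]
    generalize x = z at h
    rw [cc r hr]
    induction h with
    | refl => rw [cc r hr]
    | tail _ h2 ih =>
      exact Relation.ReflTransGen.tail ih ⟨cC _, cC _, _, _, rfl, rfl, h2.2.2⟩)
  have hpx : ∀ x ∈ C, x ≠ r → Reach S {z | c z = p x ∨ c z = x} (p x) x := by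
    intro x hx hxr
    obtain ⟨⟨-, -, y, y', h1, h2, h3⟩, -⟩ := hp x hx hxr
    have i1 := cR y
    have i2 := cR y'
    rw [h1] at i1
    rw [h2] at i2
    have j1 : Reach S {z | c z = p x ∨ c z = x} (p x) y := i1.mono (fun z hz => Or.inl hz)
    have j2 : Reach S {z | c z = p x ∨ c z = x} x y' := i2.mono (fun z hz => Or.inr hz)
    exact (Relation.ReflTransGen.tail j1 ⟨Or.inl h1, Or.inr h2, h3⟩).trans (j2.symm hS)
  have hpN : ∀ x ∈ C, x ≠ r → Near S (2 * m + 1 + 2 * m) (p x) x := by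
    intro x hx hxr
    obtain ⟨⟨-, -, y, y', h1, h2, h3⟩, -⟩ := hp x hx hxr
    have i1 := cN y
    have i2 := cN y'
    rw [h1] at i1
    rw [h2] at i2
    exact (i1.trans (near_one.2 h3)).trans (i2.symm hS)
  have hch : ∀ x, ∃ l l', x ∈ C → (l ∈ C ∧ l ≠ r ∧ p l = x) ∧ (l' ∈ C ∧ l' ≠ r ∧ p l' = x) ∧
      l ≠ l' := by
    intro x
    by_cases hx : x ∈ C
    swap
    · exact ⟨x, x, fun h => absurd h hx⟩
    set P : Set G := {z | c z = x} with hP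
    have hPf : P.Finite := by
      refine (near_fin hS (2 * m) x).subset ?_
      intro z hz
      have := cN z
      rw [show c z = x from hz] at this
      exact this
    have hQ : ∀ k t0, n t0 = k → t0 ∈ C → t0 ≠ x →
        ∃ t, (t = r ∨ t ∈ C ∧ t ≠ r ∧ p t = x) ∧ Reach S Pᶜ t t0 := by
      intro k
      induction k with
      | zero =>
        intro t0 h0 hC hx0
        refine ⟨t0, Or.inl ?_, Relation.ReflTransGen.refl⟩
        by_contra h
        have := (hp t0 hC h).2
        omega
      | succ k ih =>
        intro t0 h0 hC hx0
        by_cases h : t0 = r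
        · exact ⟨t0, Or.inl h, Relation.ReflTransGen.refl⟩
        by_cases h' : p t0 = x
        · exact ⟨t0, Or.inr ⟨hC, h, h'⟩, Relation.ReflTransGen.refl⟩
        have h1 := hp t0 hC h
        obtain ⟨t, ht, htr⟩ := ih (p t0) (by omega) h1.1.1 h'
        refine ⟨t, ht, htr.trans ((hpx t0 hC h).mono ?_)⟩
        rintro z (hz | hz) hzP
        · exact h' (hz.symm.trans hzP)
        · exact hx0 (hz.symm.trans hzP)
    have hQ' : ∀ y, y ∉ P → ∃ t, (t = r ∨ t ∈ C ∧ t ≠ r ∧ p t = x) ∧ Reach S Pᶜ t y := by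
      intro y hy
      obtain ⟨t, ht, htr⟩ := hQ _ (c y) rfl (cC y) hy
      refine ⟨t, ht, htr.trans ((cR y).mono ?_)⟩
      intro z hz hzP
      exact hy (Eq.trans (Eq.symm hz) hzP)
    obtain ⟨a, b, d, ha, hb, hd, hab, had, hbd⟩ := hm x P hPf (fun y hy => cB x hx y hy)
    obtain ⟨ta, ha1, ha2⟩ := hQ' a ha
    obtain ⟨tb, hb1, hb2⟩ := hQ' b hb
    obtain ⟨td, hd1, hd2⟩ := hQ' d hd
    have n1 : ta ≠ tb := by
      rintro rfl
      exact hab ((ha2.symm hS).trans hb2)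
    have n2 : ta ≠ td := by
      rintro rfl
      exact had ((ha2.symm hS).trans hd2)
    have n3 : tb ≠ td := by
      rintro rfl
      exact hbd ((hb2.symm hS).trans hd2)
    rcases ha1 with rfl | ha1
    · exact ⟨tb, td, fun _ => ⟨hb1.resolve_left n1.symm, hd1.resolve_left n2.symm, n3⟩⟩
    · rcases hb1 with rfl | hb1
      · exact ⟨ta, td, fun _ => ⟨ha1, hd1.resolve_left n3.symm, n2⟩⟩
      · exact ⟨ta, tb, fun _ => ⟨ha1, hb1, n1⟩⟩
  choose L R hLR using hch
  refine ⟨C, r, c, p, L, R, n, 2 * m + 1 + 2 * m, hr, cC, cc, fun y => (cN y).mono hS (by omega),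
    fun x hx hxr => ⟨(hp x hx hxr).1.1, (hp x hx hxr).2, hpN x hx hxr⟩,
    fun x hx => (hLR x hx).1, fun x hx => (hLR x hx).2.1, fun x hx => (hLR x hx).2.2⟩

theorem final_of_treeData (hS : Gen S) {C : Set G} {r : G} {c p L R : G → G} {n : G → ℕ} {M : ℕ}
    (h : TreeData S C r c p L R n M) :
    ∃ S : Set G, IsFinGenSet S ∧ ∃ T : SimpleGraph G, T ≤ cayleyGraph S ∧ T.IsTree ∧
      ∃ d : ℕ∞, ∀ v : G, (T.neighborSet v).encard = d := by
  classical
  let nd : G → ℕ → G := fun q i => R^[i] (L q)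
  have nd0 : ∀ q, nd q 0 = L q := fun q => rfl
  have nd1 : ∀ q i, nd q (i + 1) = R (nd q i) := fun q i => Function.iterate_succ_apply' R i (L q)
  have hnd : ∀ q ∈ C, ∀ i, nd q i ∈ C ∧ nd q i ≠ r ∧ n (nd q i) = n q + 1 + i ∧
      Near S ((i + 1) * M) q (nd q i) := by
    intro q hq i
    induction i with
    | zero =>
      obtain ⟨h1, h2, h3⟩ := h.LC q hq
      obtain ⟨-, h4, h5⟩ := h.pC _ h1 h2
      rw [h3] at h4 h5
      rw [nd0]
      exact ⟨h1, h2, by omega, by simpa using h5⟩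
    | succ i ih =>
      obtain ⟨i1, i2, i3, i4⟩ := ih
      obtain ⟨h1, h2, h3⟩ := h.RC _ i1
      obtain ⟨-, h4, h5⟩ := h.pC _ h1 h2
      rw [h3] at h4 h5
      rw [nd1]
      refine ⟨h1, h2, by omega, ?_⟩
      have := i4.trans h5
      rwa [show (i + 1 + 1) * M = (i + 1) * M + M by ring]
  have hinj : ∀ i j, ∀ q ∈ C, ∀ q' ∈ C, nd q i = nd q' j → q = q' ∧ i = j := by
    have hne : ∀ q ∈ C, ∀ z ∈ C, L q ≠ R z := by
      intro q hq z hz he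
      have h1 := (h.LC q hq).2.2
      rw [he, (h.RC z hz).2.2] at h1
      subst h1
      exact h.LR z hq he
    intro i
    induction i with
    | zero =>
      intro j q hq q' hq' he
      cases j with
      | zero =>
        rw [nd0, nd0] at he
        have h1 := (h.LC q hq).2.2
        rw [he, (h.LC q' hq').2.2] at h1
        exact ⟨h1.symm, rfl⟩
      | succ j =>
        rw [nd0, nd1] at he
        exact absurd he (hne q hq _ (hnd q' hq' j).1)
    | succ i ih =>
      intro j q hq q' hq' he
      cases j with
      | zero =>
        rw [nd0, nd1] at he
        exact absurd he.symm (hne q' hq' _ (hnd q hq i).1)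
      | succ j =>
        rw [nd1, nd1] at he
        have h1 := (h.RC _ (hnd q hq i).1).2.2
        rw [he, (h.RC _ (hnd q' hq' j).1).2.2] at h1
        obtain ⟨e1, e2⟩ := ih j q hq q' hq' h1.symm
        exact ⟨e1, by omega⟩
  let ρ : G → ℕ := fun y => 2 * n (c y) + if y ∈ C then 0 else 1
  have ρC : ∀ y ∈ C, ρ y = 2 * n y := by
    intro y hy
    simp only [ρ, hy, if_true, h.cc y hy, add_zero]
  have ρN : ∀ y, y ∉ C → ρ y = 2 * n (c y) + 1 := by
    intro y hy
    simp only [ρ, hy, if_false]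
  have ρle : ∀ y, ρ y ≤ 2 * n (c y) + 1 := by
    intro y
    simp only [ρ]
    split_ifs <;> omega
  let P : G → G := fun w => if w ∈ C then p w else c w
  have hP : ∀ w, w ≠ r → Near S M (P w) w ∧ ρ (P w) < ρ w := by
    intro w hw
    by_cases hC : w ∈ C
    · obtain ⟨h1, h2, h3⟩ := h.pC w hC hw
      simp only [P, hC, if_true]
      refine ⟨h3, ?_⟩
      rw [ρC _ h1, ρC _ hC]
      omega
    · simp only [P, hC, if_false]
      refine ⟨h.cN w, ?_⟩
      rw [ρC _ (h.cC w), ρN _ hC]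
      omega
  let E := ↥(S ^ M)
  have hE : Finite E := (fin_pow hS.fin M).to_subtype
  obtain ⟨K, idx, hidx, hK⟩ : ∃ (K : ℕ) (idx : E × E → ℕ), Function.Injective idx ∧
      ∀ e, idx e < K := by
    obtain ⟨K, ⟨e⟩⟩ := Finite.exists_equiv_fin (E × E)
    exact ⟨K, fun x => e x, fun a b hab => e.injective (Fin.ext hab), fun x => (e x).2⟩
  let f : Option (G × E) → {w : G // w ≠ r} := fun s => match s with
    | none => ⟨nd r K, (hnd r h.rC K).2.1⟩
    | some x => ⟨nd (c x.1) (idx (⟨(c x.1)⁻¹ * x.1, h.cN x.1⟩, x.2)), (hnd _ (h.cC _) _).2.1⟩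
  let g : {w : G // w ≠ r} → Option (G × E) := fun w =>
    some (P w.1, ⟨(P w.1)⁻¹ * w.1, (hP w.1 w.2).1⟩)
  have hf : Function.Injective f := by
    rintro (_ | ⟨a, e⟩) (_ | ⟨b, e'⟩) hab
    · rfl
    · have := (hinj _ _ _ h.rC _ (h.cC _) (Subtype.ext_iff.1 hab)).2
      have := hK (⟨(c b)⁻¹ * b, h.cN b⟩, e')
      simp only at *
      omega
    · have := (hinj _ _ _ (h.cC _) _ h.rC (Subtype.ext_iff.1 hab)).2
      have := hK (⟨(c a)⁻¹ * a, h.cN a⟩, e)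
      simp only at *
      omega
    · obtain ⟨h1, h2⟩ := hinj _ _ _ (h.cC _) _ (h.cC _) (Subtype.ext_iff.1 hab)
      have h3 := hidx h2
      simp only [Prod.mk.injEq] at h1 h3
      obtain ⟨h3, rfl⟩ := h3
      replace h3 : (c a)⁻¹ * a = (c b)⁻¹ * b := congrArg Subtype.val h3
      rw [h1] at h3
      rw [mul_left_cancel h3]
  have hg : Function.Injective g := by
    intro w w' hw
    simp only [g, Option.some.injEq, Prod.mk.injEq] at hw
    obtain ⟨h1, h2⟩ := hw
    replace h2 : (P w.1)⁻¹ * w.1 = (P w'.1)⁻¹ * w'.1 := congrArg Subtype.val h2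
    rw [h1] at h2
    exact Subtype.ext (mul_left_cancel h2)
  obtain ⟨b, hb, hbR⟩ := Function.Embedding.schroeder_bernstein_of_rel hf hg
    (fun s w => ρ (par r s) < ρ w.1 ∧ Near S (M + (K + 1) * M) (par r s) w.1)
    (by
      rintro (_ | ⟨v, e⟩)
      · obtain ⟨h1, h2, h3, h4⟩ := hnd r h.rC K
        refine ⟨?_, h4.mono hS (by omega)⟩
        change ρ r < ρ (nd r K)
        rw [ρC _ h.rC, ρC _ h1]
        omega
      · have hk := hK (⟨(c v)⁻¹ * v, h.cN v⟩, e)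
        obtain ⟨h1, h2, h3, h4⟩ := hnd (c v) (h.cC v) (idx (⟨(c v)⁻¹ * v, h.cN v⟩, e))
        refine ⟨?_, ?_⟩
        · change ρ v < ρ (nd (c v) (idx (⟨(c v)⁻¹ * v, h.cN v⟩, e)))
          rw [ρC _ h1]
          have := ρle v
          omega
        · refine (((h.cN v).symm hS).trans h4).mono hS ?_
          gcongr)
    (by
      rintro ⟨w, hw⟩
      exact ⟨(hP w hw).2, (hP w hw).1.mono hS (by omega)⟩)
  refine main_of_bij S ⟨hS.fin, hS.top⟩ (E := E) r ρ (M + (K + 1) * M) (fun s => (b s).1) ?_ ?_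
    (fun s => (hbR s).1) (fun s => (hbR s).2)
  · intro s t hst
    exact hb.1 (Subtype.ext hst)
  · intro w
    constructor
    · rintro ⟨s, rfl⟩
      exact (b s).2
    · intro hw
      obtain ⟨s, hs⟩ := hb.2 ⟨w, hw⟩
      exact ⟨s, by simp [hs]⟩

theorem final (G : Type*) [Group G] [Group.FG G] [Infinite G] :
    ∃ S : Set G, IsFinGenSet S ∧ ∃ T : SimpleGraph G, T ≤ cayleyGraph S ∧ T.IsTree ∧
      ∃ d : ℕ∞, ∀ v : G, (T.neighborSet v).encard = d := by
  obtain ⟨S0, hS0, hfin⟩ := Group.fg_iff.1 (inferInstance : Group.FG G)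
  have hS : Gen (S0 ∪ S0⁻¹ ∪ {1}) := by
    refine ⟨(hfin.union hfin.inv).union (Set.finite_singleton 1), by simp, ?_, ?_⟩
    · rintro s ((hs | hs) | hs)
      · exact Or.inl (Or.inr (by simpa using hs))
      · exact Or.inl (Or.inl hs)
      · exact Or.inr (by simpa using hs)
    · rw [eq_top_iff, ← hS0]
      exact Subgroup.closure_mono (fun x hx => Or.inl (Or.inl hx))
  by_cases h3 : ThreeEnds (S0 ∪ S0⁻¹ ∪ {1})
  · obtain ⟨C, r, c, p, L, R, n, M, h⟩ := treeData hS h3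
    exact final_of_treeData hS h
  · exact final_of_two hS (two_of_not_three hS h3)

end caseB

end RST

/-- Every finitely generated infinite group has a Cayley graph admitting a regular
spanning tree. -/
theorem cayley_graph_with_regular_spanning_tree
    (G : Type*) [Group G] [Group.FG G] [Infinite G] :
    ∃ S : Set G, IsFinGenSet S ∧ ∃ T : SimpleGraph G, T ≤ cayleyGraph S ∧ T.IsTree ∧
      ∃ d : ℕ∞, ∀ v : G, (T.neighborSet v).encard = d := by
  exact RST.final G
end

section
/- Let G be a finitely generated group and let k > 2 be an integer. Then G is non-amenable if and only if G has a Cayley graph (with respect to some finite generating set) admitting a spanning tree that is regular of degree k. -/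
open scoped Pointwise

/-- `nbhd Γ k S` is the union of `S` with all vertices within path-distance `k` of `S`. -/
def nbhd {V : Type*} (Γ : SimpleGraph V) (k : ℕ) (S : Finset V) : Set V :=
  {v : V | ∃ s ∈ S, Γ.Reachable s v ∧ Γ.dist s v ≤ k}

/-- A graph is non-amenable if there are `C > 1` and `k ∈ ℕ` with `|N_k(S)| ≥ C·|S|`
for every finite vertex set `S`. -/
def GraphNonamenable {V : Type*} (Γ : SimpleGraph V) : Prop :=
  ∃ C : ℝ, 1 < C ∧ ∃ k : ℕ, ∀ S : Finset V,
    (nbhd Γ k S).Infinite ∨ C * S.card ≤ ((nbhd Γ k S).ncard : ℝ)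

/-- A finitely generated group is non-amenable if its Cayley graphs (w.r.t. finite
generating sets) are non-amenable. -/
def GroupNonamenable (G : Type*) [Group G] : Prop :=
  ∀ S : Set G, IsFinGenSet S → GraphNonamenable (cayleyGraph S)


namespace RST
open SimpleGraph

/-- A rooted parent function of a tree. -/
lemma exists_parent {V : Type*} {T : SimpleGraph V} (hT : T.IsTree) (r : V) :
    ∃ p : V → V, p r = r ∧ (∀ v, v ≠ r → T.Adj v (p v) ∧ T.dist r v = T.dist r (p v) + 1) ∧
      ∀ x y, T.Adj x y → (x ≠ r ∧ p x = y) ∨ (y ≠ r ∧ p y = x) := by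
  classical
  choose P hP hU using fun v => hT.existsUnique_path r v
  have key : ∀ v w, T.Adj v w → T.dist r v = T.dist r w + 1 → v ≠ r ∧ (P v).penultimate = w := by
    intro v w hvw hd
    constructor
    · rintro rfl
      simp at hd
    · obtain ⟨q, hq⟩ := hT.1.exists_walk_length_eq_dist r w
      have h1 : (q.concat hvw.symm).length = T.dist r v := by
        rw [Walk.length_concat, hq, hd]
      have h2 := Walk.isPath_of_length_eq_dist _ h1
      have h3 := hU v _ h2
      rw [← h3]
      simp
  have hp : ∀ v, v ≠ r → T.Adj v (P v).penultimate ∧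
      T.dist r v = T.dist r (P v).penultimate + 1 := by
    intro v hv
    obtain ⟨q, hq⟩ := hT.1.exists_walk_length_eq_dist r v
    have h3 := hU v _ (Walk.isPath_of_length_eq_dist _ hq)
    have hnil : ¬ q.Nil := fun h => hv h.eq.symm
    have hadj := q.adj_penultimate hnil
    rw [← h3]
    refine ⟨hadj.symm, ?_⟩
    rcases hT.dist_eq_dist_add_one_of_adj r hadj with h | h
    · exfalso
      have h4 := dist_le q.dropLast
      have h5 : q.dropLast.length + 1 = q.length := by
        have := Walk.not_nil_iff_lt_length.1 hnil
        simp; omega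
      omega
    · exact h
  refine ⟨fun v => if v = r then r else (P v).penultimate, by simp, ?_, ?_⟩
  · intro v hv
    simpa [hv] using hp v hv
  · intro x y hxy
    rcases hT.dist_eq_dist_add_one_of_adj r hxy with h | h
    · left
      have := key x y hxy h
      simpa [this.1] using this.2
    · right
      have := key y x hxy.symm h
      simpa [this.1] using this.2

/-- Functional graphs, with edges at periodic points removed, are acyclic. -/
lemma acyclic_of_fun {V : Type*} (F : SimpleGraph V) (p : V → V)
    (h : ∀ x y, F.Adj x y → (x ∉ Function.periodicPts p ∧ p x = y) ∨
      (y ∉ Function.periodicPts p ∧ p y = x)) : F.IsAcyclic := by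
  classical
  intro v c hc
  have : Nonempty V := ⟨v⟩
  have hsrc : ∀ e ∈ c.edges.toFinset, ∃ x ∈ c.support.tail.toFinset,
      x ∉ Function.periodicPts p ∧ s(x, p x) = e := by
    have hmem : ∀ z ∈ c.support, z ∈ c.support.tail.toFinset := by
      intro z hz
      rw [List.mem_toFinset]
      rcases (Walk.mem_support_iff c).1 hz with rfl | h
      · exact Walk.end_mem_tail_support hc.not_nil
      · exact h
    intro e he
    rw [List.mem_toFinset] at he
    induction e using Sym2.ind with
    | _ x y =>
      have hx := Walk.fst_mem_support_of_mem_edges c he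
      have hy := Walk.snd_mem_support_of_mem_edges c he
      rcases h x y (Walk.adj_of_mem_edges c he) with h1 | h1
      · exact ⟨x, hmem x hx, h1.1, by rw [h1.2]⟩
      · exact ⟨y, hmem y hy, h1.1, by rw [h1.2]; exact Sym2.eq_swap⟩
  choose! src hs1 hs2 hs3 using hsrc
  have hcard : c.support.tail.toFinset.card ≤ c.edges.toFinset.card := by
    rw [List.toFinset_card_of_nodup hc.support_nodup,
      List.toFinset_card_of_nodup hc.edges_nodup]
    simp
  have hinj : Set.InjOn src (c.edges.toFinset : Set (Sym2 V)) := by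
    intro a ha b hb hab
    rw [← hs3 a ha, ← hs3 b hb, hab]
  have hsurj := Finset.surjOn_of_injOn_of_card_le src hs1 hinj hcard
  have hstep : ∀ x ∈ c.support.tail.toFinset, x ∉ Function.periodicPts p ∧
      p x ∈ c.support.tail.toFinset := by
    intro x hx
    obtain ⟨e, he, rfl⟩ := hsurj hx
    refine ⟨hs2 e he, ?_⟩
    have h3 := hs3 e he
    have he' : e ∈ c.edges := by simpa using he
    rw [← h3] at he'
    have := Walk.snd_mem_support_of_mem_edges c he'
    rw [List.mem_toFinset]
    rcases (Walk.mem_support_iff c).1 this with h | h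
    · rw [h]; exact Walk.end_mem_tail_support hc.not_nil
    · exact h
  have hv : v ∈ c.support.tail.toFinset := by
    rw [List.mem_toFinset]; exact Walk.end_mem_tail_support hc.not_nil
  have hit : ∀ n, p^[n] v ∈ c.support.tail.toFinset := by
    intro n
    induction n with
    | zero => exact hv
    | succ n ih => rw [Function.iterate_succ_apply']; exact (hstep _ ih).2
  obtain ⟨m, n, hmn, he⟩ : ∃ m n, m < n ∧ p^[m] v = p^[n] v := by
    obtain ⟨m, n, hne, he⟩ := Finite.exists_ne_map_eq_of_infinite
      (fun n : ℕ => (⟨p^[n] v, hit n⟩ : c.support.tail.toFinset))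
    have he : p^[m] v = p^[n] v := by simpa using he
    rcases lt_or_gt_of_ne hne with h | h
    · exact ⟨m, n, h, he⟩
    · exact ⟨n, m, h, he.symm⟩
  refine (hstep _ (hit m)).1 (Function.mk_mem_periodicPts (n := n - m) (by omega) ?_)
  show p^[n - m] (p^[m] v) = p^[m] v
  rw [← Function.iterate_add_apply, he]
  congr 2
  omega

lemma exists_index {V : Type*} (r : V) (p : V → V)
    (hfin : ∀ v, {x | x ≠ r ∧ p x = v}.Finite) :
    ∃ (idx : V → ℕ) (ch : V → ℕ → V),
      (∀ x, x ≠ r → idx x < {y | y ≠ r ∧ p y = p x}.ncard ∧ ch (p x) (idx x) = x) ∧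
      (∀ v j, j < {y | y ≠ r ∧ p y = v}.ncard →
        ch v j ≠ r ∧ p (ch v j) = v ∧ idx (ch v j) = j) := by
  classical
  have e : ∀ v, {x | x ≠ r ∧ p x = v} ≃ Fin ({x | x ≠ r ∧ p x = v}.ncard) := fun v =>
    haveI := (hfin v).to_subtype
    Finite.equivFinOfCardEq rfl
  let idx : V → ℕ := fun x => if h : x ≠ r then (e (p x) ⟨x, h, rfl⟩ : ℕ) else 0
  let ch : V → ℕ → V := fun v j =>
    if h : j < {x | x ≠ r ∧ p x = v}.ncard then ((e v).symm ⟨j, h⟩ : V) else r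
  have hidx : ∀ v (c : {x | x ≠ r ∧ p x = v}), idx c = e v c := by
    rintro v ⟨x, hx, rfl⟩
    simp [idx, hx]
  refine ⟨idx, ch, ?_, ?_⟩
  · intro x hx
    have h1 := hidx (p x) ⟨x, hx, rfl⟩
    have h2 : idx x < {y | y ≠ r ∧ p y = p x}.ncard := by
      rw [show idx x = _ from h1]; exact Fin.is_lt _
    refine ⟨h2, ?_⟩
    simp only [ch, h2, dif_pos]
    have : (⟨idx x, h2⟩ : Fin _) = e (p x) ⟨x, hx, rfl⟩ := Fin.ext h1
    rw [this, Equiv.symm_apply_apply]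
  · intro v j hj
    have hc : ch v j = ((e v).symm ⟨j, hj⟩ : V) := by simp only [ch, hj, dif_pos]
    have h1 := ((e v).symm ⟨j, hj⟩).2
    rw [hc]
    refine ⟨h1.1, h1.2, ?_⟩
    rw [hidx, Equiv.apply_symm_apply]

/-- The number of children kept at each vertex, defined by recursion on the distance. -/
def keepAux {V : Type*} (p : V → V) (k a b : ℕ) (P : V → ℕ → Prop)
    [∀ x m, Decidable (P x m)] : ℕ → V → ℕ
  | 0, _ => k
  | m + 1, x => if P x (keepAux p k a b P m (p x)) then a else b

lemma exists_keep {V : Type*} (r : V) (p : V → V) (d : V → ℕ) (hr : d r = 0)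
    (hd : ∀ v, v ≠ r → d v = d (p v) + 1) (k a b : ℕ) (P : V → ℕ → Prop) :
    ∃ keep : V → ℕ, keep r = k ∧ (∀ x, x ≠ r → P x (keep (p x)) → keep x = a) ∧
      (∀ x, x ≠ r → ¬ P x (keep (p x)) → keep x = b) := by
  classical
  refine ⟨fun x => keepAux p k a b P (d x) x, ?_, ?_, ?_⟩
  · simp [hr, keepAux]
  · intro x hx h
    simp only [hd x hx, keepAux]
    exact if_pos h
  · intro x hx h
    simp only [hd x hx, keepAux]
    exact if_neg h

lemma regularize {V : Type*} {T : SimpleGraph V} (hT : T.IsTree) (k : ℕ) (hk : 2 < k)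
    (hfin : ∀ v, (T.neighborSet v).Finite) (hdeg : ∀ v, k ≤ (T.neighborSet v).ncard) :
    ∃ T' : SimpleGraph V, T'.IsTree ∧ (∀ v, (T'.neighborSet v).encard = (k : ℕ∞)) ∧
      ∀ x y, T'.Adj x y → T.Adj x y ∨ ∃ z, T.Adj x z ∧ T.Adj z y := by
  classical
  obtain ⟨r⟩ := hT.1.nonempty
  obtain ⟨p, hpr, hp, hadj⟩ := exists_parent hT r
  have hsub : ∀ v, {x | x ≠ r ∧ p x = v} ⊆ T.neighborSet v := by
    rintro v x ⟨hx, rfl⟩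
    exact (hp x hx).1.symm
  have hCfin : ∀ v, {x | x ≠ r ∧ p x = v}.Finite := fun v => (hfin v).subset (hsub v)
  obtain ⟨idx, ch, hidx, hch⟩ := exists_index r p hCfin
  set n : V → ℕ := fun v => {x | x ≠ r ∧ p x = v}.ncard with hn
  have hn1 : ∀ v, k - 1 ≤ n v := by
    intro v
    have h1 : T.neighborSet v ⊆ insert (p v) {x | x ≠ r ∧ p x = v} := by
      intro x hx
      rcases hadj v x hx with h | h
      · left; exact h.2.symm
      · right; exact h
    have h2 := Set.ncard_le_ncard h1 ((hCfin v).insert _)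
    have h3 := Set.ncard_insert_le (p v) {x | x ≠ r ∧ p x = v}
    have h4 := hdeg v
    simp only [hn]; omega
  have hn2 : k ≤ n r := by
    have h1 : T.neighborSet r ⊆ {x | x ≠ r ∧ p x = r} := by
      intro x hx
      rcases hadj r x hx with h | h
      · exact absurd rfl h.1
      · exact h
    exact (hdeg r).trans (Set.ncard_le_ncard h1 (hCfin r))
  -- the number of own children kept
  obtain ⟨keep, keep_r, keep_c, keep_nc⟩ := exists_keep r p (fun x => T.dist r x) (by simp)
    (fun v hv => (hp v hv).2) k (k - 2) (k - 1) (fun x m => idx x + 1 < n (p x) ∧ m ≤ idx x + 1)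
  have keep_or : ∀ x, x ≠ r → keep x = k - 2 ∨ keep x = k - 1 := by
    intro x hx
    by_cases h : idx x + 1 < n (p x) ∧ keep (p x) ≤ idx x + 1
    · exact Or.inl (keep_c x hx h)
    · exact Or.inr (keep_nc x hx h)
  have keep_pos : ∀ x, 1 ≤ keep x := by
    intro x
    by_cases hx : x = r
    · rw [hx, keep_r]; omega
    · rcases keep_or x hx with h | h <;> omega
  have keep_le : ∀ x, keep x ≤ n x := by
    intro x
    by_cases hx : x = r
    · rw [hx, keep_r]; exact hn2
    · have := hn1 x
      rcases keep_or x hx with h | h <;> omega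
  let q : V → V := fun x =>
    if x = r then r else if idx x < keep (p x) then p x else ch (p x) (idx x - 1)
  have q_r : q r = r := by simp [q]
  have q1 : ∀ x, x ≠ r → idx x < keep (p x) → q x = p x := by
    intro x h1 h2; simp [q, h1, h2]
  have q2 : ∀ x, x ≠ r → ¬ idx x < keep (p x) → q x = ch (p x) (idx x - 1) := by
    intro x h1 h2; simp [q, h1, h2]
  -- properties of a vertex moved to its sibling
  have q2' : ∀ x, x ≠ r → ¬ idx x < keep (p x) →
      q x ≠ r ∧ p (q x) = p x ∧ idx (q x) + 1 = idx x := by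
    intro x h1 h2
    have h3 := (hidx x h1).1
    have h4 := keep_pos (p x)
    obtain ⟨h5, h6, h7⟩ := hch (p x) (idx x - 1) (by omega)
    rw [q2 x h1 h2]
    exact ⟨h5, h6, by omega⟩
  clear_value q
  let rank : V → ℕ ×ₗ ℕ := fun x => toLex (T.dist r x, idx x)
  have hrank : ∀ x, x ≠ r → rank (q x) < rank x := by
    intro x hx
    by_cases h : idx x < keep (p x)
    · rw [q1 x hx h]
      refine Prod.Lex.toLex_lt_toLex.2 (Or.inl ?_)
      have := (hp x hx).2
      simp only; omega
    · obtain ⟨h1, h2, h3⟩ := q2' x hx h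
      refine Prod.Lex.toLex_lt_toLex.2 (Or.inr ?_)
      have h4 := (hp x hx).2
      have h5 := (hp _ h1).2
      rw [h2] at h5
      refine ⟨?_, ?_⟩ <;> simp only <;> omega
  have hper : ∀ x, x ≠ r → x ∉ Function.periodicPts q := by
    intro x hx hper
    obtain ⟨m, hm, hm'⟩ := hper
    have hit : ∀ m, q^[m] r = r := fun m => Function.iterate_fixed q_r m
    have key : ∀ m y, y ≠ r → q^[m + 1] y = r ∨ rank (q^[m + 1] y) < rank y := by
      intro m
      induction m with
      | zero => intro y hy; right; exact hrank y hy
      | succ m ih =>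
        intro y hy
        rw [Function.iterate_succ_apply]
        by_cases hqy : q y = r
        · left; rw [hqy]; exact hit _
        · rcases ih (q y) hqy with h | h
          · left; exact h
          · right; exact h.trans (hrank y hy)
    obtain ⟨m, rfl⟩ : ∃ l, m = l + 1 := ⟨m - 1, by omega⟩
    have hm'' : q^[m + 1] x = x := hm'
    rcases key m x hx with h | h
    · exact hx (hm''.symm.trans h)
    · rw [hm''] at h; exact lt_irrefl _ h
  have hq_ne : ∀ x, x ≠ r → q x ≠ x := by
    intro x hx h
    have := hrank x hx
    rw [h] at this
    exact lt_irrefl _ this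
  let T' : SimpleGraph V := SimpleGraph.fromRel (fun x y => x ≠ r ∧ q x = y)
  have hT' : ∀ x y, T'.Adj x y ↔ (x ≠ r ∧ q x = y) ∨ (y ≠ r ∧ q y = x) := by
    intro x y
    simp only [T', SimpleGraph.fromRel_adj]
    constructor
    · exact fun h => h.2
    · intro h
      refine ⟨?_, h⟩
      rintro rfl
      rcases h with h | h <;> exact hq_ne _ h.1 h.2
  refine ⟨T', ⟨?_, ?_⟩, ?_, ?_⟩
  · have hreach : ∀ x, T'.Reachable x r := by
      intro x
      induction x using (InvImage.wf rank (wellFounded_lt)).induction with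
      | _ x ih =>
        by_cases hx : x = r
        · rw [hx]
        · exact ((hT' x (q x)).2 (Or.inl ⟨hx, rfl⟩)).reachable.trans (ih _ (hrank x hx))
    exact { preconnected := fun x y => (hreach x).trans (hreach y).symm, nonempty := ⟨r⟩ }
  · refine acyclic_of_fun T' q ?_
    intro x y hxy
    rcases (hT' x y).1 hxy with h | h
    · exact Or.inl ⟨hper x h.1, h.2⟩
    · exact Or.inr ⟨hper y h.1, h.2⟩
  · -- degrees
    have hown : ∀ v, (ch v '' Set.Iio (keep v)).encard = (keep v : ℕ∞) := by
      intro v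
      rw [Set.InjOn.encard_image]
      · rw [← Finset.coe_Iio, Set.encard_coe_eq_coe_finsetCard]; simp
      · intro i hi j hj hij
        have hk' := keep_le v
        have h1 := (hch v i (lt_of_lt_of_le hi hk')).2.2
        have h2 := (hch v j (lt_of_lt_of_le hj hk')).2.2
        rw [← h1, ← h2, hij]
    have hK : ∀ v, {x | x ≠ r ∧ q x = v} = ch v '' Set.Iio (keep v) ∪
        {x | v ≠ r ∧ x = ch (p v) (idx v + 1) ∧ idx v + 1 < n (p v) ∧
          keep (p v) ≤ idx v + 1} := by
      intro v
      ext x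
      constructor
      · rintro ⟨hx, rfl⟩
        by_cases h : idx x < keep (p x)
        · left
          rw [q1 x hx h]
          exact ⟨idx x, h, (hidx x hx).2⟩
        · right
          obtain ⟨h1, h2, h3⟩ := q2' x hx h
          have h4 := hidx x hx
          refine ⟨h1, ?_, ?_, ?_⟩
          · rw [h2, h3, h4.2]
          · rw [h2, h3]; exact h4.1
          · rw [h2, h3]; omega
      · rintro (⟨j, hj, rfl⟩ | ⟨hv, rfl, h1, h2⟩)
        · obtain ⟨h1, h2, h3⟩ := hch v j (lt_of_lt_of_le hj (keep_le v))
          refine ⟨h1, ?_⟩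
          rw [q1 _ h1 (by rw [h2, h3]; exact hj), h2]
        · obtain ⟨h3, h4, h5⟩ := hch (p v) _ h1
          refine ⟨h3, ?_⟩
          rw [q2 _ h3 (by rw [h4, h5]; omega), h4, h5]
          simpa using (hidx v hv).2
    intro v
    by_cases hv : v = r
    · subst hv
      have : T'.neighborSet v = ch v '' Set.Iio (keep v) := by
        have h1 := hK v
        have h2 : T'.neighborSet v = {x | x ≠ v ∧ q x = v} := by
          ext x
          rw [SimpleGraph.mem_neighborSet, hT']
          simp
        rw [h2, h1]
        simp
      rw [this, hown, keep_r]
    · have h2 : T'.neighborSet v = insert (q v) {x | x ≠ r ∧ q x = v} := by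
        ext x
        rw [SimpleGraph.mem_neighborSet, hT']
        simp [hv, eq_comm]
      have h3 : q v ∉ {x | x ≠ r ∧ q x = v} := by
        rintro ⟨h4, h5⟩
        have h6 := hrank _ h4
        rw [h5] at h6
        exact lt_asymm h6 (hrank v hv)
      rw [h2, Set.encard_insert_of_notMem h3, hK v]
      by_cases hc : idx v + 1 < n (p v) ∧ keep (p v) ≤ idx v + 1
      · have h4 : {x | v ≠ r ∧ x = ch (p v) (idx v + 1) ∧ idx v + 1 < n (p v) ∧
          keep (p v) ≤ idx v + 1} = {ch (p v) (idx v + 1)} := by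
          ext x; simp [hv, hc.1, hc.2]
        rw [h4, Set.encard_union_eq, hown, keep_c v hv hc, Set.encard_singleton]
        · norm_cast; omega
        · rw [Set.disjoint_singleton_right]
          rintro ⟨j, hj, hj'⟩
          have h5 := (hch v j (lt_of_lt_of_le hj (keep_le v))).2.1
          have h6 := (hch (p v) _ hc.1).2.1
          rw [hj'] at h5
          rw [h5] at h6
          have := (hp v hv).1
          rw [← h6] at this
          exact this.ne rfl
      · have h4 : {x | v ≠ r ∧ x = ch (p v) (idx v + 1) ∧ idx v + 1 < n (p v) ∧
          keep (p v) ≤ idx v + 1} = ∅ := by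
          ext x; simp only [Set.mem_ofPred_eq, Set.mem_empty_iff_false, iff_false]
          tauto
        rw [h4, Set.union_empty, hown, keep_nc v hv hc]
        norm_cast; omega
  · have key : ∀ x, x ≠ r → T.Adj x (q x) ∨ ∃ z, T.Adj x z ∧ T.Adj z (q x) := by
      intro x hx
      by_cases h : idx x < keep (p x)
      · left; rw [q1 x hx h]; exact (hp x hx).1
      · right
        obtain ⟨h1, h2, h3⟩ := q2' x hx h
        have h4 := (hp _ h1).1
        rw [h2] at h4
        exact ⟨p x, (hp x hx).1, h4.symm⟩
    intro x y hxy
    rcases (hT' x y).1 hxy with ⟨h, rfl⟩ | ⟨h, rfl⟩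
    · exact key x h
    · rcases key y h with h | ⟨z, h1, h2⟩
      · exact Or.inl h.symm
      · exact Or.inr ⟨z, h2.symm, h1.symm⟩

/-- The unit ball of the word metric. -/
def uball {G : Type*} [Group G] (S : Set G) : Set G := insert 1 (S ∪ S⁻¹)

section Cayley
variable {G : Type*} [Group G]

lemma one_mem_uball (S : Set G) : (1 : G) ∈ uball S := Set.mem_insert _ _

lemma uball_inv (S : Set G) : (uball S)⁻¹ = uball S := by
  ext x
  simp [uball, or_comm]

lemma uball_finite {S : Set G} (hS : S.Finite) : (uball S).Finite :=
  (hS.union hS.inv).insert 1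

lemma uball_pow_finite {S : Set G} (hS : S.Finite) (n : ℕ) : (uball S ^ n).Finite := by
  induction n with
  | zero => simp
  | succ n ih => rw [pow_succ]; exact ih.mul (uball_finite hS)

lemma one_mem_uball_pow (S : Set G) (n : ℕ) : (1 : G) ∈ uball S ^ n :=
  Set.one_mem_pow (one_mem_uball S)

lemma uball_pow_mono (S : Set G) {m n : ℕ} (h : m ≤ n) : uball S ^ m ⊆ uball S ^ n :=
  Set.pow_subset_pow_right (one_mem_uball S) h

lemma uball_pow_inv (S : Set G) (n : ℕ) : (uball S ^ n)⁻¹ = uball S ^ n := by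
  rw [← inv_pow, uball_inv]

lemma cay_adj (S : Set G) (g h : G) :
    (cayleyGraph S).Adj g h ↔ g ≠ h ∧ g⁻¹ * h ∈ S ∪ S⁻¹ := by
  simp only [cayleyGraph, SimpleGraph.fromRel_adj]
  constructor
  · rintro ⟨h1, h2 | h2⟩
    · exact ⟨h1, h2⟩
    · refine ⟨h1, ?_⟩
      rcases h2 with h2 | h2
      · right; simpa using h2
      · left; simpa using h2
  · rintro ⟨h1, h2⟩
    exact ⟨h1, Or.inl h2⟩

lemma mem_uball_of_adj {S : Set G} {g h : G} (h' : (cayleyGraph S).Adj g h) :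
    g⁻¹ * h ∈ uball S := Or.inr ((cay_adj S g h).1 h').2

lemma walk_iff (S : Set G) (n : ℕ) (g h : G) :
    g⁻¹ * h ∈ uball S ^ n ↔ ∃ w : (cayleyGraph S).Walk g h, w.length ≤ n := by
  constructor
  · induction n generalizing g with
    | zero =>
      intro hm
      have : g = h := by simpa [inv_mul_eq_one] using hm
      subst this
      exact ⟨Walk.nil, le_rfl⟩
    | succ n ih =>
      intro hm
      rw [pow_succ'] at hm
      obtain ⟨u, hu, t, ht, hut⟩ := Set.mem_mul.1 hm
      have ht' : (g * u)⁻¹ * h ∈ uball S ^ n := by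
        have : (g * u)⁻¹ * h = t := by rw [mul_inv_rev, mul_assoc, ← hut]; group
        rwa [this]
      obtain ⟨w, hw⟩ := ih _ ht'
      by_cases h1 : u = 1
      · subst h1
        exact ⟨w.copy (mul_one g) rfl, by rw [Walk.length_copy]; omega⟩
      · have hadj : (cayleyGraph S).Adj g (g * u) := by
          rw [cay_adj]
          refine ⟨by simpa using h1, ?_⟩
          rw [inv_mul_cancel_left]
          exact hu.resolve_left h1
        exact ⟨Walk.cons hadj w, by simpa using hw⟩
  · rintro ⟨w, hw⟩
    induction w generalizing n with
    | nil => simpa using one_mem_uball_pow S n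
    | @cons a b c hab w ih =>
      rw [Walk.length_cons] at hw
      obtain ⟨m, rfl⟩ : ∃ m, n = m + 1 := ⟨n - 1, by omega⟩
      have h1 := ih m (by omega)
      have h2 := mem_uball_of_adj hab
      rw [pow_succ']
      have := Set.mul_mem_mul h2 h1
      simpa [mul_assoc] using this

lemma nbhd_eq (S : Set G) (k : ℕ) (F : Finset G) :
    nbhd (cayleyGraph S) k F = (F : Set G) * uball S ^ k := by
  ext v
  constructor
  · rintro ⟨s, hs, hr, hd⟩
    obtain ⟨w, hw⟩ := hr.exists_walk_length_eq_dist
    have := (walk_iff S k s v).2 ⟨w, by omega⟩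
    exact Set.mem_mul.2 ⟨s, hs, _, this, by group⟩
  · intro hv
    obtain ⟨s, hs, u, hu, rfl⟩ := Set.mem_mul.1 hv
    obtain ⟨w, hw⟩ := (walk_iff S k s (s * u)).1 (by simpa using hu)
    exact ⟨s, hs, ⟨w⟩, (dist_le w).trans hw⟩

lemma exists_mem_pow {S : Set G} (hS : Subgroup.closure S = ⊤) (g : G) :
    ∃ n, g ∈ uball S ^ n := by
  have hg : g ∈ Subgroup.closure S := by rw [hS]; trivial
  induction hg using Subgroup.closure_induction with
  | mem x hx => exact ⟨1, by rw [pow_one]; exact Or.inr (Or.inl hx)⟩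
  | one => exact ⟨0, by simp⟩
  | mul x y _ _ hx hy =>
    obtain ⟨m, hm⟩ := hx
    obtain ⟨n, hn⟩ := hy
    exact ⟨m + n, by rw [pow_add]; exact Set.mul_mem_mul hm hn⟩
  | inv x _ hx =>
    obtain ⟨m, hm⟩ := hx
    refine ⟨m, ?_⟩
    rw [← uball_pow_inv]
    simpa using hm

lemma finite_subset_pow {S : Set G} (hS : Subgroup.closure S = ⊤) {A : Set G} (hA : A.Finite) :
    ∃ n, A ⊆ uball S ^ n := by
  choose n hn using exists_mem_pow hS
  refine ⟨hA.toFinset.sup n, fun a ha => ?_⟩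
  exact uball_pow_mono S (Finset.le_sup (f := n) (hA.mem_toFinset.2 ha)) (hn a)

lemma cay_connected {S : Set G} (hS : Subgroup.closure S = ⊤) : (cayleyGraph S).Connected := by
  refine { preconnected := fun x y => ?_, nonempty := ⟨1⟩ }
  obtain ⟨n, hn⟩ := exists_mem_pow hS (x⁻¹ * y)
  obtain ⟨w, _⟩ := (walk_iff S n x y).1 hn
  exact ⟨w⟩

lemma cay_neighbor_finite {S : Set G} (hS : S.Finite) (g : G) :
    ((cayleyGraph S).neighborSet g).Finite := by
  refine ((uball_finite hS).image (fun u => g * u)).subset ?_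
  intro h hh
  exact ⟨g⁻¹ * h, mem_uball_of_adj hh, by simp⟩

/-- A Cayley graph with a regular spanning tree forces non-amenability. -/
lemma nonamenable_of_tree {S : Set G} (hS : IsFinGenSet S) {k : ℕ} (hk : 2 < k)
    {T : SimpleGraph G} (hle : T ≤ cayleyGraph S) (hT : T.IsTree)
    (hdeg : ∀ v : G, (T.neighborSet v).encard = (k : ℕ∞)) : GroupNonamenable G := by
  classical
  intro S' hS'
  obtain ⟨K, hK⟩ := finite_subset_pow hS'.2 (uball_finite hS.1)
  refine ⟨2, by norm_num, K, fun F => Or.inr ?_⟩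
  rw [nbhd_eq]
  obtain ⟨p, -, -, hadj⟩ := exists_parent hT 1
  have hch : ∀ v, ∃ a b, a ≠ b ∧ p a = v ∧ p b = v ∧ T.Adj v a ∧ T.Adj v b := by
    intro v
    have h1 : (1 : ℕ∞) < (T.neighborSet v \ {p v}).encard := by
      have h2 : (T.neighborSet v).encard ≤ (T.neighborSet v \ {p v}).encard + 1 := by
        have := Set.encard_le_encard (Set.subset_insert_sdiff_singleton (p v) (T.neighborSet v))
        exact this.trans (Set.encard_insert_le _ _)
      rw [hdeg v] at h2
      by_contra h3
      rw [not_lt] at h3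
      have h4 : (k : ℕ∞) ≤ 1 + 1 := h2.trans (add_le_add_left h3 1)
      have h5 : k ≤ 2 := by exact_mod_cast h4
      omega
    obtain ⟨a, b, ha, hb, hab⟩ := Set.one_lt_encard_iff.1 h1
    have key : ∀ c ∈ T.neighborSet v \ {p v}, p c = v := by
      rintro c ⟨hc, hc'⟩
      rcases hadj v c hc with h | h
      · exact absurd h.2.symm hc'
      · exact h.2
    exact ⟨a, b, hab, key a ha, key b hb, ha.1, hb.1⟩
  choose a b hab hpa hpb ha hb using hch
  let φ : G × Bool → G := fun x => if x.2 then a x.1 else b x.1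
  have hpφ : ∀ x, p (φ x) = x.1 := by
    rintro ⟨g, _ | _⟩ <;> simp [φ, hpa, hpb]
  have hφ : Function.Injective φ := by
    rintro ⟨g, i⟩ ⟨h, j⟩ hgh
    have h1 : g = h := by
      have := congrArg p hgh
      rwa [hpφ, hpφ] at this
    subst h1
    have h2 := hab g
    cases i <;> cases j <;> simp only [φ] at hgh ⊢
    · exact absurd hgh.symm (by simpa using h2)
    · exact absurd hgh (by simpa using h2)
  have hsub : (((F ×ˢ (Finset.univ : Finset Bool)).image φ : Finset G) : Set G) ⊆
      (F : Set G) * uball S' ^ K := by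
    intro x hx
    rw [Finset.mem_coe, Finset.mem_image] at hx
    obtain ⟨⟨g, i⟩, hg, rfl⟩ := hx
    have hg' : g ∈ F := (Finset.mem_product.1 hg).1
    have h1 : T.Adj g (φ (g, i)) := by cases i <;> simp [φ, ha, hb]
    exact Set.mem_mul.2 ⟨g, hg', _, hK (mem_uball_of_adj (hle h1)), by group⟩
  have hfin : ((F : Set G) * uball S' ^ K).Finite :=
    F.finite_toSet.mul (uball_pow_finite hS'.1 K)
  have h1 := Set.ncard_le_ncard hsub hfin
  rw [Set.ncard_coe_finset, Finset.card_image_of_injective _ hφ, Finset.card_product] at h1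
  simp only [Finset.card_univ, Fintype.card_bool] at h1
  have : (F.card * 2 : ℝ) ≤ (((F : Set G) * uball S' ^ K).ncard : ℝ) := by exact_mod_cast h1
  linarith

/-- Iterated expansion. -/
lemma expansion {S : Set G} (hS : S.Finite) (h : GraphNonamenable (cayleyGraph S)) (D : ℕ) :
    ∃ n, ∀ F : Finset G, D * F.card ≤ ((F : Set G) * uball S ^ n).ncard := by
  classical
  obtain ⟨C, hC, m, hm⟩ := h
  have hfin : ∀ (F : Finset G) n, ((F : Set G) * uball S ^ n).Finite := fun F n =>
    F.finite_toSet.mul (uball_pow_finite hS n)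
  have key : ∀ (j : ℕ) (F : Finset G),
      C ^ j * F.card ≤ (((F : Set G) * uball S ^ (m * j)).ncard : ℝ) := by
    intro j
    induction j with
    | zero => intro F; simp
    | succ j ih =>
      intro F
      have h1 := ih ((hfin F m).toFinset)
      rw [Set.Finite.coe_toFinset, mul_assoc, ← pow_add, ← Set.ncard_eq_toFinset_card _ (hfin F m)] at h1
      have h2 : C * F.card ≤ (((F : Set G) * uball S ^ m).ncard : ℝ) := by
        have := hm F
        rw [nbhd_eq] at this
        exact this.resolve_left (fun hh => hh (hfin F m))
      have h3 : m * (j + 1) = m + m * j := by ring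
      rw [h3]
      refine le_trans ?_ h1
      rw [pow_succ, mul_assoc]
      exact mul_le_mul_of_nonneg_left h2 (by positivity)
  obtain ⟨j, hj⟩ := pow_unbounded_of_one_lt (D : ℝ) hC
  refine ⟨m * j, fun F => ?_⟩
  have h1 := key j F
  have h2 : (D : ℝ) * F.card ≤ C ^ j * F.card :=
    mul_le_mul_of_nonneg_right hj.le (by positivity)
  exact_mod_cast h2.trans h1

/-- A non-amenable group carries a bounded displacement forest of large degree. -/
lemma exists_forest {S : Set G} (hS : S.Finite) (h : GraphNonamenable (cayleyGraph S)) (k : ℕ) :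
    ∃ (n : ℕ) (F : SimpleGraph G), F.IsAcyclic ∧ F ≤ cayleyGraph (uball S ^ n) ∧
      ∀ v, (k : ℕ∞) ≤ (F.neighborSet v).encard := by
  classical
  obtain ⟨n, hn⟩ := expansion hS h (k + 1)
  have hW := uball_pow_finite hS n
  let t : G × Fin (k + 1) → Finset G := fun x => hW.toFinset.image (fun u => x.1 * u)
  have hall : ∀ s : Finset (G × Fin (k + 1)), s.card ≤ (s.biUnion t).card := by
    intro s
    have h1 := hn (s.image Prod.fst)
    have h2 : ((s.image Prod.fst : Finset G) : Set G) * uball S ^ n = (s.biUnion t : Finset G) := by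
      ext x
      simp only [t, Set.mem_mul, Finset.coe_biUnion, Finset.coe_image, Set.mem_iUnion,
        Set.mem_image, Finset.mem_coe, Set.Finite.mem_toFinset]
      constructor
      · rintro ⟨_, ⟨y, hy, rfl⟩, u, hu, rfl⟩
        exact ⟨y, hy, u, hu, rfl⟩
      · rintro ⟨y, hy, u, hu, rfl⟩
        exact ⟨_, ⟨y, hy, rfl⟩, u, hu, rfl⟩
    rw [h2, Set.ncard_coe_finset] at h1
    refine le_trans ?_ h1
    have h3 : s ⊆ (s.image Prod.fst) ×ˢ (Finset.univ : Finset (Fin (k + 1))) := by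
      intro x hx
      exact Finset.mem_product.2 ⟨Finset.mem_image_of_mem _ hx, Finset.mem_univ _⟩
    have h4 := Finset.card_le_card h3
    rw [Finset.card_product, Finset.card_univ, Fintype.card_fin] at h4
    rw [mul_comm]; exact h4
  obtain ⟨φ, hφ, hφt⟩ := (Finset.all_card_le_biUnion_card_iff_exists_injective t).1 hall
  have hφ' : ∀ g i, g⁻¹ * φ (g, i) ∈ uball S ^ n := by
    intro g i
    have := hφt (g, i)
    simp only [t, Finset.mem_image, Set.Finite.mem_toFinset] at this
    obtain ⟨u, hu, hu'⟩ := this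
    rw [← hu']; simpa using hu
  let p : G → G := fun x => if h : ∃ y, φ y = x then h.choose.1 else x
  have hp : ∀ y, p (φ y) = y.1 := by
    intro y
    have hy : ∃ z, φ z = φ y := ⟨y, rfl⟩
    simp only [p, hy, dif_pos]
    rw [hφ hy.choose_spec]
  have hp' : ∀ x, (p x)⁻¹ * x ∈ uball S ^ n := by
    intro x
    by_cases hx : ∃ y, φ y = x
    · obtain ⟨⟨g, i⟩, rfl⟩ := hx
      rw [hp]; exact hφ' g i
    · simp only [p, hx, dif_neg, not_false_eq_true]
      simpa using one_mem_uball_pow S n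
  let F : SimpleGraph G := SimpleGraph.fromRel (fun x y => x ∉ Function.periodicPts p ∧ p x = y)
  refine ⟨n, F, acyclic_of_fun F p fun x y hxy => hxy.2, ?_, ?_⟩
  · intro x y hxy
    rw [cay_adj]
    refine ⟨hxy.ne, ?_⟩
    rcases hxy.2 with ⟨_, rfl⟩ | ⟨_, rfl⟩
    · right
      simpa using hp' x
    · left
      exact hp' y
  · intro v
    let I : Set (Fin (k + 1)) := {i | φ (v, i) ∈ Function.periodicPts p}
    have hI : I.Subsingleton := by
      rintro i ⟨a, ha, ha'⟩ j ⟨b, hb, hb'⟩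
      have := Function.IsPeriodicPt.eq_of_apply_eq ha' hb' ha hb (by rw [hp, hp])
      simpa using hφ this
    have hIc : (k : ℕ∞) ≤ (Iᶜ).encard := by
      have h1 := Set.encard_add_encard_compl I
      have h2 : I.encard ≤ 1 := Set.encard_le_one_iff_subsingleton.2 hI
      have h3 : (Set.univ : Set (Fin (k + 1))).encard = (k : ℕ∞) + 1 := by
        rw [Set.encard_univ]; simp
      rw [h3] at h1
      have h4 : (k : ℕ∞) + 1 ≤ (Iᶜ).encard + 1 := by
        rw [← h1, add_comm]; exact add_le_add_right h2 _
      exact (ENat.add_le_add_iff_right (by simp)).1 h4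
    refine hIc.trans ?_
    have hinj : Function.Injective (fun i => φ (v, i)) := fun i j hij => by
      simpa using hφ hij
    rw [← hinj.encard_image]
    refine Set.encard_le_encard ?_
    rintro _ ⟨i, hi, rfl⟩
    refine ⟨?_, Or.inr ⟨hi, hp _⟩⟩
    intro hv
    refine hi (Function.mk_mem_periodicPts (n := 1) one_pos ?_)
    show p (φ (v, i)) = φ (v, i)
    rw [hp]; exact hv

lemma closure_uball_pow {S : Set G} (hS : Subgroup.closure S = ⊤) {n : ℕ} (hn : n ≠ 0) :
    Subgroup.closure (uball S ^ n) = ⊤ := by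
  rw [eq_top_iff, ← hS]
  refine Subgroup.closure_mono ?_
  refine Set.Subset.trans ?_ (uball_pow_mono S (Nat.one_le_iff_ne_zero.2 hn))
  rw [pow_one]
  exact fun x hx => Or.inr (Or.inl hx)

lemma tree_of_nonamenable [Group.FG G] {k : ℕ} (hk : 2 < k) (h : GroupNonamenable G) :
    ∃ S : Set G, IsFinGenSet S ∧ ∃ T : SimpleGraph G, T ≤ cayleyGraph S ∧ T.IsTree ∧
        ∀ v : G, (T.neighborSet v).encard = (k : ℕ∞) := by
  obtain ⟨S, hS, hSf⟩ := Group.fg_iff.1 (inferInstance : Group.FG G)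
  obtain ⟨n, F, hF, hFle, hFdeg⟩ := exists_forest hSf (h S ⟨hSf, hS⟩) k
  have hS1f := uball_pow_finite hSf (n + 1)
  have hS1 : Subgroup.closure (uball S ^ (n + 1)) = ⊤ := closure_uball_pow hS (by omega)
  have hFle1 : F ≤ cayleyGraph (uball S ^ (n + 1)) := by
    intro x y hxy
    have h1 := (cay_adj _ _ _).1 (hFle hxy)
    rw [cay_adj]
    refine ⟨h1.1, ?_⟩
    have h2 := uball_pow_mono S (Nat.le_succ n)
    exact Set.union_subset_union h2 (Set.inv_subset_inv.2 h2) h1.2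
  generalize uball S ^ (n + 1) = S1 at hS1f hS1 hFle1
  obtain ⟨T, hFT, hTle, hT⟩ := (cay_connected hS1).exists_isTree_le_of_le_of_isAcyclic hFle1 hF
  have hTfin : ∀ v, (T.neighborSet v).Finite := fun v =>
    (cay_neighbor_finite hS1f v).subset fun x hx => hTle hx
  obtain ⟨T', hT', hdeg, hclose⟩ := regularize hT k hk hTfin (by
    intro v
    have h1 := (hFdeg v).trans (Set.encard_le_encard (t := T.neighborSet v) fun x hx => hFT hx)
    rw [← (hTfin v).cast_ncard_eq] at h1
    exact_mod_cast h1)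
  refine ⟨uball S1 ^ 2, ⟨uball_pow_finite hS1f 2, closure_uball_pow hS1 (by omega)⟩,
    T', ?_, hT', hdeg⟩
  intro x y hxy
  rw [cay_adj]
  refine ⟨hxy.ne, Or.inl ?_⟩
  rcases hclose x y hxy with h1 | ⟨z, h1, h2⟩
  · refine uball_pow_mono S1 (show 1 ≤ 2 by norm_num) ?_
    rw [pow_one]
    exact mem_uball_of_adj (hTle h1)
  · have := Set.mul_mem_mul (mem_uball_of_adj (hTle h1)) (mem_uball_of_adj (hTle h2))
    rw [pow_two]
    simpa [mul_assoc] using this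

end Cayley

end RST

/-- A finitely generated group is non-amenable if and only if, for any fixed `k > 2`, it
has a Cayley graph admitting a spanning tree which is regular of degree `k`. -/
theorem nonamenable_iff_regular_spanning_tree
    (G : Type*) [Group G] [Group.FG G] (k : ℕ) (hk : 2 < k) :
    GroupNonamenable G ↔
      ∃ S : Set G, IsFinGenSet S ∧ ∃ T : SimpleGraph G, T ≤ cayleyGraph S ∧ T.IsTree ∧
        ∀ v : G, (T.neighborSet v).encard = (k : ℕ∞) := by

  constructor
  · exact RST.tree_of_nonamenable hk
  · rintro ⟨S, hS, T, hle, hT, hdeg⟩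
    exact RST.nonamenable_of_tree hS hk hle hT hdeg
end

section
/- Let H and G be finitely generated groups, let U = U⁻¹ be a finite generating set of H, and suppose H acts on G by a translation-like action *. Then there is a finite generating set W of G such that for all g ∈ G and all h₀, h₁ ∈ H adjacent in Cay(H;U), the elements g * h₀ and g * h₁ are adjacent in Cay(G;W); consequently the graph Φ with vertex set G and edge set {(g, g * u) : g ∈ G, u ∈ U} is a spanning subgraph of Cay(G;W) whose connected components are exactly the orbits of the H-action, and every connected component of Φ is graph-isomorphic to Cay(H;U). -/
open scoped Pointwise

/-- The orbit graph of a translation-like action: `x` and `a.act x u` are joined by an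
edge for `u ∈ U`. -/
def orbitGraph {H G : Type*} [Group H] (U : Set H) (a : RightAction H G) :
    SimpleGraph G :=
  SimpleGraph.fromRel (fun x y => ∃ u ∈ U, a.act x u = y)

theorem exists_mem_pow_of_isFinGenSet {G : Type*} [Group G] {S : Set G}
    (hS : Subgroup.closure S = ⊤) (g : G) : ∃ n : ℕ, g ∈ (S ∪ S⁻¹) ^ n := by
  have hg : g ∈ Submonoid.closure (S ∪ S⁻¹) := by
    rw [← Subgroup.closure_toSubmonoid, hS]
    trivial
  induction hg using Submonoid.closure_induction with
  | mem x hx => exact ⟨1, by simpa using hx⟩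
  | one => exact ⟨0, by simp⟩
  | mul x y _ _ hx hy =>
    obtain ⟨n, hn⟩ := hx
    obtain ⟨m, hm⟩ := hy
    exact ⟨n + m, by rw [pow_add]; exact Set.mul_mem_mul hn hm⟩

theorem finite_displacements {H G : Type*} [Group H] [Group G] {S : Set G}
    (hS : IsFinGenSet S) (a : RightAction H G) (h : H) (C : ℝ)
    (hC : ∀ x : G, wordMetric S x (a.act x h) ≤ C) :
    (Set.range fun x : G => x⁻¹ * a.act x h).Finite := by
  have hfin : (⋃ n ∈ Set.Iic ⌊C⌋₊, (S ∪ S⁻¹) ^ n).Finite :=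
    (Set.finite_Iic _).biUnion fun n hn => by
      clear hn
      induction n with
      | zero => simp
      | succ n ih => rw [pow_succ]; exact ih.mul (hS.1.union hS.1.inv)
  refine hfin.subset ?_
  rintro _ ⟨x, rfl⟩
  have hmem : x⁻¹ * a.act x h ∈ (S ∪ S⁻¹) ^ (wordDist S x (a.act x h)) :=
    Nat.sInf_mem (s := {n : ℕ | x⁻¹ * a.act x h ∈ (S ∪ S⁻¹) ^ n})
      (exists_mem_pow_of_isFinGenSet hS.2 _)
  exact Set.mem_biUnion (Nat.le_floor (hC x)) hmem

theorem cayleyGraph_adj_iff {H : Type*} [Group H] {U : Set H} (hUinv : U⁻¹ = U) (h k : H) :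
    (cayleyGraph U).Adj h k ↔ h ≠ k ∧ h⁻¹ * k ∈ U := by
  have e : k⁻¹ * h ∈ U ↔ h⁻¹ * k ∈ U := by
    rw [← Set.inv_mem_inv, hUinv]; simp
  simp [cayleyGraph, SimpleGraph.fromRel_adj, hUinv, e]

theorem orbitGraph_adj_iff {H G : Type*} [Group H] {U : Set H} (hUinv : U⁻¹ = U)
    (a : RightAction H G) (x y : G) :
    (orbitGraph U a).Adj x y ↔ x ≠ y ∧ ∃ u ∈ U, a.act x u = y := by
  simp only [orbitGraph, SimpleGraph.fromRel_adj]
  refine and_congr_right fun _ => ⟨?_, Or.inl⟩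
  rintro (h | ⟨u, hu, rfl⟩)
  · exact h
  · refine ⟨u⁻¹, ?_, ?_⟩
    · rw [← hUinv]; simpa using hu
    · rw [a.act_mul, mul_inv_cancel, a.act_one]

/-- If `H` acts translation-like on a finitely generated group `G` and `U = U⁻¹` is a
finite generating set of `H`, then there is a finite generating set `W` of `G` such that
the action maps edges of `Cay(H;U)` to edges of `Cay(G;W)`; consequently the orbit graph
`Φ` is a spanning subgraph of `Cay(G;W)` whose connected components are exactly the orbits
of the action, each component being graph-isomorphic (via the orbit maps) to `Cay(H;U)`. -/
theorem translation_like_action_graph_partition {H G : Type*} [Group H] [Group G]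
    [Group.FG G] (U : Set H) (hU : IsFinGenSet U) (hUinv : U⁻¹ = U)
    (a : RightAction H G)
    (ha : ∀ S : Set G, IsFinGenSet S → a.IsTranslationLike (wordMetric S)) :
    ∃ W : Set G, IsFinGenSet W ∧
      (∀ (g : G) (h₀ h₁ : H), (cayleyGraph U).Adj h₀ h₁ →
        (cayleyGraph W).Adj (a.act g h₀) (a.act g h₁)) ∧
      orbitGraph U a ≤ cayleyGraph W ∧
      (∀ x y : G, (orbitGraph U a).Reachable x y ↔ ∃ h : H, a.act x h = y) ∧
      (∀ (g : G) (h₀ h₁ : H),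
        (orbitGraph U a).Adj (a.act g h₀) (a.act g h₁) ↔ (cayleyGraph U).Adj h₀ h₁) := by
  obtain ⟨S, hSc, hSf⟩ := (Group.fg_iff (G := G)).1 inferInstance
  have hS : IsFinGenSet S := ⟨hSf, hSc⟩
  obtain ⟨hfree, hbd⟩ := ha S hS
  have hinj : ∀ (g : G) (h k : H), a.act g h = a.act g k → h = k := by
    intro g h k e
    have := hfree (a.act g h) (h⁻¹ * k) (by rw [a.act_mul, mul_inv_cancel_left, e])
    exact inv_mul_eq_one.1 this
  have hadj : ∀ (g : G) (h₀ h₁ : H),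
      (orbitGraph U a).Adj (a.act g h₀) (a.act g h₁) ↔ (cayleyGraph U).Adj h₀ h₁ := by
    intro g h₀ h₁
    rw [orbitGraph_adj_iff hUinv, cayleyGraph_adj_iff hUinv]
    refine and_congr ⟨fun h e => h (by rw [e]), fun h e => h (hinj _ _ _ e)⟩ ⟨?_, ?_⟩
    · rintro ⟨u, hu, e⟩
      rw [a.act_mul] at e
      rw [← hinj _ _ _ e]
      simpa using hu
    · intro h
      exact ⟨_, h, by rw [a.act_mul, mul_inv_cancel_left]⟩
  set W : Set G := S ∪ ⋃ u ∈ U, Set.range fun x : G => x⁻¹ * a.act x u with hW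
  have hle : orbitGraph U a ≤ cayleyGraph W := by
    intro x y hxy
    rw [orbitGraph_adj_iff hUinv] at hxy
    obtain ⟨hne, u, hu, rfl⟩ := hxy
    refine (SimpleGraph.fromRel_adj _ _ _).2 ⟨hne, Or.inl (Or.inl (Or.inr ?_))⟩
    exact Set.mem_biUnion hu ⟨x, rfl⟩
  refine ⟨W, ⟨?_, ?_⟩, fun g h₀ h₁ h => hle ((hadj g h₀ h₁).2 h), hle, ?_, hadj⟩
  · refine hSf.union (hU.1.biUnion fun u _ => ?_)
    obtain ⟨C, hC⟩ := hbd u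
    exact finite_displacements hS a u C hC
  · exact top_le_iff.1 (hSc ▸ Subgroup.closure_mono Set.subset_union_left)
  · intro x y
    constructor
    · rintro ⟨p⟩
      induction p with
      | nil => exact ⟨1, a.act_one _⟩
      | cons h _ ih =>
        obtain ⟨k, rfl⟩ := ih
        obtain ⟨_, u, _, rfl⟩ := (orbitGraph_adj_iff hUinv a _ _).1 h
        exact ⟨u * k, (a.act_mul _ _ _).symm⟩
    · rintro ⟨h, rfl⟩
      obtain ⟨n, hn⟩ := exists_mem_pow_of_isFinGenSet hU.2 h
      rw [hUinv, Set.union_self] at hn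
      induction n generalizing h with
      | zero =>
        obtain rfl : h = 1 := by simpa using hn
        rw [a.act_one]
      | succ n ih =>
        rw [pow_succ] at hn
        obtain ⟨k, hk, u, hu, rfl⟩ := hn
        refine (ih k hk).trans ?_
        change (orbitGraph U a).Reachable _ (a.act x (k * u))
        by_cases e : a.act x k = a.act x (k * u)
        · rw [← e]
        · exact ((orbitGraph_adj_iff hUinv a _ _).2 ⟨e, u, hu, a.act_mul _ _ _⟩).reachable
end

section
/- Let G be the free product ℤ * ℤ₃, where ℤ = ⟨t⟩ and ℤ₃ = ⟨u⟩ is cyclic of order 3, and let S = {t, u}. Then the Cayley graph Cay(G;S) has no regular spanning tree: every spanning subgraph of Cay(G;S) that is a tree has two adjacent vertices of different degrees. -/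
open scoped Pointwise

/-- The free product `ℤ * ℤ₃`. -/
abbrev FreeProdZZ3 : Type := Monoid.Coprod (Multiplicative ℤ) (Multiplicative (ZMod 3))

/-- The generator `t` of the `ℤ` factor. -/
noncomputable def tGen : FreeProdZZ3 := Monoid.Coprod.inl (Multiplicative.ofAdd (1 : ℤ))

/-- The generator `u` of the `ℤ₃` factor. -/
noncomputable def uGen : FreeProdZZ3 :=
  Monoid.Coprod.inr (Multiplicative.ofAdd (1 : ZMod 3))


namespace ZZ3

lemma u_cube : uGen * uGen * uGen = 1 := by
  unfold uGen
  rw [← map_mul, ← map_mul, ← map_one Monoid.Coprod.inr]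
  congr 1

lemma u_inv : uGen⁻¹ = uGen * uGen := by
  rw [inv_eq_iff_mul_eq_one, ← mul_assoc, u_cube]

lemma fst_t : Monoid.Coprod.fst tGen = Multiplicative.ofAdd (1 : ℤ) := by simp [tGen]
lemma fst_u : Monoid.Coprod.fst uGen = (1 : Multiplicative ℤ) := by simp [uGen]
lemma snd_t : Monoid.Coprod.snd tGen = (1 : Multiplicative (ZMod 3)) := by simp [tGen]
lemma snd_u : Monoid.Coprod.snd uGen = Multiplicative.ofAdd (1 : ZMod 3) := by simp [uGen]

lemma u_ne_one : uGen ≠ 1 := by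
  intro h
  have := congrArg Monoid.Coprod.snd h
  rw [snd_u, map_one Monoid.Coprod.snd] at this
  revert this; decide

lemma u_ne_uinv : uGen ≠ uGen⁻¹ := by
  intro h
  have := congrArg Monoid.Coprod.snd h
  rw [map_inv, snd_u] at this
  revert this; decide

lemma t_ne_tinv : tGen ≠ tGen⁻¹ := by
  intro h
  have := congrArg Monoid.Coprod.fst h
  rw [map_inv, fst_t] at this
  revert this; decide

lemma t_ne_u : tGen ≠ uGen := by
  intro h
  have := congrArg Monoid.Coprod.fst h
  rw [fst_u, fst_t] at this
  revert this; decide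

lemma t_ne_uinv : tGen ≠ uGen⁻¹ := by
  intro h
  have := congrArg Monoid.Coprod.fst h
  rw [map_inv, fst_u, fst_t] at this
  revert this; decide

/-- The skew shift of `G × ℤ` along right multiplication by `s`. -/
def shift (s : FreeProdZZ3) (a : FreeProdZZ3 → ℤ) : Equiv.Perm (FreeProdZZ3 × ℤ) where
  toFun p := (p.1 * s, p.2 + a p.1)
  invFun p := (p.1 * s⁻¹, p.2 - a (p.1 * s⁻¹))
  left_inv p := by simp
  right_inv p := by simp

/-- Functions with prescribed increments along the edges. -/
lemma exists_potential (a b : FreeProdZZ3 → ℤ)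
    (hb : ∀ g, b g + b (g * uGen) + b (g * uGen * uGen) = 0) :
    ∃ f : FreeProdZZ3 → ℤ, (∀ g, f (g * tGen) = f g + a g) ∧ ∀ g, f (g * uGen) = f g + b g := by
  let U := shift uGen b
  let T := shift tGen a
  have hU : U⁻¹ ^ 3 = 1 := by
    rw [inv_pow, inv_eq_one]
    ext1 p
    have h1 := hb p.1
    have h2 : p.1 * uGen * uGen * uGen = p.1 := by rw [mul_assoc, mul_assoc, ← mul_assoc uGen, u_cube, mul_one]
    simp only [pow_succ, pow_zero, one_mul, Equiv.Perm.mul_apply, Equiv.Perm.one_apply]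
    simp only [U, shift, Equiv.coe_fn_mk]
    rw [h2]
    ext
    · rfl
    · simp only; omega
  let φ1 : Multiplicative ℤ →* Equiv.Perm (FreeProdZZ3 × ℤ) := zpowersHom _ T⁻¹
  let φ2 : Multiplicative (ZMod 3) →* Equiv.Perm (FreeProdZZ3 × ℤ) :=
    AddMonoidHom.toMultiplicativeLeft
      (ZMod.lift 3 ⟨zmultiplesHom (Additive (Equiv.Perm (FreeProdZZ3 × ℤ))) (Additive.ofMul U⁻¹), by
        rw [zmultiplesHom_apply, ← ofMul_zpow]
        exact congrArg Additive.ofMul hU⟩)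
  let φ := Monoid.Coprod.lift φ1 φ2
  have ht : φ tGen = T⁻¹ := by simp [φ, tGen, φ1]
  have hu : φ uGen = U⁻¹ := by
    have : (1 : ZMod 3) = ((1 : ℤ) : ZMod 3) := by simp
    simp only [φ, uGen, φ2, Monoid.Coprod.lift_apply_inr, AddMonoidHom.toMultiplicativeLeft_apply_apply, toAdd_ofAdd]
    rw [this, ZMod.lift_coe]
    simp
  let F : FreeProdZZ3 → FreeProdZZ3 × ℤ := fun g => φ g⁻¹ (1, 0)
  have Ft : ∀ g, F (g * tGen) = T (F g) := by
    intro g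
    simp only [F]
    rw [mul_inv_rev, map_mul, map_inv φ tGen, ht, inv_inv, Equiv.Perm.mul_apply]
  have Fu : ∀ g, F (g * uGen) = U (F g) := by
    intro g
    simp only [F]
    rw [mul_inv_rev, map_mul, map_inv φ uGen, hu, inv_inv, Equiv.Perm.mul_apply]
  have key : ∀ x : FreeProdZZ3, ∀ p, (φ x p).1 = p.1 * x⁻¹ := by
    have mulc : ∀ x y : FreeProdZZ3, (∀ p, (φ x p).1 = p.1 * x⁻¹) → (∀ p, (φ y p).1 = p.1 * y⁻¹) →
        (∀ p, (φ (x * y) p).1 = p.1 * (x * y)⁻¹) := by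
      intro x y hx hy p
      rw [map_mul, Equiv.Perm.mul_apply, hx, hy, mul_inv_rev, mul_assoc]
    have invc : ∀ x : FreeProdZZ3, (∀ p, (φ x p).1 = p.1 * x⁻¹) →
        (∀ p, (φ x⁻¹ p).1 = p.1 * x⁻¹⁻¹) := by
      intro x hx p
      have := hx (φ x⁻¹ p)
      rw [← Equiv.Perm.mul_apply, ← map_mul] at this
      simp at this
      rw [this]; simp
    let K : Subgroup FreeProdZZ3 :=
      { carrier := {x | ∀ p, (φ x p).1 = p.1 * x⁻¹}
        mul_mem' := fun {x y} hx hy => mulc x y hx hy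
        one_mem' := by intro p; simp
        inv_mem' := fun {x} hx => invc x hx }
    have tK : tGen ∈ K := by
      intro p; rw [ht]; rfl
    have uK : uGen ∈ K := by
      intro p; rw [hu]; rfl
    intro x
    change x ∈ K
    induction x using Monoid.Coprod.induction_on with
    | inl m =>
      have : Monoid.Coprod.inl m = tGen ^ (Multiplicative.toAdd m) := by
        rw [tGen, ← map_zpow, ← ofAdd_zsmul]; simp
      rw [this]; exact K.zpow_mem tK _
    | inr m =>
      have : Monoid.Coprod.inr m = uGen ^ (Multiplicative.toAdd m).val := by
        rw [uGen, ← map_pow, ← ofAdd_nsmul]; simp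
      rw [this]; exact K.pow_mem uK _
    | mul x y hx hy => exact K.mul_mem hx hy
  have F1 : ∀ g, (F g).1 = g := by intro g; simp only [F]; rw [key]; simp
  refine ⟨fun g => (F g).2, fun g => ?_, fun g => ?_⟩
  · simp only [Ft]
    simp [T, shift, F1]
  · simp only [Fu]
    simp [U, shift, F1]

lemma cay_adj {v w : FreeProdZZ3} (h : (cayleyGraph ({tGen, uGen} : Set FreeProdZZ3)).Adj v w) :
    w = v * tGen ∨ w = v * uGen ∨ w = v * tGen⁻¹ ∨ w = v * uGen⁻¹ := by
  have h2 : v⁻¹ * w = tGen ∨ v⁻¹ * w = uGen ∨ v⁻¹ * w = tGen⁻¹ ∨ v⁻¹ * w = uGen⁻¹ := by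
    simp only [cayleyGraph, SimpleGraph.fromRel_adj, Set.mem_union, Set.mem_inv, mul_inv_rev,
      inv_inv, Set.mem_insert_iff, Set.mem_singleton_iff] at h
    have e1 : w⁻¹ * v = (v⁻¹ * w)⁻¹ := by simp
    rw [e1, inv_eq_iff_eq_inv, inv_eq_iff_eq_inv] at h
    tauto
  simpa only [inv_mul_eq_iff_eq_mul] using h2

lemma const {T : SimpleGraph FreeProdZZ3} (hT : T ≤ cayleyGraph ({tGen, uGen} : Set FreeProdZZ3))
    (hc : T.Connected) (f : FreeProdZZ3 → ℤ) (h1 : ∀ g, T.Adj g (g * tGen) → f (g * tGen) = f g)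
    (h2 : ∀ g, T.Adj g (g * uGen) → f (g * uGen) = f g) (v w : FreeProdZZ3) : f v = f w := by
  have hadj : ∀ v w, T.Adj v w → f v = f w := by
    intro v w h
    rcases cay_adj (hT h) with rfl | rfl | rfl | rfl
    · exact (h1 _ h).symm
    · exact (h2 _ h).symm
    · have := h1 (v * tGen⁻¹) (by simpa using h.symm)
      simpa using this
    · have := h2 (v * uGen⁻¹) (by simpa using h.symm)
      simpa using this
  obtain ⟨p⟩ := hc.preconnected v w
  induction p with
  | nil => rfl
  | cons h _ ih => exact (hadj _ _ h).trans ih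

open Classical in
lemma adj_t {T : SimpleGraph FreeProdZZ3} (hT : T ≤ cayleyGraph ({tGen, uGen} : Set FreeProdZZ3))
    (hc : T.Connected) (h : FreeProdZZ3) : T.Adj h (h * tGen) := by
  by_contra hn
  obtain ⟨f, ft, fu⟩ := exists_potential (fun g => if g = h then 1 else 0) (fun _ => 0) (by simp)
  have := const hT hc f (by
    intro g hg
    rw [ft, if_neg, add_zero]
    rintro rfl; exact hn hg) (by intro g _; simp [fu]) h (h * tGen)
  rw [ft] at this
  simp at this

open Classical in
lemma adj_u {T : SimpleGraph FreeProdZZ3} (hT : T ≤ cayleyGraph ({tGen, uGen} : Set FreeProdZZ3))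
    (hc : T.Connected) (h : FreeProdZZ3) : T.Adj h (h * uGen) ∨ T.Adj h (h * uGen⁻¹) := by
  by_contra! hn
  obtain ⟨f, ft, fu⟩ := exists_potential (fun _ => 0)
    (fun g => (if g = h then 1 else 0) - (if g * uGen = h then 1 else 0)) (by
      intro g
      have h2 : g * uGen * uGen * uGen = g := by rw [mul_assoc, mul_assoc, ← mul_assoc uGen, u_cube, mul_one]
      simp only [h2]; ring)
  have := const hT hc f (by intro g _; simp [ft]) (by
    intro g hg
    rw [fu, if_neg, if_neg]
    · simp
    · rintro rfl; exact hn.2 (by simpa using hg.symm)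
    · rintro rfl; exact hn.1 hg) h (h * uGen)
  rw [fu] at this
  simp [u_ne_one] at this

lemma finish {T : SimpleGraph FreeProdZZ3} (hT : T ≤ cayleyGraph ({tGen, uGen} : Set FreeProdZZ3))
    (hc : T.Connected) (m : FreeProdZZ3) (h1 : T.Adj m (m * uGen)) (h2 : T.Adj m (m * uGen⁻¹))
    (h3 : ¬ T.Adj (m * uGen) (m * uGen⁻¹)) :
    ∃ v w : FreeProdZZ3, T.Adj v w ∧
        (T.neighborSet v).encard ≠ (T.neighborSet w).encard := by
  refine ⟨m, m * uGen, h1, ?_⟩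
  have hge : 4 ≤ (T.neighborSet m).encard := by
    have hs : ({m * tGen, m * tGen⁻¹, m * uGen, m * uGen⁻¹} : Set FreeProdZZ3) ⊆ T.neighborSet m := by
      rintro x (rfl | rfl | rfl | rfl)
      · exact adj_t hT hc m
      · have := adj_t hT hc (m * tGen⁻¹)
        exact (by simpa using this : T.Adj (m * tGen⁻¹) m).symm
      · exact h1
      · exact h2
    refine le_trans (le_of_eq ?_) (Set.encard_le_encard hs)
    have a1 : tGen⁻¹ ≠ uGen := fun h => t_ne_uinv (by rw [← h, inv_inv])
    rw [Set.encard_insert_of_notMem, Set.encard_insert_of_notMem, Set.encard_pair]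
    · norm_num
    · simpa using u_ne_uinv
    · simp [a1, t_ne_u]
    · simp [t_ne_tinv, t_ne_u, t_ne_uinv]
  have hle : (T.neighborSet (m * uGen)).encard ≤ 3 := by
    have hs : T.neighborSet (m * uGen) ⊆ {m * uGen * tGen, m * uGen * tGen⁻¹, m} := by
      intro x hx
      rcases cay_adj (hT hx) with rfl | rfl | rfl | rfl
      · simp
      · exfalso; apply h3
        rw [u_inv, ← mul_assoc]; exact hx
      · simp
      · simp
    refine (Set.encard_le_encard hs).trans ?_
    refine (Set.encard_insert_le _ _).trans ?_
    have : ({m * uGen * tGen⁻¹, m} : Set FreeProdZZ3).encard ≤ 2 := by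
      refine (Set.encard_insert_le _ _).trans ?_
      rw [Set.encard_singleton]; norm_num
    calc _ ≤ (2 : ℕ∞) + 1 := by gcongr
      _ = 3 := by norm_num
  intro h
  rw [h] at hge
  exact absurd (hge.trans hle) (by norm_num)

lemma no_triangle {V : Type*} {T : SimpleGraph V} (hT : T.IsAcyclic) {a b c : V} (h1 : T.Adj a b)
    (h2 : T.Adj b c) (h3 : T.Adj c a) : False := by
  refine hT (.cons h1 (.cons h2 (.cons h3 .nil))) ?_
  have := h1.ne
  have := h2.ne
  have := h3.ne
  rw [SimpleGraph.Walk.cons_isCycle_iff]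
  simp [SimpleGraph.Walk.cons_isPath_iff]
  tauto

end ZZ3

/-- The Cayley graph of `ℤ * ℤ₃` with respect to `S = {t, u}` has no regular spanning
tree: every spanning subgraph which is a tree has two adjacent vertices of different
degrees. -/
theorem no_regular_spanning_tree_in_Z_free_prod_Z3 :
    ∀ T : SimpleGraph FreeProdZZ3,
      T ≤ cayleyGraph ({tGen, uGen} : Set FreeProdZZ3) → T.IsTree →
      ∃ v w : FreeProdZZ3, T.Adj v w ∧
        (T.neighborSet v).encard ≠ (T.neighborSet w).encard := by
  intro T hT htree
  have hc := htree.connected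
  have e1 : uGen * uGen = uGen⁻¹ := ZZ3.u_inv.symm
  have e2 : uGen⁻¹ * uGen⁻¹ = uGen := by rw [← mul_inv_rev, e1, inv_inv]
  have a1 := ZZ3.adj_u hT hc 1
  have a2 := ZZ3.adj_u hT hc uGen
  have a3 := ZZ3.adj_u hT hc uGen⁻¹
  have f1 := ZZ3.finish hT hc 1
  have f2 := ZZ3.finish hT hc uGen
  have f3 := ZZ3.finish hT hc uGen⁻¹
  have n := @ZZ3.no_triangle _ T htree.isAcyclic 1 uGen uGen⁻¹
  simp only [one_mul, e1, e2, mul_inv_cancel, inv_mul_cancel] at a1 a2 a3 f1 f2 f3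
  have c1 := T.adj_comm uGen⁻¹ 1
  have c2 := T.adj_comm uGen⁻¹ uGen
  have c3 := T.adj_comm uGen 1
  rw [c2] at f3 a3
  rw [c1] at f2 f3 a3 n
  rw [c3] at f2 a2
  by_cases hA : T.Adj 1 uGen
  · by_cases hB : T.Adj 1 uGen⁻¹
    · exact f1 hA hB fun hC => n hA hC hB
    · exact f2 (a3.resolve_left hB) hA hB
  · exact f3 (a1.resolve_left hA) (a2.resolve_right hA) hA
end
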